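/- arXiv:1206.1603 — 2 statements merged into one kernel-verified Lean document; each statement's English description precedes it below -/
import Mathlib

section
/- If X is Martin-Löf random relative to A and A ⊕ X ≥_T A′, then there exists a Π⁰₁(A) class P with X ∈ P such that X has lower density zero in P: for all δ > 0 there exists n with d(X↾n, P) < δ. -/
open MeasureTheory ENNReal

/-! ### Cantor space and the uniform (coin-flipping) measure -/

/-- The binary digits of a real number in `[0,1)`, giving a point of Cantor space. -/
noncomputable def binaryDigits (x : ℝ) : ℕ → Bool :=
  fun n => decide (⌊x * 2 ^ (n + 1)⌋ % 2 = 1)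

/-- The uniform (Lebesgue / coin-flipping) measure on Cantor space `2^ω`,
obtained as the pushforward of Lebesgue measure on `[0,1)` under binary expansion. -/
noncomputable def μCantor : Measure (ℕ → Bool) :=
  Measure.map binaryDigits (volume.restrict (Set.Ico (0 : ℝ) 1))

/-- `σ` is an initial segment of the infinite sequence `X`. -/
def IsPrefixOf (σ : List Bool) (X : ℕ → Bool) : Prop :=
  ∀ i : Fin σ.length, X i = σ.get i

/-- The cylinder determined by a finite binary string. -/
def cylinder (σ : List Bool) : Set (ℕ → Bool) := {X | IsPrefixOf σ X}

/-- The open set generated by a set of finite binary strings. -/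
def openOf (S : Set (List Bool)) : Set (ℕ → Bool) := ⋃ σ ∈ S, cylinder σ

/-- The density of a set `P` above the string `τ`: `μ([τ] ∩ P) · 2^{|τ|}`. -/
noncomputable def dens (τ : List Bool) (P : Set (ℕ → Bool)) : ℝ≥0∞ :=
  μCantor (cylinder τ ∩ P) * 2 ^ τ.length

/-- The length-`n` initial segment of `X`, as a finite binary string. -/
def strPrefix (X : ℕ → Bool) (n : ℕ) : List Bool := (List.range n).map X

/-- A set of strings is prefix-free if no element is a proper prefix of another. -/
def PrefixFreeSet (S : Set (List Bool)) : Prop :=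
  ∀ σ ∈ S, ∀ τ ∈ S, σ <+: τ → σ = τ

/-- The weight `∑_{σ ∈ S} 2^{-|σ|}` of a set of strings. -/
noncomputable def weight (S : Set (List Bool)) : ℝ≥0∞ :=
  ∑' σ : S, 2⁻¹ ^ (σ : List Bool).length

/-- A set of strings is bounded if its weight is finite. -/
def BoundedStr (S : Set (List Bool)) : Prop := weight S < ⊤

/-- The tail `X(·+k)` of an infinite binary sequence. -/
def tailSeq (X : ℕ → Bool) (k : ℕ) : ℕ → Bool := fun n => X (n + k)

/-! ### Oracle computability -/

/-- The `e`-th computably enumerable set of naturals (the domain of the `e`-th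
partial computable function). -/
def WEnum (e n : ℕ) : Prop := ((Denumerable.ofNat Nat.Partrec.Code e).eval n).Dom

/-- `OracleComputes e X n m` holds if the `e`-th Turing functional with oracle `X`
outputs `m` on input `n`; a Turing functional is presented by the c.e. set `W_e`
of coded axioms `(σ, n, m)`, and `Γ_e^X(n) = m` iff some initial segment `σ` of `X`
has `(σ, n, m) ∈ W_e`. -/
def OracleComputes (e : ℕ) (X : ℕ → Bool) (n m : ℕ) : Prop :=
  ∃ σ : List Bool, IsPrefixOf σ X ∧
    WEnum e (Nat.pair (Encodable.encode σ) (Nat.pair n m))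

def natOfBool (b : Bool) : ℕ := cond b 1 0

/-- `f : ℕ → ℕ` is computable with oracle `A`: some Turing functional with oracle `A`
has graph exactly `f`. -/
def FnComputableIn (f : ℕ → ℕ) (A : ℕ → Bool) : Prop :=
  ∃ e, ∀ n m, OracleComputes e A n m ↔ m = f n

/-- Turing reducibility `B ≤_T A` for subsets of `ω` (as elements of Cantor space). -/
def TuringLE (B A : ℕ → Bool) : Prop := FnComputableIn (fun n => natOfBool (B n)) A

/-- Turing equivalence. -/
def TuringEquiv (A B : ℕ → Bool) : Prop := TuringLE A B ∧ TuringLE B A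

/-- The Turing join `A ⊕ B`. -/
def joinSet (A B : ℕ → Bool) : ℕ → Bool :=
  fun n => if n % 2 = 0 then A (n / 2) else B (n / 2)

open Classical in
/-- The Turing jump `A′ = {e : Γ_e^A(e)↓}`. -/
noncomputable def jump (A : ℕ → Bool) : ℕ → Bool :=
  fun e => decide (∃ m, OracleComputes e A e m)

/-- The empty oracle. -/
def emptyOracle : ℕ → Bool := fun _ => false

/-- The halting problem `∅′`. -/
noncomputable def zeroJump : ℕ → Bool := jump emptyOracle

/-- A set is computable iff it is Turing reducible to the empty oracle. -/
def ComputableSet (A : ℕ → Bool) : Prop := TuringLE A emptyOracle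

/-- A set of naturals is c.e. in `A`. -/
def CeIn (A : ℕ → Bool) (S : Set ℕ) : Prop :=
  ∃ e, ∀ n, n ∈ S ↔ ∃ m, OracleComputes e A n m

/-- A set of strings is c.e. in `A`. -/
def CeStrIn (A : ℕ → Bool) (S : Set (List Bool)) : Prop :=
  ∃ e, ∀ σ : List Bool, σ ∈ S ↔ ∃ m, OracleComputes e A (Encodable.encode σ) m

/-- A c.e. set of strings. -/
def CeStr (S : Set (List Bool)) : Prop := CeStrIn emptyOracle S

/-! ### Π⁰₁ classes, Martin-Löf randomness, K-triviality -/

/-- A `Π⁰₁(A)` class: the complement of the union of cylinders over an `A`-c.e.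
set of strings. -/
def Pi01In (A : ℕ → Bool) (P : Set (ℕ → Bool)) : Prop :=
  ∃ S : Set (List Bool), CeStrIn A S ∧ P = (openOf S)ᶜ

/-- A `Π⁰₁` class. -/
def Pi01 (P : Set (ℕ → Bool)) : Prop := Pi01In emptyOracle P

/-- The `n`-th level of the `e`-th `A`-effective sequence of open sets. -/
def testLevel (e : ℕ) (A : ℕ → Bool) (n : ℕ) : Set (ℕ → Bool) :=
  openOf {σ | ∃ m, OracleComputes e A (Nat.pair n (Encodable.encode σ)) m}

/-- A Martin-Löf test relative to `A`: a uniformly `A`-c.e. sequence of open sets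
`G n` with `μ(G n) ≤ 2^{-n}`. -/
def MLTestIn (A : ℕ → Bool) (G : ℕ → Set (ℕ → Bool)) : Prop :=
  (∃ e, ∀ n, G n = testLevel e A n) ∧ ∀ n, μCantor (G n) ≤ 2⁻¹ ^ n

/-- `X` is Martin-Löf random relative to `A`: it passes every `A`-Martin-Löf test. -/
def MLRandomIn (A X : ℕ → Bool) : Prop :=
  ∀ G : ℕ → Set (ℕ → Bool), MLTestIn A G → ∃ n, X ∉ G n

/-- `X` is Martin-Löf random. -/
def MLRandom (X : ℕ → Bool) : Prop := MLRandomIn emptyOracle X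

/-- The domain of the `e`-th machine, viewed as a set of binary strings. -/
def machineDom (e : ℕ) : Set (List Bool) :=
  {σ | ((Denumerable.ofNat Nat.Partrec.Code e).eval (Encodable.encode σ)).Dom}

/-- The `e`-th machine is prefix-free. -/
def PrefixFreeMachine (e : ℕ) : Prop := PrefixFreeSet (machineDom e)

/-- Prefix-free Kolmogorov complexity (defined, up to an additive constant, as the
least `|σ| + 2e + 2` over prefix-free machines `e` and programs `σ` producing `x`). -/
noncomputable def Kcpx (x : ℕ) : ℕ :=
  sInf {k | ∃ e, ∃ σ : List Bool, PrefixFreeMachine e ∧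
    x ∈ (Denumerable.ofNat Nat.Partrec.Code e).eval (Encodable.encode σ) ∧
    k = σ.length + 2 * e + 2}

/-- `K(n)` means `K(1^n)`. -/
noncomputable def KofNat (n : ℕ) : ℕ := Kcpx (Encodable.encode (List.replicate n true))

/-- `A` is K-trivial: `K(A↾n) ≤ K(n) + c` for some constant `c`. -/
def KTrivial (A : ℕ → Bool) : Prop :=
  ∃ c, ∀ n, Kcpx (Encodable.encode (strPrefix A n)) ≤ KofNat n + c

namespace BHMN

open Nat.Partrec (Code)

/-- interleaving of two finite strings (of the same length). -/
def jl (α σ : List Bool) : List Bool :=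
  (List.range (2 * σ.length)).map fun n =>
    if n % 2 = 0 then α.getD (n / 2) false else σ.getD (n / 2) false

/-- the stage `|σ|` approximation to `Γ_e^{α ⊕ σ}(x) = 0`. -/
def Zb (e x : ℕ) (α σ : List Bool) : Bool :=
  decide (∃ j < 2 * σ.length + 1,
    (Code.evaln σ.length (Denumerable.ofNat Code e)
      (Nat.pair (Encodable.encode ((jl α σ).take j)) (Nat.pair x 0))).isSome = true)

/-- all strings of length `n`. -/
def allStr (n : ℕ) : List (List Bool) :=
  Nat.rec [[]] (fun _ L => L.map (List.cons true) ++ L.map (List.cons false)) n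

/-- the number used for string `τ` and parameter `k`. -/
def xof (e : ℕ) (τ : List Bool) (k : ℕ) : ℕ :=
  Nat.pair e (Nat.pair (Encodable.encode τ) k)

/-- number of extensions of `τ` of length `|α|` on which `Γ_e` has not converged to `0`. -/
def nbad (e k : ℕ) (τ α : List Bool) : ℕ :=
  ((allStr (α.length - τ.length)).filter
    (fun ρ => ! Zb e (xof e τ k) α (τ ++ ρ))).length

/-- the proportion of bad extensions is less than `2^{-k}`. -/
def hit (e k : ℕ) (τ α : List Bool) : Bool :=
  decide (τ.length ≤ α.length ∧
    nbad e k τ α * (allStr k).length < (allStr (α.length - τ.length)).length)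

def step (e k : ℕ) (α σ : List Bool) (s : ℕ) (p : ℕ × ℕ) : ℕ × ℕ :=
  if Zb e (xof e (σ.take p.2) k) (α.take (s+1)) (σ.take (s+1)) = true ∧
    hit e k (σ.take p.2) (α.take (s+1)) = false then (p.1 + 1, s + 1) else p

def st (e k : ℕ) (α σ : List Bool) (s : ℕ) : ℕ × ℕ :=
  Nat.rec (0, 0) (fun s p => step e k α σ s p) s

def Db (x : ℕ) (α : List Bool) : Bool :=
  hit x.unpair.1 x.unpair.2.unpair.2
    ((Encodable.decode (α := List Bool) x.unpair.2.unpair.1).getD []) α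

section prim
variable {β : Type*} [Primcodable β]

theorem p_jl {f g : β → List Bool} (hf : Primrec f) (hg : Primrec g) :
    Primrec fun b => jl (f b) (g b) := by
  unfold jl
  refine Primrec.list_map (Primrec.list_range.comp
    (Primrec.nat_mul.comp (.const 2) (Primrec.list_length.comp hg))) ?_
  refine Primrec.ite (Primrec.eq.comp (Primrec.nat_mod.comp .snd (.const 2)) (.const 0)) ?_ ?_
  · exact (Primrec.list_getD false).comp (hf.comp .fst) (Primrec.nat_div.comp .snd (.const 2))
  · exact (Primrec.list_getD false).comp (hg.comp .fst) (Primrec.nat_div.comp .snd (.const 2))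

theorem p_ex {f : β → ℕ} {R : β → ℕ → Bool} (hf : Primrec f) (hR : Primrec₂ R) :
    Primrec fun b => decide (∃ j < f b, R b j = true) := by
  have h : PrimrecRel (fun (j : ℕ) (b : β) => R b j = true) :=
    Primrec.eq.comp (hR.comp .snd .fst) (.const true)
  have := (h.exists_mem_list.comp (Primrec.list_range.comp hf) Primrec.id)
  refine (PrimrecPred.decide this).of_eq ?_
  intro b
  simp

theorem p_Zb {e x : β → ℕ} {f g : β → List Bool} (he : Primrec e) (hx : Primrec x)
    (hf : Primrec f) (hg : Primrec g) :
    Primrec fun b => Zb (e b) (x b) (f b) (g b) := by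
  unfold Zb
  refine p_ex (Primrec.succ.comp (Primrec.nat_mul.comp (.const 2) (Primrec.list_length.comp hg))) ?_
  refine Primrec.option_isSome.comp (Code.primrec_evaln.comp (.pair (.pair ?_ ?_) ?_))
  · exact Primrec.list_length.comp (hg.comp .fst)
  · exact (Primrec.ofNat Code).comp (he.comp .fst)
  · refine Primrec₂.natPair.comp (Primrec.encode.comp ?_)
      (Primrec₂.natPair.comp (hx.comp .fst) (.const 0))
    exact Primrec.list_take.comp .snd (p_jl (hf.comp .fst) (hg.comp .fst))

theorem p_allStr {f : β → ℕ} (hf : Primrec f) : Primrec fun b => allStr (f b) := by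
  have : Primrec allStr := by
    unfold allStr
    refine Primrec.nat_rec₁ _ ?_
    refine Primrec.list_append.comp ?_ ?_
    · exact Primrec.list_map .snd (Primrec.list_cons.comp (.const true) .snd)
    · exact Primrec.list_map .snd (Primrec.list_cons.comp (.const false) .snd)
  exact this.comp hf

theorem p_xof {e k : β → ℕ} {t : β → List Bool} (he : Primrec e) (hk : Primrec k)
    (ht : Primrec t) : Primrec fun b => xof (e b) (t b) (k b) :=
  Primrec₂.natPair.comp he (Primrec₂.natPair.comp (Primrec.encode.comp ht) hk)

theorem p_nbad {e k : β → ℕ} {t a : β → List Bool} (he : Primrec e) (hk : Primrec k)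
    (ht : Primrec t) (ha : Primrec a) : Primrec fun b => nbad (e b) (k b) (t b) (a b) := by
  unfold nbad
  refine Primrec.list_length.comp ?_
  simp only [← List.filterMap_eq_filter]
  refine Primrec.listFilterMap (p_allStr (Primrec.nat_sub.comp (Primrec.list_length.comp ha)
    (Primrec.list_length.comp ht))) ?_
  refine Primrec.ite (Primrec.eq.comp (Primrec.not.comp ?_) (.const true))
    (Primrec.option_some.comp .snd) (.const none)
  exact p_Zb (he.comp .fst) (p_xof (he.comp .fst) (hk.comp .fst) (ht.comp .fst)) (ha.comp .fst)
    (Primrec.list_append.comp (ht.comp .fst) .snd)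

theorem p_hit {e k : β → ℕ} {t a : β → List Bool} (he : Primrec e) (hk : Primrec k)
    (ht : Primrec t) (ha : Primrec a) : Primrec fun b => hit (e b) (k b) (t b) (a b) := by
  unfold hit
  refine PrimrecPred.decide (PrimrecPred.and ?_ ?_)
  · exact Primrec.nat_le.comp (Primrec.list_length.comp ht) (Primrec.list_length.comp ha)
  · refine Primrec.nat_lt.comp (Primrec.nat_mul.comp (p_nbad he hk ht ha)
      (Primrec.list_length.comp (p_allStr hk))) (Primrec.list_length.comp (p_allStr ?_))
    exact Primrec.nat_sub.comp (Primrec.list_length.comp ha) (Primrec.list_length.comp ht)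

theorem p_st (e k : ℕ) {a t : β → List Bool} {s : β → ℕ} (ha : Primrec a) (ht : Primrec t)
    (hs : Primrec s) : Primrec fun b => st e k (a b) (t b) (s b) := by
  unfold st
  refine Primrec.nat_rec' (h := fun b q => step e k (a b) (t b) q.1 q.2) hs (.const (0, 0)) ?_
  unfold step
  have hp : Primrec fun y : β × ℕ × ℕ × ℕ => y.2.2 := Primrec.snd.comp .snd
  have hs1 : Primrec fun y : β × ℕ × ℕ × ℕ => y.2.1 + 1 :=
    Primrec.succ.comp (Primrec.fst.comp .snd)
  have h1 : Primrec fun y : β × ℕ × ℕ × ℕ => (t y.1).take y.2.2.2 :=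
    Primrec.list_take.comp (Primrec.snd.comp hp) (ht.comp .fst)
  have h2 : Primrec fun y : β × ℕ × ℕ × ℕ => (t y.1).take (y.2.1 + 1) :=
    Primrec.list_take.comp hs1 (ht.comp .fst)
  have h3 : Primrec fun y : β × ℕ × ℕ × ℕ => (a y.1).take (y.2.1 + 1) :=
    Primrec.list_take.comp hs1 (ha.comp .fst)
  refine Primrec.ite (PrimrecPred.and (Primrec.eq.comp ?_ (.const true))
    (Primrec.eq.comp ?_ (.const false))) ?_ hp
  · exact p_Zb (.const e) (p_xof (.const e) (.const k) h1) h3 h2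
  · exact p_hit (.const e) (.const k) h1 h3
  · exact Primrec.pair (Primrec.succ.comp (Primrec.fst.comp hp)) hs1

theorem p_Db {x : β → ℕ} {a : β → List Bool} (hx : Primrec x) (ha : Primrec a) :
    Primrec fun b => Db (x b) (a b) := by
  unfold Db
  have h1 : Primrec fun b => (x b).unpair.1 := Primrec.fst.comp (Primrec.unpair.comp hx)
  have h2 : Primrec fun b => (x b).unpair.2 := Primrec.snd.comp (Primrec.unpair.comp hx)
  exact p_hit h1 (Primrec.snd.comp (Primrec.unpair.comp h2))
    (Primrec.option_getD.comp (Primrec.decode.comp (Primrec.fst.comp (Primrec.unpair.comp h2)))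
      (.const [])) ha

end prim

theorem exists_code_pred {P : ℕ → Prop} (hP : PrimrecPred P) :
    ∃ c : Code, ∀ y, (c.eval y).Dom ↔ P y := by
  have hre : REPred P := hP.computablePred.to_re
  have hf : Partrec fun y => Part.assert (P y) fun _ => Part.some 0 := by
    refine (Partrec.map hre (g := fun _ _ => 0) ((Computable.const 0).to₂)).of_eq ?_
    intro y
    ext z
    simp [eq_comm]
  obtain ⟨c, hc⟩ := Code.exists_code.1 (Partrec.nat_iff.1 hf)
  refine ⟨c, fun y => ?_⟩
  rw [hc]
  simp [Part.dom_iff_mem, Part.mem_assert_iff]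

/-- every primitive recursive relation is some `W_e`. -/
theorem exists_W {R : List Bool → ℕ → ℕ → Bool}
    (hR : Primrec fun p : List Bool × ℕ × ℕ => R p.1 p.2.1 p.2.2) :
    ∃ e, ∀ σ n m, WEnum e (Nat.pair (Encodable.encode σ) (Nat.pair n m)) ↔ R σ n m = true := by
  have hp : Primrec fun y : ℕ => R ((Encodable.decode (α := List Bool) y.unpair.1).getD [])
      y.unpair.2.unpair.1 y.unpair.2.unpair.2 := by
    have h1 : Primrec fun y : ℕ => y.unpair.1 := Primrec.fst.comp Primrec.unpair
    have h2 : Primrec fun y : ℕ => y.unpair.2 := Primrec.snd.comp Primrec.unpair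
    exact hR.comp (.pair (Primrec.option_getD.comp (Primrec.decode.comp h1) (.const []))
      (.pair (h1.comp h2) (h2.comp h2)))
  obtain ⟨c, hc⟩ := exists_code_pred (Primrec.eq.comp hp (.const true))
  refine ⟨Encodable.encode c, fun σ n m => ?_⟩
  unfold WEnum
  rw [Denumerable.ofNat_encode, hc]
  simp

/-- uniform version: index computable from a parameter. -/
theorem exists_g {D : ℕ → List Bool → Bool} (hD : Primrec fun p : ℕ × List Bool => D p.1 p.2) :
    ∃ g : ℕ → ℕ, Primrec g ∧ ∀ x σ y,
      WEnum (g x) (Nat.pair (Encodable.encode σ) y) ↔ D x σ = true := by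
  have hp : Primrec fun y : ℕ => D y.unpair.1
      ((Encodable.decode (α := List Bool) y.unpair.2.unpair.1).getD []) := by
    have h1 : Primrec fun y : ℕ => y.unpair.1 := Primrec.fst.comp Primrec.unpair
    have h2 : Primrec fun y : ℕ => y.unpair.2 := Primrec.snd.comp Primrec.unpair
    exact hD.comp (.pair h1
      (Primrec.option_getD.comp (Primrec.decode.comp (h1.comp h2)) (.const [])))
  obtain ⟨c, hc⟩ := exists_code_pred (Primrec.eq.comp hp (.const true))
  refine ⟨fun x => Encodable.encode (Code.curry c x),
    Primrec.encode.comp (Code.primrec₂_curry.comp (.const c) .id), fun x σ y => ?_⟩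
  unfold WEnum
  rw [Denumerable.ofNat_encode, Code.eval_curry, hc]
  simp

/-- composing an index with a computable function of the argument. -/
theorem exists_comp (e : ℕ) {g : ℕ → ℕ} (hg : Primrec g) :
    ∃ e', ∀ ρ n m, WEnum e' (Nat.pair ρ (Nat.pair n m)) ↔
      WEnum e (Nat.pair ρ (Nat.pair (g n) m)) := by
  have h : Primrec fun y : ℕ => Nat.pair y.unpair.1
      (Nat.pair (g y.unpair.2.unpair.1) y.unpair.2.unpair.2) := by
    have h1 : Primrec fun y : ℕ => y.unpair.1 := Primrec.fst.comp Primrec.unpair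
    have h2 : Primrec fun y : ℕ => y.unpair.2 := Primrec.snd.comp Primrec.unpair
    exact Primrec₂.natPair.comp h1 (Primrec₂.natPair.comp (hg.comp (h1.comp h2)) (h2.comp h2))
  have h' : Partrec fun y : ℕ => (Denumerable.ofNat Code e).eval (Nat.pair y.unpair.1
      (Nat.pair (g y.unpair.2.unpair.1) y.unpair.2.unpair.2)) :=
    (Partrec.nat_iff.2 (Code.exists_code.2 ⟨_, rfl⟩)).comp h.to_comp
  obtain ⟨c, hc⟩ := Code.exists_code.1 (Partrec.nat_iff.1 h')
  refine ⟨Encodable.encode c, fun ρ n m => ?_⟩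
  unfold WEnum
  rw [Denumerable.ofNat_encode, hc]
  simp

/-! ### strings and prefixes -/

theorem len_sp (Y : ℕ → Bool) (n : ℕ) : (strPrefix Y n).length = n := by simp [strPrefix]

theorem take_sp (Y : ℕ → Bool) {m n : ℕ} (h : m ≤ n) :
    (strPrefix Y n).take m = strPrefix Y m := by
  simp [strPrefix, ← List.map_take, List.take_range, h]

theorem isPrefix_iff (σ : List Bool) (Y : ℕ → Bool) :
    IsPrefixOf σ Y ↔ strPrefix Y σ.length = σ := by
  constructor
  · intro h
    apply List.ext_getElem
    · simp [strPrefix]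
    · intro i h1 h2
      have := h ⟨i, h2⟩
      simpa [strPrefix] using this
  · intro h i
    have h2 : (strPrefix Y σ.length)[(i : ℕ)]'(by rw [len_sp]; exact i.2) = σ[(i : ℕ)] := by
      simp only [h]
    simpa [strPrefix] using h2

theorem isPrefix_sp (Y : ℕ → Bool) (n : ℕ) : IsPrefixOf (strPrefix Y n) Y := by
  rw [isPrefix_iff, len_sp]

theorem sp_succ (Y : ℕ → Bool) (n : ℕ) : strPrefix Y (n+1) = strPrefix Y n ++ [Y n] := by
  simp [strPrefix, List.range_succ]

theorem mem_allStr {n : ℕ} {ρ : List Bool} : ρ ∈ allStr n ↔ ρ.length = n := by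
  induction n generalizing ρ with
  | zero => simp [allStr]
  | succ n ih =>
    have : allStr (n+1) = (allStr n).map (List.cons true) ++ (allStr n).map (List.cons false) := rfl
    rw [this]
    cases ρ with
    | nil => simp
    | cons b ρ => cases b <;> simp [ih]

theorem length_allStr (n : ℕ) : (allStr n).length = 2 ^ n := by
  induction n with
  | zero => simp [allStr]
  | succ n ih =>
    have : allStr (n+1) = (allStr n).map (List.cons true) ++ (allStr n).map (List.cons false) := rfl
    rw [this]
    simp [ih]
    ring

/-! ### the measure of cylinders -/

def val (σ : List Bool) : ℤ := σ.foldl (fun a b => 2 * a + cond b 1 0) 0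

theorem val_append (σ : List Bool) (b : Bool) : val (σ ++ [b]) = 2 * val σ + cond b 1 0 := by
  simp [val]

theorem val_bounds (σ : List Bool) : 0 ≤ val σ ∧ val σ + 1 ≤ 2 ^ σ.length := by
  induction σ using List.reverseRecOn with
  | nil => simp [val]
  | append_singleton σ b ih =>
    rw [val_append, List.length_append, List.length_singleton, pow_succ]
    cases b <;> simp <;> omega

theorem floor_half (x : ℝ) (n : ℕ) : ⌊x * 2 ^ n⌋ = ⌊x * 2 ^ (n+1)⌋ / 2 := by
  have := Int.floor_div_natCast (x * 2 ^ (n+1)) 2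
  rw [← Nat.cast_ofNat (n := 2) (R := ℤ), ← this]
  congr 1
  push_cast
  rw [pow_succ]
  ring

theorem prefix_digits (x : ℝ) (hx : x ∈ Set.Ico (0:ℝ) 1) (σ : List Bool) :
    IsPrefixOf σ (binaryDigits x) ↔ ⌊x * 2 ^ σ.length⌋ = val σ := by
  induction σ using List.reverseRecOn with
  | nil =>
    simp only [isPrefix_iff, List.length_nil, pow_zero, mul_one, val, List.foldl_nil]
    simp only [strPrefix, List.range_zero, List.map_nil, true_iff]
    exact Int.floor_eq_zero_iff.2 hx
  | append_singleton σ b ih =>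
    rw [isPrefix_iff] at ih ⊢
    rw [List.length_append, List.length_singleton, sp_succ, val_append]
    have happ : ∀ (l : List Bool) (c : Bool), l ++ [c] = σ ++ [b] ↔ l = σ ∧ [c] = [b] := by
      intro l c
      constructor
      · intro h
        exact List.append_inj' h rfl
      · rintro ⟨rfl, h⟩
        rw [h]
    rw [happ, ih, floor_half]
    have hb : ([binaryDigits x σ.length] = [b]) ↔
        (⌊x * 2 ^ (σ.length + 1)⌋ % 2 = 1 ↔ b = true) := by
      simp only [binaryDigits, List.cons.injEq, and_true]
      cases b <;> simp
    rw [hb]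
    cases b <;> simp <;> omega

theorem meas_bd : Measurable binaryDigits := by
  rw [measurable_pi_iff]
  intro n
  have h : Measurable fun z : ℤ => decide (z % 2 = 1) := measurable_from_top
  exact h.comp (Int.measurable_floor.comp (measurable_id.mul_const _))

theorem meas_cyl (σ : List Bool) : MeasurableSet (cylinder σ) := by
  have h : _root_.cylinder σ =
      ⋂ i : Fin σ.length, (fun Y : ℕ → Bool => Y i) ⁻¹' {σ.get i} := by
    ext Y
    simp [_root_.cylinder, IsPrefixOf]
  rw [h]
  refine MeasurableSet.iInter fun i => ?_
  exact measurableSet_preimage (measurable_pi_apply (i : ℕ)) (measurableSet_singleton (σ.get i))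

theorem mu_cyl (σ : List Bool) : μCantor (cylinder σ) = 2⁻¹ ^ σ.length := by
  unfold μCantor
  rw [Measure.map_apply meas_bd (meas_cyl σ), Measure.restrict_apply (meas_bd (meas_cyl σ))]
  have h2 : (0:ℝ) < 2 ^ σ.length := by positivity
  obtain ⟨b1, b2⟩ := val_bounds σ
  have b1' : (0:ℝ) ≤ val σ := by exact_mod_cast b1
  have b2' : (val σ : ℝ) + 1 ≤ 2 ^ σ.length := by exact_mod_cast b2
  have : binaryDigits ⁻¹' cylinder σ ∩ Set.Ico (0:ℝ) 1
      = Set.Ico ((val σ : ℝ) / 2 ^ σ.length) (((val σ : ℝ) + 1) / 2 ^ σ.length) := by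
    ext x
    simp only [Set.mem_inter_iff, Set.mem_preimage, _root_.cylinder, Set.mem_ofPred_eq]
    constructor
    · rintro ⟨h, hx⟩
      rw [prefix_digits x hx, Int.floor_eq_iff] at h
      rw [Set.mem_Ico, div_le_iff₀ h2, lt_div_iff₀ h2]
      exact h
    · intro h
      have hx : x ∈ Set.Ico (0:ℝ) 1 := by
        refine ⟨le_trans (by positivity) h.1, lt_of_lt_of_le h.2 ?_⟩
        rw [div_le_one h2]
        exact b2'
      refine ⟨?_, hx⟩
      rw [prefix_digits x hx, Int.floor_eq_iff]
      rwa [Set.mem_Ico, div_le_iff₀ h2, lt_div_iff₀ h2] at h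
  rw [this, Real.volume_Ico]
  have : ((val σ : ℝ) + 1) / 2 ^ σ.length - (val σ : ℝ) / 2 ^ σ.length = (2⁻¹) ^ σ.length := by
    rw [← sub_div, add_sub_cancel_left, inv_pow, one_div]
  rw [this, ENNReal.ofReal_pow (by norm_num), ENNReal.ofReal_inv_of_pos (by norm_num)]
  simp

theorem mu_univ_le : μCantor Set.univ ≤ 1 := by
  have : cylinder [] = Set.univ := by
    ext Y
    simp [_root_.cylinder, isPrefix_iff, strPrefix]
  rw [← this, mu_cyl]
  simp

theorem mu_cover (τ : List Bool) (r : ℕ) (L : List (List Bool)) (hL : ∀ ρ ∈ L, ρ.length = r)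
    (B : Set (ℕ → Bool)) (hB : ∀ Y ∈ B, ∃ ρ ∈ L, Y ∈ cylinder (τ ++ ρ)) :
    μCantor B ≤ L.length * 2⁻¹ ^ (τ.length + r) := by
  induction L generalizing B with
  | nil =>
    have : B = ∅ := by
      ext Y
      simp only [Set.mem_empty_iff_false, iff_false]
      intro h
      obtain ⟨ρ, h, _⟩ := hB Y h
      simp at h
    simp [this]
  | cons ρ L ih =>
    have h1 : B ⊆ cylinder (τ ++ ρ) ∪ (B \ cylinder (τ ++ ρ)) := by
      intro Y hY
      by_cases h : Y ∈ cylinder (τ ++ ρ)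
      · exact Or.inl h
      · exact Or.inr ⟨hY, h⟩
    have h2 := ih (fun ρ' h => hL ρ' (List.mem_cons_of_mem _ h)) (B \ cylinder (τ ++ ρ)) (by
      rintro Y ⟨hY, hn⟩
      obtain ⟨ρ', h, h'⟩ := hB Y hY
      rcases List.mem_cons.1 h with rfl | h
      · exact absurd h' hn
      · exact ⟨ρ', h, h'⟩)
    refine (measure_mono h1).trans ((measure_union_le _ _).trans ?_)
    rw [mu_cyl, List.length_append, hL ρ (by simp), List.length_cons]
    push_cast
    rw [add_mul, one_mul, add_comm]
    gcongr

/-! ### the functional -/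

theorem jl_sp (A Y : ℕ → Bool) (s : ℕ) :
    jl (strPrefix A s) (strPrefix Y s) = strPrefix (joinSet A Y) (2 * s) := by
  unfold jl
  rw [len_sp]
  conv_rhs => unfold strPrefix
  apply List.map_congr_left
  intro n hn
  have hn : n < 2 * s := List.mem_range.1 hn
  have hn' : n / 2 < s := by omega
  simp [strPrefix, joinSet, List.getD_eq_getElem?_getD, hn']

theorem Zb_iff (e x : ℕ) (A Y : ℕ → Bool) (s : ℕ) :
    Zb e x (strPrefix A s) (strPrefix Y s) = true ↔
      ∃ j ≤ 2 * s, ∃ v, v ∈ Code.evaln s (Denumerable.ofNat Code e)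
        (Nat.pair (Encodable.encode (strPrefix (joinSet A Y) j)) (Nat.pair x 0)) := by
  unfold Zb
  rw [decide_eq_true_iff, len_sp, jl_sp]
  constructor
  · rintro ⟨j, hj, h⟩
    rw [take_sp _ (by omega)] at h
    exact ⟨j, by omega, Option.isSome_iff_exists.1 h⟩
  · rintro ⟨j, hj, h⟩
    refine ⟨j, by omega, ?_⟩
    rw [take_sp _ (by omega)]
    exact Option.isSome_iff_exists.2 h

theorem Zb_mono (e x : ℕ) (A Y : ℕ → Bool) {s t : ℕ} (h : s ≤ t)
    (hz : Zb e x (strPrefix A s) (strPrefix Y s) = true) :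
    Zb e x (strPrefix A t) (strPrefix Y t) = true := by
  rw [Zb_iff] at hz ⊢
  obtain ⟨j, hj, v, hv⟩ := hz
  exact ⟨j, by omega, v, Code.evaln_mono h hv⟩

theorem Zb_oracle (e x : ℕ) (A Y : ℕ → Bool) :
    (∃ s, Zb e x (strPrefix A s) (strPrefix Y s) = true) ↔
      OracleComputes e (joinSet A Y) x 0 := by
  constructor
  · rintro ⟨s, h⟩
    rw [Zb_iff] at h
    obtain ⟨j, hj, v, hv⟩ := h
    exact ⟨_, isPrefix_sp _ j, Part.dom_iff_mem.2 ⟨v, Code.evaln_sound hv⟩⟩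
  · rintro ⟨σ, h, hw⟩
    obtain ⟨v, hv⟩ := Part.dom_iff_mem.1 hw
    obtain ⟨s, hs⟩ := Code.evaln_complete.1 hv
    refine ⟨max s σ.length, ?_⟩
    rw [Zb_iff]
    refine ⟨σ.length, by omega, v, ?_⟩
    rw [(isPrefix_iff _ _).1 h]
    exact Code.evaln_mono (le_max_left _ _) hs

theorem Db_xof (e k : ℕ) (τ α : List Bool) : Db (xof e τ k) α = hit e k τ α := by
  simp [Db, xof]

theorem sp_extend (τ : List Bool) (Y : ℕ → Bool) (s : ℕ) (hs : τ.length ≤ s)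
    (hY : Y ∈ cylinder τ) : ∃ ρ ∈ allStr (s - τ.length), strPrefix Y s = τ ++ ρ := by
  have h := (isPrefix_iff _ _).1 hY
  refine ⟨(strPrefix Y s).drop τ.length, ?_, ?_⟩
  · rw [mem_allStr, List.length_drop, len_sp]
  · conv_lhs => rw [← List.take_append_drop τ.length (strPrefix Y s)]
    rw [take_sp _ hs, h]

theorem sp_mem_cyl {Y : ℕ → Bool} {s : ℕ} {σ : List Bool} (h : strPrefix Y s = σ) :
    Y ∈ cylinder σ := by
  subst h
  exact isPrefix_sp Y s

theorem two_mul_inv_pow (n : ℕ) : (2:ℝ≥0∞) ^ n * 2⁻¹ ^ n = 1 := by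
  rw [← mul_pow, ENNReal.mul_inv_cancel (by norm_num) (by norm_num), one_pow]

/-- when the requirement acts, the density is small. -/
theorem dens_win (e k : ℕ) (A : ℕ → Bool) (τ : List Bool) (s : ℕ)
    (hh : hit e k τ (strPrefix A s) = true) (P : Set (ℕ → Bool))
    (hP : ∀ Y ∈ P, Zb e (xof e τ k) (strPrefix A s) (strPrefix Y s) = false) :
    dens τ P ≤ 2⁻¹ ^ k := by
  unfold hit at hh
  rw [decide_eq_true_iff, len_sp, length_allStr, length_allStr] at hh
  obtain ⟨hs, hlt⟩ := hh
  have hc : μCantor (cylinder τ ∩ P) ≤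
      (nbad e k τ (strPrefix A s)) * 2⁻¹ ^ (τ.length + (s - τ.length)) := by
    unfold nbad
    refine mu_cover _ _ _ ?_ _ ?_
    · intro ρ hρ
      rw [List.mem_filter, len_sp, mem_allStr] at hρ
      exact hρ.1
    · rintro Y ⟨hY, hYP⟩
      obtain ⟨ρ, h1, h2⟩ := sp_extend τ Y s hs hY
      refine ⟨ρ, ?_, sp_mem_cyl h2⟩
      rw [List.mem_filter, len_sp, ← h2]
      exact ⟨h1, by rw [hP Y hYP]; rfl⟩
  unfold dens
  generalize nbad e k τ (strPrefix A s) = N at *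
  generalize s - τ.length = r at *
  calc _ ≤ (N : ℝ≥0∞) * 2⁻¹ ^ (τ.length + r) * 2 ^ τ.length := by gcongr
    _ = (N * 2⁻¹ ^ r) * (2 ^ τ.length * 2⁻¹ ^ τ.length) := by rw [pow_add]; ring
    _ = N * 2⁻¹ ^ r * (2 ^ k * 2⁻¹ ^ k) := by rw [two_mul_inv_pow, two_mul_inv_pow]
    _ = ((N * 2 ^ k : ℕ) : ℝ≥0∞) * 2⁻¹ ^ r * 2⁻¹ ^ k := by push_cast; ring
    _ ≤ ((2 ^ r : ℕ) : ℝ≥0∞) * 2⁻¹ ^ r * 2⁻¹ ^ k := by gcongr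
    _ = 2⁻¹ ^ k := by push_cast; rw [two_mul_inv_pow, one_mul]

/-- as long as the requirement does not act, the convergence set has measure bounded away. -/
theorem mu_stage (e k : ℕ) (A : ℕ → Bool) (τ : List Bool) (s : ℕ) (hs : τ.length ≤ s)
    (hh : hit e k τ (strPrefix A s) = false) :
    μCantor {Y | Y ∈ cylinder τ ∧ Zb e (xof e τ k) (strPrefix A s) (strPrefix Y s) = true}
      ≤ (1 - 2⁻¹ ^ k) * 2⁻¹ ^ τ.length := by
  unfold hit at hh
  rw [decide_eq_false_iff_not, len_sp, length_allStr, length_allStr] at hh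
  have hlt : 2 ^ (s - τ.length) ≤ nbad e k τ (strPrefix A s) * 2 ^ k := by
    by_contra h
    exact hh ⟨hs, not_le.1 h⟩
  let N' := ((allStr (s - τ.length)).filter
    (fun ρ => Zb e (xof e τ k) (strPrefix A s) (τ ++ ρ))).length
  have hsum : N' + nbad e k τ (strPrefix A s) = 2 ^ (s - τ.length) := by
    unfold nbad
    rw [len_sp, ← length_allStr]
    exact (List.length_eq_length_filter_add _).symm
  have hc : μCantor {Y | Y ∈ cylinder τ ∧
      Zb e (xof e τ k) (strPrefix A s) (strPrefix Y s) = true} ≤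
      N' * 2⁻¹ ^ (τ.length + (s - τ.length)) := by
    refine mu_cover _ _ _ ?_ _ ?_
    · intro ρ hρ
      rw [List.mem_filter, mem_allStr] at hρ
      exact hρ.1
    · rintro Y ⟨hY, hYP⟩
      obtain ⟨ρ, h1, h2⟩ := sp_extend τ Y s hs hY
      refine ⟨ρ, ?_, sp_mem_cyl h2⟩
      rw [List.mem_filter, ← h2]
      exact ⟨h1, hYP⟩
  refine hc.trans ?_
  rw [pow_add, ← mul_assoc, mul_right_comm]
  refine mul_le_mul_left ?_ _
  refine ENNReal.le_sub_of_add_le_right (by simp) ?_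
  generalize nbad e k τ (strPrefix A s) = N at *
  generalize s - τ.length = r at *
  have h1 : (2⁻¹ : ℝ≥0∞) ^ k ≤ N * 2⁻¹ ^ r := by
    calc (2⁻¹ : ℝ≥0∞) ^ k = ((2 ^ r : ℕ) : ℝ≥0∞) * 2⁻¹ ^ r * 2⁻¹ ^ k := by
          push_cast; rw [two_mul_inv_pow, one_mul]
      _ ≤ ((N * 2 ^ k : ℕ) : ℝ≥0∞) * 2⁻¹ ^ r * 2⁻¹ ^ k := by gcongr
      _ = N * 2⁻¹ ^ r * (2 ^ k * 2⁻¹ ^ k) := by push_cast; ring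
      _ = _ := by rw [two_mul_inv_pow, mul_one]
  calc (N' : ℝ≥0∞) * 2⁻¹ ^ r + 2⁻¹ ^ k ≤ N' * 2⁻¹ ^ r + N * 2⁻¹ ^ r := by gcongr
    _ = ((N' + N : ℕ) : ℝ≥0∞) * 2⁻¹ ^ r := by push_cast; ring
    _ = 1 := by rw [hsum]; push_cast; exact two_mul_inv_pow r
    _ ≤ 1 := le_rfl

def H (e k : ℕ) (A : ℕ → Bool) (τ : List Bool) : Set (ℕ → Bool) :=
  {Y | Y ∈ cylinder τ ∧ ∃ s, τ.length ≤ s ∧ hit e k τ (strPrefix A s) = false ∧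
    Zb e (xof e τ k) (strPrefix A s) (strPrefix Y s) = true}

theorem mu_H (e k : ℕ) (A : ℕ → Bool) (τ : List Bool) :
    μCantor (H e k A τ) ≤ (1 - 2⁻¹ ^ k) * 2⁻¹ ^ τ.length := by
  let I := {s : ℕ // τ.length ≤ s ∧ hit e k τ (strPrefix A s) = false}
  let B : I → Set (ℕ → Bool) := fun s => {Y | Y ∈ cylinder τ ∧
    Zb e (xof e τ k) (strPrefix A s.1) (strPrefix Y s.1) = true}
  have hH : H e k A τ = ⋃ s, B s := by
    ext Y
    simp only [H, B, Set.mem_iUnion, Set.mem_ofPred_eq]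
    constructor
    · rintro ⟨h1, s, h2, h3, h4⟩
      exact ⟨⟨s, h2, h3⟩, h1, h4⟩
    · rintro ⟨⟨s, h2, h3⟩, h1, h4⟩
      exact ⟨h1, s, h2, h3, h4⟩
  have hm : Monotone B := by
    rintro s t hst Y ⟨h1, h2⟩
    exact ⟨h1, Zb_mono e _ A Y hst h2⟩
  rw [hH, (directed_of_isDirected_le hm).measure_iUnion]
  exact iSup_le fun s => mu_stage e k A τ s.1 s.2.1 s.2.2

/-! ### the test -/

def sY (e k : ℕ) (A Y : ℕ → Bool) (s : ℕ) : ℕ × ℕ :=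
  Nat.rec (0, 0) (fun s p =>
    if Zb e (xof e (strPrefix Y p.2) k) (strPrefix A (s+1)) (strPrefix Y (s+1)) = true ∧
    hit e k (strPrefix Y p.2) (strPrefix A (s+1)) = false then (p.1 + 1, s + 1) else p) s

theorem sY_zero (e k : ℕ) (A Y : ℕ → Bool) : sY e k A Y 0 = (0, 0) := rfl

theorem sY_succ (e k : ℕ) (A Y : ℕ → Bool) (s : ℕ) : sY e k A Y (s+1) =
    if Zb e (xof e (strPrefix Y (sY e k A Y s).2) k) (strPrefix A (s+1)) (strPrefix Y (s+1)) = true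
      ∧ hit e k (strPrefix Y (sY e k A Y s).2) (strPrefix A (s+1)) = false
    then ((sY e k A Y s).1 + 1, s + 1) else sY e k A Y s := rfl

theorem sY_inv (e k : ℕ) (A Y : ℕ → Bool) (s : ℕ) :
    (sY e k A Y s).2 ≤ s ∧ sY e k A Y (sY e k A Y s).2 = sY e k A Y s := by
  induction s with
  | zero => simp [sY_zero]
  | succ s ih =>
    by_cases hc : Zb e (xof e (strPrefix Y (sY e k A Y s).2) k)
        (strPrefix A (s+1)) (strPrefix Y (s+1)) = true
        ∧ hit e k (strPrefix Y (sY e k A Y s).2) (strPrefix A (s+1)) = false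
    · have h := sY_succ e k A Y s
      rw [if_pos hc] at h
      have h2 : (sY e k A Y (s+1)).2 = s + 1 := by rw [h]
      rw [h2]
      exact ⟨le_rfl, rfl⟩
    · have h := sY_succ e k A Y s
      rw [if_neg hc] at h
      rw [h]
      exact ⟨by omega, ih.2⟩

theorem st_eq (e k : ℕ) (A Y : ℕ → Bool) (t s : ℕ) (h : s ≤ t) :
    st e k (strPrefix A t) (strPrefix Y t) s = sY e k A Y s := by
  induction s with
  | zero => rfl
  | succ s ih =>
    have hst : st e k (strPrefix A t) (strPrefix Y t) (s+1) =
      step e k (strPrefix A t) (strPrefix Y t) s (st e k (strPrefix A t) (strPrefix Y t) s) := rfl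
    rw [hst, ih (by omega), sY_succ]
    unfold step
    rw [take_sp _ h, take_sp _ h, take_sp Y (by have := (sY_inv e k A Y s).1; omega)]

def T (e k : ℕ) (A : ℕ → Bool) (i : ℕ) : Set (List Bool) :=
  {τ | st e k (strPrefix A τ.length) τ τ.length = (i, τ.length)}

theorem sp_mem_T (e k : ℕ) (A Y : ℕ → Bool) (i s : ℕ) :
    strPrefix Y s ∈ T e k A i ↔ sY e k A Y s = (i, s) := by
  simp only [T, Set.mem_ofPred_eq, len_sp]
  rw [st_eq _ _ _ _ _ _ le_rfl]

theorem mem_T_of (e k : ℕ) (A Y : ℕ → Bool) (i : ℕ) (τ : List Bool) (hτ : τ ∈ T e k A i)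
    (hY : Y ∈ cylinder τ) : sY e k A Y τ.length = (i, τ.length) := by
  have h := (isPrefix_iff _ _).1 hY
  rw [← sp_mem_T, h]
  exact hτ

theorem mem_open_T (e k : ℕ) (A Y : ℕ → Bool) (i : ℕ) :
    Y ∈ openOf (T e k A i) ↔ ∃ s, sY e k A Y s = (i, s) := by
  simp only [openOf, Set.mem_iUnion]
  constructor
  · rintro ⟨τ, hτ, hY⟩
    exact ⟨_, mem_T_of e k A Y i τ hτ hY⟩
  · rintro ⟨s, hs⟩
    exact ⟨_, (sp_mem_T _ _ _ _ _ _).2 hs, isPrefix_sp Y s⟩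

theorem sY_later (e k : ℕ) (A Y : ℕ → Bool) (i l s : ℕ) (h : sY e k A Y l = (i, l))
    (hs : l ≤ s) : sY e k A Y s = (i, l) ∨ i < (sY e k A Y s).1 := by
  induction s, hs using Nat.le_induction with
  | base => exact Or.inl h
  | succ s hs ih =>
    rw [sY_succ]
    split_ifs
    · right
      rcases ih with ih | ih
      · rw [ih]; simp
      · simp; omega
    · exact ih

theorem T_disj (e k : ℕ) (A : ℕ → Bool) (i : ℕ) :
    (T e k A i).PairwiseDisjoint cylinder := by
  intro τ hτ τ' hτ' hne
  rw [Function.onFun, Set.disjoint_left]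
  intro Y hY hY'
  have h1 := mem_T_of e k A Y i τ hτ hY
  have h2 := mem_T_of e k A Y i τ' hτ' hY'
  have key : ∀ l l', sY e k A Y l = (i, l) → sY e k A Y l' = (i, l') → l < l' → False := by
    intro l l' a b c
    rcases sY_later e k A Y i l l' a c.le with h | h
    · rw [b] at h
      have := (Prod.mk.inj h).2
      omega
    · rw [b] at h
      simp at h
  have hl : τ.length = τ'.length := by
    rcases lt_trichotomy τ.length τ'.length with h | h | h
    · exact (key _ _ h1 h2 h).elim
    · exact h
    · exact (key _ _ h2 h1 h).elim
  apply hne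
  rw [← (isPrefix_iff _ _).1 hY, ← (isPrefix_iff _ _).1 hY', hl]

theorem open_T_succ (e k : ℕ) (A : ℕ → Bool) (i : ℕ) :
    openOf (T e k A (i+1)) ⊆ ⋃ τ ∈ T e k A i, H e k A τ := by
  intro Y hY
  rw [mem_open_T] at hY
  obtain ⟨l, hl⟩ := hY
  cases l with
  | zero => simp [sY_zero] at hl
  | succ l =>
    rw [sY_succ] at hl
    obtain ⟨h1, h2⟩ := sY_inv e k A Y l
    split_ifs at hl with hc
    · simp only [Set.mem_iUnion]
      refine ⟨strPrefix Y (sY e k A Y l).2, ?_, isPrefix_sp _ _, l+1, ?_, hc.2, hc.1⟩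
      · rw [sp_mem_T, h2]
        have := (Prod.mk.inj hl).1
        ext <;> simp
        omega
      · rw [len_sp]; omega
    · rw [hl] at h1
      simp at h1

theorem mu_T (e k : ℕ) (A : ℕ → Bool) (i : ℕ) :
    μCantor (openOf (T e k A i)) ≤ (1 - 2⁻¹ ^ k) ^ i := by
  induction i with
  | zero => simpa using (measure_mono (Set.subset_univ _)).trans mu_univ_le
  | succ i ih =>
    have hcount : (T e k A i).Countable := Set.to_countable _
    calc _ ≤ μCantor (⋃ τ ∈ T e k A i, H e k A τ) := measure_mono (open_T_succ e k A i)
      _ ≤ ∑' τ : T e k A i, μCantor (H e k A τ) := measure_biUnion_le _ hcount _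
      _ ≤ ∑' τ : T e k A i, (1 - 2⁻¹ ^ k) * μCantor (cylinder τ) := by
          refine ENNReal.tsum_le_tsum fun τ => ?_
          rw [mu_cyl]
          exact mu_H e k A τ
      _ = (1 - 2⁻¹ ^ k) * μCantor (openOf (T e k A i)) := by
          rw [ENNReal.tsum_mul_left]
          unfold openOf
          rw [measure_biUnion hcount (T_disj e k A i) fun τ _ => meas_cyl τ]
      _ ≤ (1 - 2⁻¹ ^ k) * (1 - 2⁻¹ ^ k) ^ i := by gcongr
      _ = _ := by rw [pow_succ, mul_comm]

/-- membership of `X` in all levels when no requirement acts along `X`. -/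
theorem mem_all (e k : ℕ) (A X : ℕ → Bool)
    (hno : ∀ n s, hit e k (strPrefix X n) (strPrefix A s) = false)
    (hconv : ∀ n, ∃ s, Zb e (xof e (strPrefix X n) k) (strPrefix A s) (strPrefix X s) = true)
    (i : ℕ) : ∃ l, sY e k A X l = (i, l) := by
  induction i with
  | zero => exact ⟨0, rfl⟩
  | succ i ih =>
    obtain ⟨l, hl⟩ := ih
    classical
    by_contra hcon
    have hstay : ∀ s, l ≤ s → sY e k A X s = (i, l) := by
      intro s hs
      induction s, hs using Nat.le_induction with
      | base => exact hl
      | succ s hs ih =>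
        have h := sY_succ e k A X s
        rw [ih] at h
        split_ifs at h with hc
        · exact (hcon ⟨s+1, h⟩).elim
        · exact h
    obtain ⟨s, hs⟩ := hconv l
    have h := sY_succ e k A X (max s l)
    rw [hstay _ (le_max_right _ _), if_pos ⟨Zb_mono e _ A X (by omega) hs, hno _ _⟩] at h
    exact hcon ⟨_, h⟩

theorem exists_c (k : ℕ) : ∃ c : ℕ, ((1 : ℝ≥0∞) - 2⁻¹ ^ k) ^ c ≤ 2⁻¹ := by
  have hlt : (1 : ℝ≥0∞) - 2⁻¹ ^ k < 1 := by
    refine ENNReal.sub_lt_self (by simp) (by simp) ?_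
    exact pow_ne_zero _ (by simp)
  have h := ENNReal.tendsto_pow_atTop_nhds_zero_of_lt_one hlt
  have h2 := h.eventually (gt_mem_nhds (show (0 : ℝ≥0∞) < 2⁻¹ by simp))
  obtain ⟨c, hc⟩ := h2.exists
  exact ⟨c, hc.le⟩

theorem test_T (e k c : ℕ) (A : ℕ → Bool) (hc : ((1 : ℝ≥0∞) - 2⁻¹ ^ k) ^ c ≤ 2⁻¹) :
    MLTestIn A fun n => openOf (T e k A (n * c)) := by
  constructor
  · let R : List Bool → ℕ → ℕ → Bool := fun α y _ =>
      decide (α.length = ((Encodable.decode (α := List Bool) y.unpair.2).getD []).length ∧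
        st e k α ((Encodable.decode (α := List Bool) y.unpair.2).getD [])
          ((Encodable.decode (α := List Bool) y.unpair.2).getD []).length =
        (y.unpair.1 * c, ((Encodable.decode (α := List Bool) y.unpair.2).getD []).length))
    have hR : Primrec fun p : List Bool × ℕ × ℕ => R p.1 p.2.1 p.2.2 := by
      have hy : Primrec fun p : List Bool × ℕ × ℕ => p.2.1 := Primrec.fst.comp .snd
      have h1 : Primrec fun p : List Bool × ℕ × ℕ => p.2.1.unpair.1 :=
        Primrec.fst.comp (Primrec.unpair.comp hy)
      have h2 : Primrec fun p : List Bool × ℕ × ℕ =>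
          (Encodable.decode (α := List Bool) p.2.1.unpair.2).getD [] :=
        Primrec.option_getD.comp
          (Primrec.decode.comp (Primrec.snd.comp (Primrec.unpair.comp hy))) (.const [])
      have h3 := Primrec.list_length.comp h2
      refine PrimrecPred.decide (PrimrecPred.and ?_ ?_)
      · exact Primrec.eq.comp (Primrec.list_length.comp .fst) h3
      · exact Primrec.eq.comp (p_st e k .fst h2 h3)
          (Primrec.pair (Primrec.nat_mul.comp h1 (.const c)) h3)
    obtain ⟨d, hd⟩ := exists_W hR
    refine ⟨d, fun n => ?_⟩
    unfold testLevel
    refine congrArg openOf ?_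
    ext σ
    simp only [T, OracleComputes, hd, Set.mem_ofPred_eq, R, decide_eq_true_iff, Nat.unpair_pair,
      Encodable.encodek, Option.getD_some]
    constructor
    · intro h
      exact ⟨0, strPrefix A σ.length, isPrefix_sp _ _, len_sp _ _, h⟩
    · rintro ⟨_, α, h1, h2, h3⟩
      rw [isPrefix_iff, h2] at h1
      rwa [h1]
  · intro n
    refine (mu_T e k A (n * c)).trans ?_
    rw [mul_comm, pow_mul]
    gcongr

/-- strings removed from the class. -/
def S (e : ℕ) (A : ℕ → Bool) : Set (List Bool) :=
  {σ | ∃ x s, Db x (strPrefix A s) = true ∧ Zb e x (strPrefix A σ.length) σ = true}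

theorem ce_S (e : ℕ) (A : ℕ → Bool) : CeStrIn A (S e A) := by
  let R : List Bool → ℕ → ℕ → Bool := fun α n m =>
    decide ((m.unpair.2 ≤ α.length ∧
      ((Encodable.decode (α := List Bool) n).getD []).length ≤ α.length) ∧
      Db m.unpair.1 (α.take m.unpair.2) = true ∧
      Zb e m.unpair.1 (α.take ((Encodable.decode (α := List Bool) n).getD []).length)
        ((Encodable.decode (α := List Bool) n).getD []) = true)
  have hR : Primrec fun p : List Bool × ℕ × ℕ => R p.1 p.2.1 p.2.2 := by
    have hn : Primrec fun p : List Bool × ℕ × ℕ => p.2.1 := Primrec.fst.comp .snd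
    have hm : Primrec fun p : List Bool × ℕ × ℕ => p.2.2 := Primrec.snd.comp .snd
    have h1 : Primrec fun p : List Bool × ℕ × ℕ => p.2.2.unpair.1 :=
      Primrec.fst.comp (Primrec.unpair.comp hm)
    have h2 : Primrec fun p : List Bool × ℕ × ℕ => p.2.2.unpair.2 :=
      Primrec.snd.comp (Primrec.unpair.comp hm)
    have h3 : Primrec fun p : List Bool × ℕ × ℕ =>
        (Encodable.decode (α := List Bool) p.2.1).getD [] :=
      Primrec.option_getD.comp (Primrec.decode.comp hn) (.const [])
    have h4 := Primrec.list_length.comp h3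
    have h5 : Primrec fun p : List Bool × ℕ × ℕ => p.1.length := Primrec.list_length.comp .fst
    refine PrimrecPred.decide (PrimrecPred.and (PrimrecPred.and ?_ ?_) (PrimrecPred.and ?_ ?_))
    · exact Primrec.nat_le.comp h2 h5
    · exact Primrec.nat_le.comp h4 h5
    · exact Primrec.eq.comp (p_Db h1 (Primrec.list_take.comp h2 .fst)) (.const true)
    · exact Primrec.eq.comp (p_Zb (.const e) h1 (Primrec.list_take.comp h4 .fst) h3) (.const true)
  obtain ⟨d, hd⟩ := exists_W hR
  refine ⟨d, fun σ => ?_⟩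
  simp only [S, OracleComputes, hd, Set.mem_ofPred_eq, R, decide_eq_true_iff,
      Encodable.encodek, Option.getD_some]
  constructor
  · rintro ⟨x, s, h1, h2⟩
    refine ⟨Nat.pair x s, strPrefix A (max s σ.length), isPrefix_sp _ _, ?_⟩
    rw [Nat.unpair_pair, len_sp, take_sp _ (le_max_left _ _), take_sp _ (le_max_right _ _)]
    exact ⟨⟨le_max_left _ _, le_max_right _ _⟩, h1, h2⟩
  · rintro ⟨m, α, hα, ⟨h1, h2⟩, h3, h4⟩
    rw [isPrefix_iff] at hα
    rw [← hα, take_sp _ h1] at h3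
    rw [← hα, take_sp _ h2] at h4
    exact ⟨_, _, h3, h4⟩

theorem main (A X : ℕ → Bool) (hX : MLRandomIn A X)
    (hcomp : TuringLE (jump A) (joinSet A X)) :
    ∃ P : Set (ℕ → Bool), Pi01In A P ∧ X ∈ P ∧
      ∀ δ : ℝ≥0∞, 0 < δ → ∃ n, dens (strPrefix X n) P < δ := by
  obtain ⟨e₀, he₀⟩ := hcomp
  obtain ⟨g, hg, hgD⟩ := exists_g (D := Db) (p_Db .fst .snd)
  obtain ⟨e, he⟩ := exists_comp e₀ hg
  have hjump : ∀ x, jump A (g x) = true ↔ ∃ s, Db x (strPrefix A s) = true := by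
    intro x
    have hj : jump A (g x) = true ↔ ∃ m, OracleComputes (g x) A (g x) m := by
      unfold jump
      exact @decide_eq_true_iff _ (Classical.propDecidable _)
    rw [hj]
    simp only [OracleComputes, hgD]
    constructor
    · rintro ⟨_, σ, h1, h2⟩
      rw [isPrefix_iff] at h1
      exact ⟨σ.length, by rwa [h1]⟩
    · rintro ⟨s, h⟩
      exact ⟨0, _, isPrefix_sp _ _, h⟩
  have hΓ : ∀ x, OracleComputes e (joinSet A X) x 0 ↔ ¬ ∃ s, Db x (strPrefix A s) = true := by
    intro x
    have h1 : OracleComputes e (joinSet A X) x 0 ↔ OracleComputes e₀ (joinSet A X) (g x) 0 := by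
      simp only [OracleComputes, he]
    rw [h1, he₀, ← hjump]
    show 0 = natOfBool (jump A (g x)) ↔ _
    cases jump A (g x) <;> simp [natOfBool]
  have hPnot : ∀ Y ∈ (openOf (S e A))ᶜ, ∀ x s t, Db x (strPrefix A s) = true →
      Zb e x (strPrefix A t) (strPrefix Y t) = false := by
    intro Y hY x s t hD
    by_contra hZ
    rw [Bool.not_eq_false] at hZ
    apply hY
    simp only [openOf, Set.mem_iUnion]
    refine ⟨strPrefix Y t, ⟨x, s, hD, ?_⟩, isPrefix_sp Y t⟩
    rwa [len_sp]
  refine ⟨(openOf (S e A))ᶜ, ⟨_, ce_S e A, rfl⟩, ?_, ?_⟩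
  · intro hmem
    simp only [openOf, Set.mem_iUnion] at hmem
    obtain ⟨σ, ⟨x, s, hD, hZ⟩, hσ⟩ := hmem
    have h := (isPrefix_iff _ _).1 hσ
    have hZ' : Zb e x (strPrefix A σ.length) (strPrefix X σ.length) = true := by rwa [h]
    exact (hΓ x).1 ((Zb_oracle e x A X).1 ⟨_, hZ'⟩) ⟨s, hD⟩
  · intro δ hδ
    obtain ⟨k, hk⟩ : ∃ k : ℕ, (2⁻¹ : ℝ≥0∞) ^ k < δ := by
      have h := ENNReal.tendsto_pow_atTop_nhds_zero_of_lt_one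
        (show (2⁻¹ : ℝ≥0∞) < 1 by simp)
      exact (h.eventually (gt_mem_nhds hδ)).exists
    by_contra hcon
    push Not at hcon
    have hno : ∀ n s, hit e k (strPrefix X n) (strPrefix A s) = false := by
      intro n s
      by_contra hh
      rw [Bool.not_eq_false] at hh
      refine absurd (hcon n) (not_le.2 (lt_of_le_of_lt ?_ hk))
      refine dens_win e k A _ s hh _ fun Y hY => hPnot Y hY _ s s ?_
      rwa [Db_xof]
    have hconv : ∀ n, ∃ s, Zb e (xof e (strPrefix X n) k) (strPrefix A s) (strPrefix X s)
        = true := by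
      intro n
      rw [Zb_oracle, hΓ]
      rintro ⟨s, hs⟩
      rw [Db_xof, hno] at hs
      exact Bool.false_ne_true hs
    obtain ⟨c, hc⟩ := exists_c k
    obtain ⟨n, hn⟩ := hX _ (test_T e k c A hc)
    exact hn ((mem_open_T _ _ _ _ _).2 (mem_all e k A X hno hconv _))

end BHMN

/-- relativized Bienvenu–Hölzl–Miller–Nies, one direction:
if `X` is `A`-random and `A ⊕ X ≥_T A′`, then `X` has lower density zero in
some `Π⁰₁(A)` class containing it. -/
theorem stmt11 (A X : ℕ → Bool) (hX : MLRandomIn A X)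
    (hcomp : TuringLE (jump A) (joinSet A X)) :
    ∃ P : Set (ℕ → Bool), Pi01In A P ∧ X ∈ P ∧
      ∀ δ : ℝ≥0∞, 0 < δ → ∃ n, dens (strPrefix X n) P < δ := by
  exact BHMN.main A X hX hcomp
end

section
/- Let A < _T ∅′ be a set that is not K-trivial and D ≤_T ∅′ a non-computable set. Then there exists a Martin-Löf random sequence R such that R ≱_T D, R is low (R′ ≤_T ∅′), and A ⊕ R ≡_T ∅′. -/
open MeasureTheory ENNReal

open MeasureTheory ENNReal

/-! ### Primitive recursion toolkit -/

attribute [fun_prop] Primrec PrimrecPred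
attribute [fun_prop] Primrec.id Primrec.const Primrec.pair

section toolkit
variable {α β γ : Type} [Primcodable α] [Primcodable β] [Primcodable γ]

@[fun_prop] theorem pr_id : Primrec (fun a : α => a) := Primrec.id
@[fun_prop] theorem pr_comp {f : β → γ} {g : α → β} (hf : Primrec f) (hg : Primrec g) :
    Primrec fun a => f (g a) := hf.comp hg
@[fun_prop] theorem pr_fst {f : α → β × γ} (hf : Primrec f) : Primrec fun a => (f a).1 :=
  Primrec.fst.comp hf
@[fun_prop] theorem pr_snd {f : α → β × γ} (hf : Primrec f) : Primrec fun a => (f a).2 :=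
  Primrec.snd.comp hf
@[fun_prop] theorem pr_add {f g : α → ℕ} (hf : Primrec f) (hg : Primrec g) :
    Primrec fun a => f a + g a := Primrec.nat_add.comp hf hg
@[fun_prop] theorem pr_sub {f g : α → ℕ} (hf : Primrec f) (hg : Primrec g) :
    Primrec fun a => f a - g a := Primrec.nat_sub.comp hf hg
@[fun_prop] theorem pr_mul {f g : α → ℕ} (hf : Primrec f) (hg : Primrec g) :
    Primrec fun a => f a * g a := Primrec.nat_mul.comp hf hg
@[fun_prop] theorem pr_div {f g : α → ℕ} (hf : Primrec f) (hg : Primrec g) :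
    Primrec fun a => f a / g a := Primrec.nat_div.comp hf hg
theorem pr_pow0 : Primrec₂ ((· ^ ·) : ℕ → ℕ → ℕ) := Primrec₂.unpaired'.1 Nat.Primrec.pow
@[fun_prop] theorem pr_pow {f g : α → ℕ} (hf : Primrec f) (hg : Primrec g) :
    Primrec fun a => f a ^ g a := pr_pow0.comp hf hg
@[fun_prop] theorem pr_natPair {f g : α → ℕ} (hf : Primrec f) (hg : Primrec g) :
    Primrec fun a => Nat.pair (f a) (g a) := Primrec₂.natPair.comp hf hg
@[fun_prop] theorem pr_unpair {f : α → ℕ} (hf : Primrec f) :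
    Primrec fun a => Nat.unpair (f a) := Primrec.unpair.comp hf
@[fun_prop] theorem pr_encode {f : α → β} (hf : Primrec f) :
    Primrec fun a => Encodable.encode (f a) := Primrec.encode.comp hf
@[fun_prop] theorem pr_ofNat {δ : Type} [Denumerable δ] {f : α → ℕ} (hf : Primrec f) :
    Primrec fun a => Denumerable.ofNat δ (f a) := (Primrec.ofNat δ).comp hf
@[fun_prop] theorem pr_cons {f : α → β} {g : α → List β} (hf : Primrec f) (hg : Primrec g) :
    Primrec fun a => f a :: g a := Primrec.list_cons.comp hf hg
@[fun_prop] theorem pr_append {f g : α → List β} (hf : Primrec f) (hg : Primrec g) :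
    Primrec fun a => f a ++ g a := Primrec.list_append.comp hf hg
@[fun_prop] theorem pr_length {f : α → List β} (hf : Primrec f) :
    Primrec fun a => (f a).length := Primrec.list_length.comp hf
@[fun_prop] theorem pr_take {f : α → ℕ} {g : α → List β} (hf : Primrec f) (hg : Primrec g) :
    Primrec fun a => List.take (f a) (g a) := Primrec.list_take.comp hf hg
@[fun_prop] theorem pr_get {g : α → List β} {f : α → ℕ} (hg : Primrec g) (hf : Primrec f) :
    Primrec fun a => (g a)[f a]? := Primrec.list_getElem?.comp hg hf
@[fun_prop] theorem pr_getD {g : α → List β} {f : α → ℕ} (hg : Primrec g) (hf : Primrec f)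
    (d : β) : Primrec fun a => (g a).getD (f a) d := (Primrec.list_getD d).comp hg hf
@[fun_prop] theorem pr_range {f : α → ℕ} (hf : Primrec f) :
    Primrec fun a => List.range (f a) := Primrec.list_range.comp hf
@[fun_prop] theorem pr_some {f : α → β} (hf : Primrec f) :
    Primrec fun a => some (f a) := Primrec.option_some.comp hf
@[fun_prop] theorem pr_natOfBool {f : α → Bool} (hf : Primrec f) :
    Primrec fun a => natOfBool (f a) := (Primrec.dom_bool natOfBool).comp hf
@[fun_prop] theorem pr_evaln {k : α → ℕ} {c : α → Nat.Partrec.Code} {n : α → ℕ} (hk : Primrec k)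
    (hc : Primrec c) (hn : Primrec n) :
    Primrec fun a => Nat.Partrec.Code.evaln (k a) (c a) (n a) :=
  Nat.Partrec.Code.primrec_evaln.comp (((hk.pair hc).pair hn))

@[fun_prop] theorem pp_comp {p : β → Prop} {f : α → β} (hp : PrimrecPred p) (hf : Primrec f) :
    PrimrecPred fun a => p (f a) := hp.comp hf
@[fun_prop] theorem pp_and {p q : α → Prop} (hp : PrimrecPred p) (hq : PrimrecPred q) :
    PrimrecPred fun a => p a ∧ q a := hp.and hq
@[fun_prop] theorem pp_or {p q : α → Prop} (hp : PrimrecPred p) (hq : PrimrecPred q) :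
    PrimrecPred fun a => p a ∨ q a := hp.or hq
@[fun_prop] theorem pp_not {p : α → Prop} (hp : PrimrecPred p) :
    PrimrecPred fun a => ¬ p a := hp.not
theorem pp_imp {p q : α → Prop} (hp : PrimrecPred p) (hq : PrimrecPred q) :
    PrimrecPred fun a => p a → q a :=
  (hp.not.or hq).of_eq fun a => by tauto
@[fun_prop] theorem pp_iff {p q : α → Prop} (hp : PrimrecPred p) (hq : PrimrecPred q) :
    PrimrecPred fun a => p a ↔ q a :=
  ((pp_imp hp hq).and (pp_imp hq hp)).of_eq fun a => by tauto
@[fun_prop] theorem pp_eq {f g : α → β} (hf : Primrec f) (hg : Primrec g) :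
    PrimrecPred fun a => f a = g a := Primrec.eq.comp hf hg
@[fun_prop] theorem pp_ne {f g : α → β} (hf : Primrec f) (hg : Primrec g) :
    PrimrecPred fun a => f a ≠ g a := (pp_eq hf hg).not
@[fun_prop] theorem pp_le {f g : α → ℕ} (hf : Primrec f) (hg : Primrec g) :
    PrimrecPred fun a => f a ≤ g a := Primrec.nat_le.comp hf hg
@[fun_prop] theorem pp_lt {f g : α → ℕ} (hf : Primrec f) (hg : Primrec g) :
    PrimrecPred fun a => f a < g a := Primrec.nat_lt.comp hf hg

@[fun_prop] theorem pr_ite {c : α → Prop} [DecidablePred c] {f g : α → β} (hc : PrimrecPred c)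
    (hf : Primrec f) (hg : Primrec g) : Primrec fun a => if c a then f a else g a :=
  Primrec.ite hc hf hg

theorem pp_allmem {p : α → β → Prop} {g : α → List β} (hp : PrimrecPred fun q : α × β => p q.1 q.2)
    (hg : Primrec g) : PrimrecPred fun a => ∀ x ∈ g a, p a x := by
  have h : PrimrecRel (fun (x : β) (a : α) => p a x) :=
    PrimrecPred.comp (f := fun q : β × α => (q.2, q.1)) hp (by fun_prop)
  exact PrimrecPred.comp (f := fun a => (g a, a)) h.forall_mem_list (by fun_prop)

theorem pp_exmem {p : α → β → Prop} {g : α → List β} (hp : PrimrecPred fun q : α × β => p q.1 q.2)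
    (hg : Primrec g) : PrimrecPred fun a => ∃ x ∈ g a, p a x := by
  have h : PrimrecRel (fun (x : β) (a : α) => p a x) :=
    PrimrecPred.comp (f := fun q : β × α => (q.2, q.1)) hp (by fun_prop)
  exact PrimrecPred.comp (f := fun a => (g a, a)) h.exists_mem_list (by fun_prop)

theorem pp_ball {p : α → ℕ → Prop} {g : α → ℕ} (hp : PrimrecPred fun q : α × ℕ => p q.1 q.2)
    (hg : Primrec g) : PrimrecPred fun a => ∀ x < g a, p a x :=
  (pp_allmem hp (pr_range hg)).of_eq fun a => by simp

theorem pp_bex {p : α → ℕ → Prop} {g : α → ℕ} (hp : PrimrecPred fun q : α × ℕ => p q.1 q.2)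
    (hg : Primrec g) : PrimrecPred fun a => ∃ x < g a, p a x :=
  (pp_exmem hp (pr_range hg)).of_eq fun a => by simp

/-- Total decoding. -/
def dec (δ : Type) [Primcodable δ] [Inhabited δ] (n : ℕ) : δ := (Encodable.decode n).getD default

@[simp] theorem dec_encode {δ : Type} [Primcodable δ] [Inhabited δ] (d : δ) :
    dec δ (Encodable.encode d) = d := by simp [dec]

@[fun_prop] theorem pr_dec {δ : Type} [Primcodable δ] [Inhabited δ] {f : α → ℕ}
    (hf : Primrec f) : Primrec fun a => dec δ (f a) :=
  (Primrec.option_getD.comp Primrec.decode (Primrec.const default)).comp hf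

end toolkit

/-! ### Strings and prefixes -/

@[simp] theorem strPrefix_length (X : ℕ → Bool) (n : ℕ) : (strPrefix X n).length = n := by
  simp [strPrefix]

theorem strPrefix_get? (X : ℕ → Bool) (n i : ℕ) :
    (strPrefix X n)[i]? = if i < n then some (X i) else none := by
  simp only [strPrefix, List.getElem?_map]
  split_ifs with h
  · rw [List.getElem?_range h]; rfl
  · rw [List.getElem?_eq_none (by simpa using h)]; rfl

theorem strPrefix_take (X : ℕ → Bool) (n i : ℕ) (h : i ≤ n) :
    (strPrefix X n).take i = strPrefix X i := by
  simp [strPrefix, ← List.map_take, List.take_range, h]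

theorem isPrefixOf_iff (σ : List Bool) (X : ℕ → Bool) :
    IsPrefixOf σ X ↔ strPrefix X σ.length = σ := by
  constructor
  · intro h
    apply List.ext_getElem (by simp)
    intro i h1 h2
    simpa [strPrefix] using h ⟨i, h2⟩
  · intro h i
    have h3 : (strPrefix X σ.length)[i.1]? = σ[i.1]? := by rw [h]
    rw [strPrefix_get?, if_pos i.2] at h3
    simpa using h3

theorem exists_prefix_iff (X : ℕ → Bool) (p : List Bool → Prop) :
    (∃ σ, IsPrefixOf σ X ∧ p σ) ↔ ∃ s, p (strPrefix X s) := by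
  constructor
  · rintro ⟨σ, h, hp⟩
    exact ⟨σ.length, by rwa [(isPrefixOf_iff σ X).1 h]⟩
  · rintro ⟨s, h⟩
    exact ⟨_, (isPrefixOf_iff _ X).2 (by simp), h⟩

theorem strPrefix_eq_iff (X : ℕ → Bool) (σ : List Bool) :
    strPrefix X σ.length = σ ↔ ∀ i < σ.length, (X i = true ↔ σ[i]? = some true) := by
  constructor
  · intro h i hi
    rw [← h, strPrefix_get?, if_pos (by simpa using hi)]
    simp
  · intro h
    apply List.ext_getElem (by simp)
    intro i h1 h2
    have := h i h2
    simp only [List.getElem?_eq_getElem h2, Option.some.injEq] at this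
    have e : (strPrefix X σ.length)[i] = X i := by simp [strPrefix]
    rw [e, Bool.eq_iff_iff, this]

/-! ### Relativized Σ₁ and Δ₁ predicates -/

/-- `p` is Σ₁ relative to `X`. -/
def Sig (X : ℕ → Bool) {α : Type} [Primcodable α] (p : α → Prop) : Prop :=
  ∃ f : α × List Bool → Prop, PrimrecPred f ∧ ∀ a, p a ↔ ∃ s, f (a, strPrefix X s)

/-- `p` is Δ₁ relative to `X`. -/
def Del (X : ℕ → Bool) {α : Type} [Primcodable α] (p : α → Prop) : Prop :=
  Sig X p ∧ Sig X (fun a => ¬ p a)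

section sig
variable {X : ℕ → Bool} {α β : Type} [Primcodable α] [Primcodable β]

theorem Sig.of_eq {p q : α → Prop} (h : Sig X p) (e : ∀ a, p a ↔ q a) : Sig X q := by
  obtain ⟨f, hf, h⟩ := h
  exact ⟨f, hf, fun a => (e a).symm.trans (h a)⟩

theorem Sig.comp {p : β → Prop} {g : α → β} (h : Sig X p) (hg : Primrec g) :
    Sig X fun a => p (g a) := by
  obtain ⟨f, hf, h⟩ := h
  exact ⟨fun q => f (g q.1, q.2), by fun_prop, fun a => h (g a)⟩

theorem Sig.of_primrec {p : α → Prop} (h : PrimrecPred p) : Sig X p :=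
  ⟨fun q => p q.1, by fun_prop, fun a => by simp⟩

theorem Sig.mono {p : α → Prop} (h : Sig X p) : ∃ f : α × List Bool → Prop, PrimrecPred f ∧
    (∀ a s t, s ≤ t → f (a, strPrefix X s) → f (a, strPrefix X t)) ∧
    ∀ a, p a ↔ ∃ s, f (a, strPrefix X s) := by
  obtain ⟨f, hf, h⟩ := h
  refine ⟨fun q => ∃ i < q.2.length + 1, f (q.1, q.2.take i), ?_, ?_, ?_⟩
  · apply pp_bex <;> fun_prop
  · rintro a s t hst ⟨i, hi, hfi⟩
    simp only [strPrefix_length] at hi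
    refine ⟨i, by simp; omega, ?_⟩
    simp only at hfi ⊢
    rw [strPrefix_take _ _ _ (by omega)] at hfi ⊢
    exact hfi
  · intro a
    rw [h a]
    constructor
    · rintro ⟨s, hs⟩
      exact ⟨s, s, by simp, by simpa [strPrefix_take] using hs⟩
    · rintro ⟨s, i, hi, hfi⟩
      simp only [strPrefix_length] at hi
      simp only at hfi
      rw [strPrefix_take _ _ _ (by omega)] at hfi
      exact ⟨i, hfi⟩

theorem Sig.and {p q : α → Prop} (hp : Sig X p) (hq : Sig X q) : Sig X fun a => p a ∧ q a := by
  obtain ⟨f, hf, mf, hp⟩ := hp.mono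
  obtain ⟨g, hg, mg, hq⟩ := hq.mono
  refine ⟨fun q => f q ∧ g q, by fun_prop, fun a => ?_⟩
  simp only [hp, hq]
  constructor
  · rintro ⟨⟨s, hs⟩, ⟨t, ht⟩⟩
    exact ⟨max s t, mf _ _ _ (le_max_left _ _) hs, mg _ _ _ (le_max_right _ _) ht⟩
  · rintro ⟨s, h1, h2⟩
    exact ⟨⟨s, h1⟩, ⟨s, h2⟩⟩

theorem Sig.or {p q : α → Prop} (hp : Sig X p) (hq : Sig X q) : Sig X fun a => p a ∨ q a := by
  obtain ⟨f, hf, hp⟩ := hp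
  obtain ⟨g, hg, hq⟩ := hq
  refine ⟨fun q => f q ∨ g q, by fun_prop, fun a => ?_⟩
  simp only [hp, hq, exists_or]

theorem Sig.exN {p : α → ℕ → Prop} (hp : Sig X fun q : α × ℕ => p q.1 q.2) :
    Sig X fun a => ∃ n, p a n := by
  obtain ⟨f, hf, mf, hp⟩ := hp.mono
  refine ⟨fun q => ∃ n < q.2.length, f ((q.1, n), q.2), ?_, fun a => ?_⟩
  · apply pp_bex <;> fun_prop
  constructor
  · rintro ⟨n, hn⟩
    obtain ⟨s, hs⟩ := (hp (a, n)).1 hn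
    exact ⟨max s (n + 1), n, by simp, mf _ _ _ (le_max_left _ _) hs⟩
  · rintro ⟨s, n, _, h⟩
    exact ⟨n, (hp (a, n)).2 ⟨s, h⟩⟩

theorem Sig.ex {δ : Type} [Primcodable δ] [Inhabited δ] {p : α → δ → Prop}
    (hp : Sig X fun q : α × δ => p q.1 q.2) : Sig X fun a => ∃ n, p a n := by
  have h : Sig X fun a => ∃ n, p a (dec δ n) :=
    Sig.exN (Sig.comp (g := fun q : α × ℕ => (q.1, dec δ q.2)) hp (by fun_prop))
  refine h.of_eq fun a => ⟨fun ⟨n, hn⟩ => ⟨_, hn⟩, fun ⟨d, hd⟩ => ⟨Encodable.encode d, ?_⟩⟩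
  rwa [dec_encode]

theorem Sig.ball {p : α → ℕ → Prop} {g : α → ℕ} (hp : Sig X fun q : α × ℕ => p q.1 q.2)
    (hg : Primrec g) : Sig X fun a => ∀ n < g a, p a n := by
  obtain ⟨f, hf, mf, hp⟩ := hp.mono
  refine ⟨fun q => ∀ n < g q.1, f ((q.1, n), q.2), ?_, fun a => ?_⟩
  · apply pp_ball <;> fun_prop
  constructor
  · intro h
    have h2 : ∀ n, ∃ s, n < g a → f ((a, n), strPrefix X s) := by
      intro n
      by_cases hn : n < g a
      · obtain ⟨s, hs⟩ := (hp (a, n)).1 (h n hn)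
        exact ⟨s, fun _ => hs⟩
      · exact ⟨0, fun h => absurd h hn⟩
    choose s hs using h2
    refine ⟨(Finset.range (g a)).sup s, fun n hn => mf _ _ _ ?_ (hs n hn)⟩
    exact Finset.le_sup (f := s) (Finset.mem_range.2 hn)
  · rintro ⟨s, h⟩ n hn
    exact (hp (a, n)).2 ⟨s, h n hn⟩

theorem Sig.bex {p : α → ℕ → Prop} {g : α → ℕ} (hp : Sig X fun q : α × ℕ => p q.1 q.2)
    (hg : Primrec g) : Sig X fun a => ∃ n < g a, p a n := by
  apply Sig.exN
  exact Sig.and (Sig.of_primrec (by fun_prop)) hp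

theorem Del.sig {p : α → Prop} (h : Del X p) : Sig X p := h.1

theorem Del.of_eq {p q : α → Prop} (h : Del X p) (e : ∀ a, p a ↔ q a) : Del X q :=
  ⟨h.1.of_eq e, h.2.of_eq fun a => not_congr (e a)⟩

theorem Del.comp {p : β → Prop} {g : α → β} (h : Del X p) (hg : Primrec g) :
    Del X fun a => p (g a) := ⟨h.1.comp hg, h.2.comp hg⟩

theorem Del.of_primrec {p : α → Prop} (h : PrimrecPred p) : Del X p :=
  ⟨Sig.of_primrec h, Sig.of_primrec h.not⟩

theorem Del.not {p : α → Prop} (h : Del X p) : Del X fun a => ¬ p a :=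
  ⟨h.2, h.1.of_eq fun a => by tauto⟩

theorem Del.and {p q : α → Prop} (hp : Del X p) (hq : Del X q) : Del X fun a => p a ∧ q a :=
  ⟨hp.1.and hq.1, (hp.2.or hq.2).of_eq fun a => by tauto⟩

theorem Del.or {p q : α → Prop} (hp : Del X p) (hq : Del X q) : Del X fun a => p a ∨ q a :=
  ⟨hp.1.or hq.1, (hp.2.and hq.2).of_eq fun a => by tauto⟩

theorem Del.imp {p q : α → Prop} (hp : Del X p) (hq : Del X q) : Del X fun a => p a → q a :=
  (hp.not.or hq).of_eq fun a => by tauto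

theorem Del.iff {p q : α → Prop} (hp : Del X p) (hq : Del X q) : Del X fun a => p a ↔ q a :=
  ((hp.imp hq).and (hq.imp hp)).of_eq fun a => by tauto

theorem Del.ball {p : α → ℕ → Prop} {g : α → ℕ} (hp : Del X fun q : α × ℕ => p q.1 q.2)
    (hg : Primrec g) : Del X fun a => ∀ n < g a, p a n :=
  ⟨hp.1.ball hg, (hp.2.bex hg).of_eq fun a => by push Not; rfl⟩

theorem Del.oracle : Del X (fun n => X n = true) := by
  constructor
  · refine ⟨fun q => q.2[q.1]? = some true, by fun_prop, fun a => ?_⟩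
    constructor
    · intro h
      exact ⟨a + 1, by show (strPrefix X (a + 1))[a]? = _; rw [strPrefix_get?, if_pos (by omega), h]⟩
    · rintro ⟨s, h⟩
      simp only [strPrefix_get?] at h
      split_ifs at h
      simpa using h
  · refine ⟨fun q => q.2[q.1]? = some false, by fun_prop, fun a => ?_⟩
    constructor
    · intro h
      exact ⟨a + 1, by show (strPrefix X (a + 1))[a]? = _; rw [strPrefix_get?, if_pos (by omega)]; simpa using h⟩
    · rintro ⟨s, h⟩
      simp only [strPrefix_get?] at h
      split_ifs at h
      simpa using h

/-- Transitivity. -/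
theorem Sig.trans {Y : ℕ → Bool} {p : α → Prop} (h : Sig Y p) (hY : Del X fun n => Y n = true) :
    Sig X p := by
  obtain ⟨f, hf, h⟩ := h
  have h1 : Sig X fun a => ∃ σ : List Bool,
      (∀ i < σ.length, (Y i = true ↔ σ[i]? = some true)) ∧ f (a, σ) := by
    apply Sig.ex
    apply Sig.and
    · apply Sig.ball _ (by fun_prop)
      exact (Del.iff (Del.comp (g := fun q : (α × List Bool) × ℕ => q.2) hY (by fun_prop))
        (Del.of_primrec (by fun_prop))).1
    · exact Sig.of_primrec (by fun_prop)
  refine h1.of_eq fun a => ?_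
  rw [h]
  constructor
  · rintro ⟨σ, h1, h2⟩
    rw [← strPrefix_eq_iff] at h1
    exact ⟨_, by rwa [h1]⟩
  · rintro ⟨s, hs⟩
    exact ⟨_, (strPrefix_eq_iff Y _).1 (by simp), hs⟩

theorem Del.trans {Y : ℕ → Bool} {p : α → Prop} (h : Del Y p) (hY : Del X fun n => Y n = true) :
    Del X p := ⟨h.1.trans hY, h.2.trans hY⟩

theorem sig_wenum : Sig X fun q : ℕ × ℕ => WEnum q.1 q.2 := by
  have : Sig X fun q : ℕ × ℕ => ∃ k,
      ¬ (Nat.Partrec.Code.evaln k (Denumerable.ofNat Nat.Partrec.Code q.1) q.2 = none) := by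
    apply Sig.exN
    apply Sig.of_primrec
    fun_prop
  refine this.of_eq fun q => ?_
  rw [WEnum, Part.dom_iff_mem]
  constructor
  · rintro ⟨k, hk⟩
    obtain ⟨y, hy⟩ := Option.ne_none_iff_exists'.1 hk
    exact ⟨y, Nat.Partrec.Code.evaln_sound hy⟩
  · rintro ⟨y, hy⟩
    obtain ⟨k, hk⟩ := Nat.Partrec.Code.evaln_complete.1 hy
    refine ⟨k, ?_⟩
    rw [Option.mem_def] at hk
    rw [hk]; simp

theorem exists_code_prim (g : ℕ × ℕ → Prop) (hg : PrimrecPred g) :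
    ∃ c : Nat.Partrec.Code, ∀ x, (c.eval x).Dom ↔ ∃ u, g (x, u) := by
  obtain ⟨hd, hg⟩ := hg
  have h1 : Partrec fun x : ℕ => Nat.rfind fun u => Part.some (decide (g (x, u))) :=
    Partrec.rfind (p := fun x u => Part.some (decide (g (x, u)))) hg.to_comp.partrec
  obtain ⟨c, hc⟩ := Nat.Partrec.Code.exists_code.1 (Partrec.nat_iff.1 h1)
  refine ⟨c, fun x => ?_⟩
  rw [hc]
  refine Nat.rfind_dom.trans ?_
  constructor
  · rintro ⟨n, hn, -⟩
    exact ⟨n, by simpa using hn⟩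
  · rintro ⟨n, hn⟩
    exact ⟨n, by simpa using hn, fun _ => trivial⟩

end sig


open MeasureTheory ENNReal

section reductions
variable {X : ℕ → Bool} {α β : Type} [Primcodable α] [Primcodable β]

theorem Sig.exPrefix {p : α → List Bool → Prop} (h : Sig X fun q : α × List Bool => p q.1 q.2) :
    Sig X fun a => ∃ s, p a (strPrefix X s) := by
  have h1 : Sig X fun a => ∃ σ : List Bool,
      (∀ i < σ.length, (X i = true ↔ σ[i]? = some true)) ∧ p a σ := by
    apply Sig.ex
    refine Sig.and ?_ h
    apply Sig.ball _ (by fun_prop)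
    exact (Del.iff (Del.comp (g := fun q : (α × List Bool) × ℕ => q.2) Del.oracle (by fun_prop))
        (Del.of_primrec (by fun_prop))).1
  refine h1.of_eq fun a => ?_
  constructor
  · rintro ⟨σ, h1, h2⟩
    rw [← strPrefix_eq_iff] at h1
    exact ⟨_, by rwa [h1]⟩
  · rintro ⟨s, hs⟩
    exact ⟨_, (strPrefix_eq_iff X _).1 (by simp), hs⟩

theorem oc_iff (e : ℕ) (X : ℕ → Bool) (n m : ℕ) : OracleComputes e X n m ↔
    ∃ s, WEnum e (Nat.pair (Encodable.encode (strPrefix X s)) (Nat.pair n m)) :=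
  exists_prefix_iff X fun σ => WEnum e (Nat.pair (Encodable.encode σ) (Nat.pair n m))

theorem sig_oc : Sig X fun q : ℕ × ℕ × ℕ => OracleComputes q.1 X q.2.1 q.2.2 := by
  have := Sig.exPrefix (X := X) (p := fun (q : ℕ × ℕ × ℕ) σ =>
    WEnum q.1 (Nat.pair (Encodable.encode σ) (Nat.pair q.2.1 q.2.2)))
    (sig_wenum.comp (g := fun q : (ℕ × ℕ × ℕ) × List Bool =>
      (q.1.1, Nat.pair (Encodable.encode q.2) (Nat.pair q.1.2.1 q.1.2.2))) (by fun_prop))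
  exact this.of_eq fun q => (oc_iff _ _ _ _).symm

theorem exists_code_prim_nat (g : ℕ × ℕ → Prop) (hg : PrimrecPred g) :
    ∃ e : ℕ, ∀ x, WEnum e x ↔ ∃ u, g (x, u) := by
  obtain ⟨c, hc⟩ := exists_code_prim g hg
  exact ⟨Encodable.encode c, fun x => by rw [WEnum, Denumerable.ofNat_encode, hc]⟩

theorem turingLE_iff (B X : ℕ → Bool) : TuringLE B X ↔ Del X fun n => B n = true := by
  constructor
  · rintro ⟨e, he⟩
    constructor
    · refine (sig_oc.comp (g := fun n : ℕ => (e, n, 1)) (by fun_prop)).of_eq fun n => ?_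
      simp only [he]
      cases B n <;> simp [natOfBool]
    · refine (sig_oc.comp (g := fun n : ℕ => (e, n, 0)) (by fun_prop)).of_eq fun n => ?_
      simp only [he]
      cases B n <;> simp [natOfBool]
  · rintro ⟨⟨f, hf, h1⟩, ⟨g, hg, h2⟩⟩
    obtain ⟨e, he⟩ := exists_code_prim_nat (fun q =>
      (q.1.unpair.2.unpair.2 = 1 ∧ f (q.1.unpair.2.unpair.1, dec (List Bool) q.1.unpair.1)) ∨
      (q.1.unpair.2.unpair.2 = 0 ∧ g (q.1.unpair.2.unpair.1, dec (List Bool) q.1.unpair.1)))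
      (by fun_prop)
    refine ⟨e, fun n m => ?_⟩
    rw [oc_iff]
    simp only [he, Nat.unpair_pair, dec_encode, exists_const, exists_or, exists_and_left, ← h1,
      ← h2]
    cases B n <;> simp [natOfBool]

theorem jump_iff (X : ℕ → Bool) (e : ℕ) : jump X e = true ↔
    ∃ m s, WEnum e (Nat.pair (Encodable.encode (strPrefix X s)) (Nat.pair e m)) := by
  simp [jump, oc_iff]

theorem sig_jump_self : Sig X fun e => jump X e = true := by
  have := Sig.exN (X := X) (p := fun (e : ℕ) m => OracleComputes e X e m)
    (sig_oc.comp (g := fun q : ℕ × ℕ => (q.1, q.1, q.2)) (by fun_prop))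
  exact this.of_eq fun q => by simp [jump]

theorem Sig.jump_red [Inhabited α] {p : α → Prop} (h : Sig X p) :
    ∃ e : α → ℕ, Primrec e ∧ ∀ a, p a ↔ jump X (e a) = true := by
  obtain ⟨f, hf, h⟩ := h
  obtain ⟨c, hc⟩ := exists_code_prim (fun q : ℕ × ℕ =>
    f (dec α q.1.unpair.1, dec (List Bool) q.1.unpair.2.unpair.1)) (by fun_prop)
  refine ⟨fun a => Encodable.encode (Nat.Partrec.Code.curry c (Encodable.encode a)), ?_, ?_⟩
  · exact Primrec.encode.comp (Nat.Partrec.Code.primrec₂_curry.comp (Primrec.const c)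
      Primrec.encode)
  · intro a
    rw [jump_iff, h]
    simp [WEnum, hc]

theorem Sig.del_jump [Inhabited α] {p : α → Prop} (h : Sig X p) : Del (jump X) p := by
  obtain ⟨e, he, h⟩ := h.jump_red
  exact (Del.oracle.comp he).of_eq fun a => (h a).symm

theorem pr_replicate : Primrec fun u => strPrefix emptyOracle u :=
  Primrec.list_map Primrec.list_range (Primrec.const false).to₂

/-- An unrelativized Σ₁ predicate. -/
theorem Sig.empty {p : α → Prop} (h : Sig emptyOracle p) :
    ∃ f : α × ℕ → Prop, PrimrecPred f ∧ ∀ a, p a ↔ ∃ u, f (a, u) := by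
  obtain ⟨f, hf, h⟩ := h
  exact ⟨fun q => f (q.1, strPrefix emptyOracle q.2),
    hf.comp (Primrec.fst.pair (pr_replicate.comp Primrec.snd)), h⟩

theorem Sig.code [Inhabited α] {p : α → Prop} (h : Sig emptyOracle p) :
    ∃ e : ℕ, ∀ a : α, WEnum e (Encodable.encode a) ↔ p a := by
  obtain ⟨f, hf, h⟩ := h.empty
  obtain ⟨e, he⟩ := exists_code_prim_nat (fun q : ℕ × ℕ => f (dec α q.1, q.2)) (by fun_prop)
  exact ⟨e, fun a => by simp [he, h]⟩

theorem Sig.code2 {p : List Bool × ℕ → Prop} (h : Sig emptyOracle p) :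
    ∃ e : ℕ, ∀ τ a, WEnum e (Nat.pair (Encodable.encode τ) a) ↔ p (τ, a) := by
  obtain ⟨e, he⟩ := h.code
  exact ⟨e, fun τ a => he (τ, a)⟩

theorem Del.of_empty {p : α → Prop} (h : Del emptyOracle p) : Del X p :=
  h.trans (Del.of_primrec (by
    have : PrimrecPred fun _ : ℕ => (false = true) := by fun_prop
    exact this))

theorem Sig.of_empty {p : α → Prop} (h : Sig emptyOracle p) : Sig X p :=
  h.trans (Del.of_primrec (by
    have : PrimrecPred fun _ : ℕ => (false = true) := by fun_prop
    exact this))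

/-- Graphs of sequences defined by least-witness recursion. -/
theorem sig_rec {Q : ℕ × ℕ × ℕ → Prop} (hQ : Del X Q) (c : ℕ → ℕ)
    (h1 : ∀ n, Q (n, c n, c (n + 1))) (h2 : ∀ n, ∀ y < c (n + 1), ¬ Q (n, c n, y)) :
    Sig X fun q : ℕ × ℕ => c q.1 = q.2 := by
  have key : Sig X fun q : ℕ × ℕ => ∃ l : List ℕ, (l[0]? = some (c 0) ∧ l[q.1]? = some q.2) ∧
      ∀ i < q.1, Q (i, l.getD i 0, l.getD (i + 1) 0) ∧
        ∀ y < l.getD (i + 1) 0, ¬ Q (i, l.getD i 0, y) := by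
    apply Sig.ex
    apply Sig.and
    · apply Sig.of_primrec; fun_prop
    · apply Sig.ball _ (by fun_prop)
      apply Sig.and
      · exact hQ.1.comp (g := fun q : ((ℕ × ℕ) × List ℕ) × ℕ =>
          (q.2, q.1.2.getD q.2 0, q.1.2.getD (q.2 + 1) 0)) (by fun_prop)
      · apply Sig.ball _ (by fun_prop)
        exact hQ.2.comp (g := fun q : (((ℕ × ℕ) × List ℕ) × ℕ) × ℕ =>
          (q.1.2, q.1.1.2.getD q.1.2 0, q.2)) (by fun_prop)
  refine key.of_eq fun ⟨n, y⟩ => ?_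
  constructor
  · rintro ⟨l, ⟨h0, hn⟩, hl⟩
    have : ∀ i, i ≤ n → l.getD i 0 = c i := by
      intro i
      induction i with
      | zero => intro _; simp [List.getD_eq_getElem?_getD, h0]
      | succ i ih =>
        intro hi
        obtain ⟨ha, hb⟩ := hl i hi
        rw [ih (by omega)] at ha hb
        rcases lt_trichotomy (l.getD (i + 1) 0) (c (i + 1)) with hlt | heq | hgt
        · exact absurd ha (h2 i _ hlt)
        · exact heq
        · exact absurd (h1 i) (hb _ hgt)
    have := this n le_rfl
    simp only [List.getD_eq_getElem?_getD, hn] at this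
    simpa using this.symm
  · intro h
    simp only at h
    have hg : ∀ i, i ≤ n → ((List.range (n + 1)).map c)[i]? = some (c i) := by
      intro i hi
      rw [List.getElem?_map, List.getElem?_range (by omega)]; rfl
    refine ⟨(List.range (n + 1)).map c, ⟨hg 0 (by omega), by rw [hg n le_rfl, h]⟩, ?_⟩
    intro i hi
    simp only at hi
    simp only [List.getD_eq_getElem?_getD]
    rw [hg i (by omega), hg (i + 1) (by omega)]
    exact ⟨h1 i, h2 i⟩

theorem Del.graph {c : ℕ → ℕ} (hc : Sig X fun q : ℕ × ℕ => c q.1 = q.2) {p : ℕ → ℕ → Prop}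
    (hp : Del X fun q : ℕ × ℕ => p q.1 q.2) : Del X fun n => p n (c n) := by
  constructor
  · refine (Sig.exN (p := fun n y => c n = y ∧ p n y) (hc.and hp.1)).of_eq fun n => ?_
    simp
  · refine (Sig.exN (p := fun n y => c n = y ∧ ¬ p n y) (hc.and hp.2)).of_eq fun n => ?_
    simp

end reductions


open MeasureTheory ENNReal

/-! ### The uniform measure -/

theorem strPrefix_succ (X : ℕ → Bool) (n : ℕ) : strPrefix X (n + 1) = strPrefix X n ++ [X n] := by
  simp [strPrefix, List.range_succ]

/-- Value of a binary string. -/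
def val (σ : List Bool) : ℕ := σ.foldl (fun a b => 2 * a + natOfBool b) 0

theorem val_append (σ : List Bool) (b : Bool) : val (σ ++ [b]) = 2 * val σ + natOfBool b := by
  simp [val, List.foldl_append]

theorem val_lt (σ : List Bool) : val σ < 2 ^ σ.length := by
  induction σ using List.reverseRecOn with
  | nil => simp [val]
  | append_singleton l a ih =>
    rw [val_append, List.length_append, List.length_singleton, pow_succ]
    cases a <;> simp [natOfBool] <;> omega

theorem val_inj (σ τ : List Bool) (hl : σ.length = τ.length) (h : val σ = val τ) : σ = τ := by
  induction σ using List.reverseRecOn generalizing τ with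
  | nil => exact (List.length_eq_zero_iff.1 hl.symm).symm
  | append_singleton l a ih =>
    rcases List.eq_nil_or_concat τ with rfl | ⟨t, c, rfl⟩
    · simp at hl
    · rw [List.concat_eq_append] at *
      rw [val_append, val_append] at h
      have h1 : l.length = t.length := by simpa using hl
      have : val l = val t ∧ a = c := by
        cases a <;> cases c <;> simp [natOfBool] at h ⊢ <;> omega
      rw [ih t h1 this.1, this.2]

theorem floor_two (y : ℝ) : ⌊2 * y⌋ = 2 * ⌊y⌋ + ⌊2 * y⌋ % 2 := by
  have h1 : 2 * ⌊y⌋ ≤ ⌊2 * y⌋ := by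
    rw [Int.le_floor]; push_cast; linarith [Int.floor_le y]
  have h2 : ⌊2 * y⌋ < 2 * ⌊y⌋ + 2 := by
    rw [Int.floor_lt]; push_cast; linarith [Int.lt_floor_add_one y]
  omega

theorem val_binaryDigits (x : ℝ) (h0 : 0 ≤ x) (h1 : x < 1) (n : ℕ) :
    (val (strPrefix (binaryDigits x) n) : ℤ) = ⌊x * 2 ^ n⌋ := by
  induction n with
  | zero =>
    have : ⌊x⌋ = 0 := by rw [Int.floor_eq_iff]; simp [h0, h1]
    simp [strPrefix, val, this]
  | succ n ih =>
    rw [strPrefix_succ, val_append]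
    push_cast
    rw [ih, show x * 2 ^ (n + 1) = 2 * (x * 2 ^ n) by ring, floor_two (x * 2 ^ n)]
    congr 1
    rw [binaryDigits, show x * 2 ^ (n + 1) = 2 * (x * 2 ^ n) by ring]
    rcases Int.emod_two_eq_zero_or_one ⌊2 * (x * 2 ^ n)⌋ with h | h
    · simp [h, natOfBool]
    · simp [h, natOfBool]

theorem measurable_binaryDigits : Measurable binaryDigits := by
  rw [measurable_pi_iff]
  intro n
  have : MeasurableSet {x : ℝ | ⌊x * 2 ^ (n + 1)⌋ % 2 = 1} := by
    have h : Measurable fun x : ℝ => ⌊x * 2 ^ (n + 1)⌋ :=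
      Int.measurable_floor.comp (measurable_id.mul_const _)
    exact h (MeasurableSet.of_discrete (s := {z : ℤ | z % 2 = 1}))
  have h2 : (fun x => binaryDigits x n) = fun x : ℝ =>
      if x ∈ {x : ℝ | ⌊x * 2 ^ (n + 1)⌋ % 2 = 1} then true else false := by
    funext x
    simp [binaryDigits]
  rw [h2]
  exact Measurable.ite this measurable_const measurable_const

instance : IsProbabilityMeasure μCantor := by
  constructor
  rw [μCantor, Measure.map_apply measurable_binaryDigits MeasurableSet.univ]
  simp

theorem measurableSet_coord (n : ℕ) (b : Bool) : MeasurableSet {X : ℕ → Bool | X n = b} :=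
  by
  have h : Measurable fun X : ℕ → Bool => X n := measurable_pi_apply n
  have h2 := h (MeasurableSet.of_discrete (s := {b}))
  convert h2 using 1
  ext X; simp

theorem measurableSet_cylinder (σ : List Bool) : MeasurableSet (_root_.cylinder σ) := by
  have : _root_.cylinder σ = ⋂ i : Fin σ.length, {X | X i = σ.get i} := by
    ext X; simp [_root_.cylinder, IsPrefixOf]
  rw [this]
  exact MeasurableSet.iInter fun i => measurableSet_coord _ _

theorem mem_cyl (σ : List Bool) (X : ℕ → Bool) :
    X ∈ _root_.cylinder σ ↔ strPrefix X σ.length = σ := isPrefixOf_iff σ X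

theorem measure_cylinder (σ : List Bool) : μCantor.real (_root_.cylinder σ) = (2 ^ σ.length)⁻¹ := by
  have hp : (0 : ℝ) < 2 ^ σ.length := by positivity
  have hset : binaryDigits ⁻¹' (_root_.cylinder σ) ∩ Set.Ico (0 : ℝ) 1 =
      Set.Ico ((val σ : ℝ) / 2 ^ σ.length) ((val σ + 1 : ℝ) / 2 ^ σ.length) := by
    ext x
    have hv := val_lt σ
    have hv' : (val σ : ℝ) + 1 ≤ 2 ^ σ.length := by exact_mod_cast hv
    simp only [Set.mem_inter_iff, Set.mem_preimage, mem_cyl, Set.mem_Ico,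
      div_le_iff₀ hp, lt_div_iff₀ hp]
    constructor
    · rintro ⟨h, h0, h1⟩
      have := val_binaryDigits x h0 h1 σ.length
      rw [h, eq_comm, Int.floor_eq_iff] at this
      simpa using this
    · rintro ⟨h0, h1⟩
      have g0 : 0 ≤ x := by
        by_contra hx
        push Not at hx
        have : (0 : ℝ) ≤ val σ := by positivity
        nlinarith
      have g1 : x < 1 := by
        by_contra hx
        push Not at hx
        nlinarith
      refine ⟨?_, g0, g1⟩
      apply val_inj _ _ (by simp)
      have := val_binaryDigits x g0 g1 σ.length
      rw [eq_comm, Int.floor_eq_iff] at this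
      have e : ((val σ : ℤ)) = ⌊x * 2 ^ σ.length⌋ := by
        rw [eq_comm, Int.floor_eq_iff]; exact ⟨by simpa using h0, by simpa using h1⟩
      rw [← val_binaryDigits x g0 g1] at e
      exact_mod_cast e.symm
  rw [Measure.real, μCantor, Measure.map_apply measurable_binaryDigits (measurableSet_cylinder σ),
    Measure.restrict_apply (measurable_binaryDigits (measurableSet_cylinder σ)), hset,
    Real.volume_Ico, ENNReal.toReal_ofReal]
  · field_simp; ring
  · apply sub_nonneg.2; gcongr; linarith

/-- All strings of length `t`. -/
def allStr : ℕ → List (List Bool)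
  | 0 => [[]]
  | t + 1 => (allStr t).flatMap fun σ => [σ ++ [false], σ ++ [true]]

theorem mem_allStr (t : ℕ) (σ : List Bool) : σ ∈ allStr t ↔ σ.length = t := by
  induction t generalizing σ with
  | zero => simp [allStr]
  | succ t ih =>
    simp only [allStr, List.mem_flatMap, ih, List.mem_cons, List.not_mem_nil, or_false]
    constructor
    · rintro ⟨a, h, rfl | rfl⟩ <;> simp [h]
    · intro h
      rcases List.eq_nil_or_concat σ with rfl | ⟨l, c, rfl⟩
      · simp at h
      · refine ⟨l, by simpa using h, ?_⟩
        cases c <;> simp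

theorem nodup_allStr (t : ℕ) : (allStr t).Nodup := by
  induction t with
  | zero => simp [allStr]
  | succ t ih =>
    rw [allStr, List.nodup_flatMap]
    refine ⟨fun σ _ => by simp, ?_⟩
    refine ih.imp ?_
    intro a b hab
    simp only [Function.onFun, List.disjoint_left, List.mem_cons, List.not_mem_nil, or_false]
    rintro x (rfl | rfl) (h | h)
    · exact hab (List.append_inj_left' h rfl)
    · exact hab (List.append_inj_left' h rfl)
    · exact hab (List.append_inj_left' h rfl)
    · exact hab (List.append_inj_left' h rfl)

theorem pr_allStr0 : Primrec allStr := by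
  have h : Primrec fun t : ℕ => Nat.rec (motive := fun _ => List (List Bool)) [[]]
      (fun _ L => L.flatMap fun σ => [σ ++ [false], σ ++ [true]]) t := by
    refine Primrec.nat_rec₁ (f := fun _ (L : List (List Bool)) => L.flatMap fun σ => [σ ++ [false], σ ++ [true]]) _ ?_
    refine Primrec.list_flatMap Primrec.snd ?_
    show Primrec fun q : (ℕ × List (List Bool)) × List Bool => [q.2 ++ [false], q.2 ++ [true]]
    fun_prop
  refine h.of_eq fun t => ?_
  induction t with
  | zero => rfl
  | succ t ih => rw [allStr, ← ih]

open Classical in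
/-- Number of strings of length `t` satisfying `f`. -/
noncomputable def cnt (f : List Bool → Prop) (t : ℕ) : ℕ :=
  ((allStr t).filter fun σ => decide (f σ)).length

section
variable {α : Type} [Primcodable α]

@[fun_prop] theorem pr_allStr {f : α → ℕ} (hf : Primrec f) : Primrec fun a => allStr (f a) :=
  pr_allStr0.comp hf

theorem pr_cnt {f : α → List Bool → Prop} {g : α → ℕ}
    (hf : PrimrecPred fun q : α × List Bool => f q.1 q.2)
    (hg : Primrec g) : Primrec fun a => cnt (f a) (g a) := by
  classical
  have h : PrimrecRel (fun (σ : List Bool) (a : α) => f a σ) :=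
    PrimrecPred.comp (f := fun q : List Bool × α => (q.2, q.1)) hf (by fun_prop)
  have h2 := h.listFilter
  refine (Primrec.list_length.comp (h2.comp (pr_allStr hg) Primrec.id)).of_eq fun a => ?_
  simp only [cnt, id]
end

theorem mem_cyl_iff {σ : List Bool} {X : ℕ → Bool} {t : ℕ} (h : σ.length = t) :
    X ∈ _root_.cylinder σ ↔ strPrefix X t = σ := by rw [mem_cyl, h]

open Classical in
theorem set_eq_biUnion (f : List Bool → Prop) (t : ℕ) : {X | f (strPrefix X t)} =
    ⋃ σ ∈ (allStr t).toFinset.filter f, _root_.cylinder σ := by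
  ext X
  simp only [Set.mem_ofPred_eq, Finset.mem_filter, List.mem_toFinset, mem_allStr, Set.mem_iUnion,
    exists_prop]
  constructor
  · intro h
    exact ⟨_, ⟨strPrefix_length X t, h⟩, by rw [mem_cyl_iff (strPrefix_length X t)]⟩
  · rintro ⟨σ, ⟨hl, h⟩, hX⟩
    rw [mem_cyl_iff hl] at hX
    rwa [hX]

theorem measurableSet_pre (f : List Bool → Prop) (t : ℕ) :
    MeasurableSet {X | f (strPrefix X t)} := by
  classical
  rw [set_eq_biUnion]
  exact Finset.measurableSet_biUnion _ fun σ _ => measurableSet_cylinder σ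

theorem disjoint_cylinder {σ τ : List Bool} (hl : σ.length = τ.length) (h : σ ≠ τ) :
    Disjoint (_root_.cylinder σ) (_root_.cylinder τ) := by
  rw [Set.disjoint_left]
  intro X h1 h2
  rw [mem_cyl_iff hl] at h1
  rw [mem_cyl] at h2
  exact h (h1.symm.trans h2)

theorem measure_pre (f : List Bool → Prop) (t : ℕ) :
    μCantor.real {X | f (strPrefix X t)} = cnt f t / 2 ^ t := by
  classical
  rw [set_eq_biUnion, measureReal_biUnion_finset]
  · rw [Finset.sum_congr rfl (g := fun _ => ((2 : ℝ) ^ t)⁻¹)]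
    · rw [Finset.sum_const, nsmul_eq_mul, div_eq_mul_inv]
      congr 2
      rw [cnt, ← List.toFinset_card_of_nodup ((nodup_allStr t).filter _), List.toFinset_filter]
      simp
      
    · intro σ hσ
      simp only [Finset.mem_filter, List.mem_toFinset, mem_allStr] at hσ
      rw [measure_cylinder, hσ.1]
  · intro σ hσ τ hτ hne
    simp only [Finset.coe_filter, List.mem_toFinset, mem_allStr, Set.mem_ofPred_eq] at hσ hτ
    exact disjoint_cylinder (hσ.1.trans hτ.1.symm) hne
  · exact fun σ _ => measurableSet_cylinder σ

theorem measure_pre_half (f : List Bool → Prop) (t : ℕ) :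
    μCantor.real {X | f (strPrefix X t) ∧ X t = true} =
      μCantor.real {X | f (strPrefix X t)} / 2 := by
  classical
  have : {X : ℕ → Bool | f (strPrefix X t) ∧ X t = true} =
    ⋃ σ ∈ (allStr t).toFinset.filter f, _root_.cylinder (σ ++ [true]) := by
    ext X
    simp only [Set.mem_ofPred_eq, Finset.mem_filter, List.mem_toFinset, mem_allStr, Set.mem_iUnion,
      exists_prop]
    constructor
    · rintro ⟨h, h1⟩
      refine ⟨_, ⟨strPrefix_length X t, h⟩, ?_⟩
      rw [mem_cyl_iff (t := t + 1) (by simp), strPrefix_succ, h1]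
    · rintro ⟨σ, ⟨hl, h⟩, hX⟩
      rw [mem_cyl_iff (t := t + 1) (by simp [hl]), strPrefix_succ] at hX
      obtain ⟨h1, h2⟩ := List.append_inj hX (by simp [hl])
      exact ⟨by rwa [h1], by simpa using h2⟩
  rw [this, set_eq_biUnion, measureReal_biUnion_finset, measureReal_biUnion_finset,
    Finset.sum_div]
  · refine Finset.sum_congr rfl fun σ _ => ?_
    rw [measure_cylinder, measure_cylinder, List.length_append, List.length_singleton, pow_succ]
    field_simp
  · intro σ hσ τ hτ hne
    simp only [Finset.coe_filter, List.mem_toFinset, mem_allStr, Set.mem_ofPred_eq] at hσ hτ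
    exact disjoint_cylinder (hσ.1.trans hτ.1.symm) hne
  · exact fun σ _ => measurableSet_cylinder σ
  · intro σ hσ τ hτ hne
    simp only [Finset.coe_filter, List.mem_toFinset, mem_allStr, Set.mem_ofPred_eq] at hσ hτ
    exact disjoint_cylinder (by simp [hσ.1, hτ.1]) (by simpa using hne)
  · exact fun σ _ => measurableSet_cylinder _

/-- Sequences which are `true` on `B`. -/
def TT (B : Finset ℕ) : Set (ℕ → Bool) := {X | ∀ p ∈ B, X p = true}

theorem measurableSet_TT (B : Finset ℕ) : MeasurableSet (TT B) := by
  have : TT B = ⋂ p ∈ B, {X | X p = true} := by ext X; simp [TT]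
  rw [this]
  exact Finset.measurableSet_biInter _ fun p _ => measurableSet_coord _ _

theorem TT_union (B C : Finset ℕ) : TT (B ∪ C) = TT B ∩ TT C := by
  ext X
  simp only [TT, Finset.mem_union, Set.mem_ofPred_eq, Set.mem_inter_iff]
  constructor
  · intro h; exact ⟨fun p hp => h p (Or.inl hp), fun p hp => h p (Or.inr hp)⟩
  · rintro ⟨h1, h2⟩ p (hp | hp)
    · exact h1 p hp
    · exact h2 p hp

theorem measure_TT (B : Finset ℕ) : μCantor.real (TT B) = (2 ^ B.card)⁻¹ := by
  induction B using Finset.induction_on_max with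
  | empty => simp [TT]
  | insert p B hp ih =>
    have e : ∀ X : ℕ → Bool, (∀ q ∈ B, (strPrefix X p)[q]? = some true) ↔ X ∈ TT B := by
      intro X
      refine forall₂_congr fun q hq => ?_
      rw [strPrefix_get?, if_pos (hp q hq)]
      simp
    have h := measure_pre_half (fun σ => ∀ q ∈ B, σ[q]? = some true) p
    simp only [e] at h
    have e2 : {X | X ∈ TT B ∧ X p = true} = TT (insert p B) := by
      ext X; simp only [TT, Finset.mem_insert, forall_eq_or_imp, Set.mem_ofPred_eq]; tauto
    rw [e2, Set.ofPred_mem_eq, ih] at h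
    rw [h, Finset.card_insert_of_notMem (fun hB => lt_irrefl _ (hp p hB)), pow_succ]
    field_simp

theorem measure_TT_union {B C : Finset ℕ} (h : Disjoint B C) :
    μCantor.real (TT (B ∪ C)) = μCantor.real (TT B) * μCantor.real (TT C) := by
  rw [measure_TT, measure_TT, measure_TT, Finset.card_union_of_disjoint h, pow_add, mul_inv]


open MeasureTheory ENNReal

/-! ### A second moment estimate -/

/-- `f` is integrable with integral `a`. -/
def HI (f : (ℕ → Bool) → ℝ) (a : ℝ) : Prop := Integrable f μCantor ∧ ∫ x, f x ∂μCantor = a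

theorem HI.add {f g : (ℕ → Bool) → ℝ} {a b : ℝ} (hf : HI f a) (hg : HI g b) :
    HI (fun x => f x + g x) (a + b) :=
  ⟨hf.1.add hg.1, by rw [integral_add hf.1 hg.1, hf.2, hg.2]⟩

theorem HI.sub {f g : (ℕ → Bool) → ℝ} {a b : ℝ} (hf : HI f a) (hg : HI g b) :
    HI (fun x => f x - g x) (a - b) :=
  ⟨hf.1.sub hg.1, by rw [integral_sub hf.1 hg.1, hf.2, hg.2]⟩

theorem HI.cmul {f : (ℕ → Bool) → ℝ} {a : ℝ} (c : ℝ) (hf : HI f a) :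
    HI (fun x => c * f x) (c * a) :=
  ⟨hf.1.const_mul c, by rw [integral_const_mul, hf.2]⟩

theorem HI.sum {ι : Type*} {f : ι → (ℕ → Bool) → ℝ} {a : ι → ℝ} (F : Finset ι)
    (h : ∀ i ∈ F, HI (f i) (a i)) : HI (fun x => ∑ i ∈ F, f i x) (∑ i ∈ F, a i) :=
  ⟨integrable_finsetSum F fun i hi => (h i hi).1, by
    rw [integral_finsetSum F fun i hi => (h i hi).1]
    exact Finset.sum_congr rfl fun i hi => (h i hi).2⟩

theorem HI.ind {S : Set (ℕ → Bool)} (hS : MeasurableSet S) :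
    HI (S.indicator fun _ => 1) (μCantor.real S) :=
  ⟨(integrable_const (1 : ℝ)).indicator hS, by rw [integral_indicator_const _ hS]; simp⟩

theorem HI.mono {f g : (ℕ → Bool) → ℝ} {a b : ℝ} (hf : HI f a) (hg : HI g b)
    (h : ∀ x, f x ≤ g x) : a ≤ b := by
  rw [← hf.2, ← hg.2]; exact integral_mono hf.1 hg.1 h

theorem second_moment {ι : Type} [DecidableEq ι] (B0 : Finset ℕ) (B : ι → Finset ℕ)
    (F : Finset ι) (h0 : ∀ i ∈ F, Disjoint B0 (B i))
    (hd : ∀ i ∈ F, ∀ j ∈ F, i ≠ j → Disjoint (B i) (B j))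
    (P : Set (ℕ → Bool)) (hP : MeasurableSet P) (hPK : P ⊆ TT B0)
    (hle : ∀ i ∈ F, μCantor.real (P ∩ TT (B i)) ≤ μCantor.real P / 2 * μCantor.real (TT (B i))) :
    (∑ i ∈ F, μCantor.real (TT (B i))) * μCantor.real P ≤ 4 * μCantor.real (TT B0) := by
  set M := ∑ i ∈ F, μCantor.real (TT (B i)) with hM
  set w := fun i => μCantor.real (TT (B i)) with hw
  have hw0 : ∀ i, 0 ≤ w i := fun i => measureReal_nonneg
  have hM0 : 0 ≤ M := Finset.sum_nonneg fun i _ => hw0 i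
  rcases hM0.eq_or_lt with hz | hpos
  · rw [← hz, zero_mul]; positivity
  have hK := measurableSet_TT B0
  have hC := fun i => measurableSet_TT (B i)
  have L := ((HI.ind hP).cmul (M ^ 2)).sub
    ((HI.sum F fun i _ => HI.ind (hP.inter (hC i))).cmul M)
  have R := ((HI.ind hP).cmul (M ^ 2 / 4)).add
    (((HI.sum F fun i _ => HI.sum F fun j _ =>
      HI.ind ((hK.inter (hC i)).inter (hC j))).sub
      ((HI.sum F fun i _ => HI.ind (hK.inter (hC i))).cmul (2 * M))).add
      ((HI.ind hK).cmul (M ^ 2)))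
  have key := HI.mono L R (by
    intro x
    set N : ℝ := ∑ i ∈ F, (TT (B i)).indicator (fun _ => 1) x with hN
    have e1 : ∀ S : Set (ℕ → Bool), ∑ i ∈ F, (S ∩ TT (B i)).indicator (fun _ => (1 : ℝ)) x =
        S.indicator (fun _ => 1) x * N := by
      intro S
      rw [hN, Finset.mul_sum]
      refine Finset.sum_congr rfl fun i _ => ?_
      by_cases h1 : x ∈ S <;> by_cases h2 : x ∈ TT (B i) <;> simp [h1, h2]
    have e2 : ∑ i ∈ F, ∑ j ∈ F, ((TT B0 ∩ TT (B i)) ∩ TT (B j)).indicator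
        (fun _ => (1 : ℝ)) x = (TT B0).indicator (fun _ => 1) x * N ^ 2 := by
      rw [Finset.sum_congr rfl fun i _ => e1 _, ← Finset.sum_mul, e1]; ring
    rw [e1, e1, e2]
    by_cases hx : x ∈ P
    · simp only [Set.indicator_of_mem hx, Set.indicator_of_mem (hPK hx)]
      nlinarith [sq_nonneg (N - M / 2)]
    · simp only [Set.indicator_of_notMem hx]
      by_cases hx2 : x ∈ TT B0
      · simp only [Set.indicator_of_mem hx2]
        nlinarith [sq_nonneg (N - M)]
      · simp [Set.indicator_of_notMem hx2])
  set k := μCantor.real (TT B0) with hk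
  have hk0 : 0 ≤ k := measureReal_nonneg
  have a1 : ∑ i ∈ F, μCantor.real (P ∩ TT (B i)) ≤ μCantor.real P / 2 * M := by
    rw [hM, Finset.mul_sum]; exact Finset.sum_le_sum hle
  have a2 : ∑ i ∈ F, μCantor.real (TT B0 ∩ TT (B i)) = k * M := by
    rw [hM, Finset.mul_sum]
    refine Finset.sum_congr rfl fun i hi => ?_
    rw [← TT_union, measure_TT_union (h0 i hi)]
  have a3 : ∑ i ∈ F, ∑ j ∈ F, μCantor.real ((TT B0 ∩ TT (B i)) ∩ TT (B j)) ≤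
      k * M ^ 2 + k * M := by
    have : ∀ i ∈ F, ∑ j ∈ F, μCantor.real ((TT B0 ∩ TT (B i)) ∩ TT (B j)) ≤
        k * w i * M + k * w i := by
      intro i hi
      have : ∀ j ∈ F, μCantor.real ((TT B0 ∩ TT (B i)) ∩ TT (B j)) ≤
          k * w i * w j + if i = j then k * w i else 0 := by
        intro j hj
        by_cases hij : i = j
        · subst hij
          rw [if_pos rfl, Set.inter_assoc, Set.inter_self, ← TT_union, measure_TT_union (h0 i hi)]
          have := hw0 i
          have : 0 ≤ k * w i * w i := by positivity
          simp only [hw] at this ⊢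
          linarith
        · rw [if_neg hij, ← TT_union, ← TT_union, measure_TT_union, measure_TT_union (h0 i hi)]
          · simp [hw, hk]
          · rw [Finset.disjoint_union_left]
            exact ⟨h0 j hj, hd i hi j hj hij⟩
      refine (Finset.sum_le_sum this).trans ?_
      rw [Finset.sum_add_distrib, ← Finset.mul_sum, Finset.sum_ite_eq, if_pos hi]
    refine (Finset.sum_le_sum this).trans (le_of_eq ?_)
    rw [Finset.sum_add_distrib, ← Finset.sum_mul, ← Finset.mul_sum, hM]
    ring
  rw [a2] at key
  have hfin : M * (M * μCantor.real P) ≤ M * (4 * k) := by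
    nlinarith [mul_le_mul_of_nonneg_left a1 hM0]
  exact le_of_mul_le_mul_left hfin hpos


open MeasureTheory ENNReal

/-! ### Constraints -/

/-- String `σ` has been enumerated (stage `|σ|`) into the open set coded by `e, a`. -/
def bad (e a : ℕ) (σ : List Bool) : Prop :=
  ∃ i < σ.length + 1, ¬ (Nat.Partrec.Code.evaln σ.length (Denumerable.ofNat Nat.Partrec.Code e)
    (Nat.pair (Encodable.encode (σ.take i)) a) = none)

/-- The open set coded by `e, a`. -/
def GG (e a : ℕ) : Set (ℕ → Bool) := {X | ∃ s, bad e a (strPrefix X s)}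

/-- Constraints `(e, a, k)`: for `k = 0` avoid `GG e a`, otherwise enter it by level `k`. -/
def okc (c : ℕ × ℕ × ℕ) (σ : List Bool) : Prop :=
  (c.2.2 = 0 ∧ ¬ bad c.1 c.2.1 σ) ∨
    (c.2.2 ≠ 0 ∧ (σ.length < c.2.2 ∨ bad c.1 c.2.1 (σ.take c.2.2)))

def okL (L : List (ℕ × ℕ × ℕ)) (σ : List Bool) : Prop := ∀ c ∈ L, okc c σ

def PL (L : List (ℕ × ℕ × ℕ)) : Set (ℕ → Bool) := {X | ∀ t, okL L (strPrefix X t)}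

def Meas (L : List (ℕ × ℕ × ℕ)) (D : ℕ) : Prop := ((2 : ℝ) ^ D)⁻¹ ≤ μCantor.real (PL L)

theorem pp_bad0 : PrimrecPred fun q : ℕ × ℕ × List Bool => bad q.1 q.2.1 q.2.2 := by
  unfold bad
  apply pp_bex
  · fun_prop
  · fun_prop

section
variable {α : Type} [Primcodable α]

@[fun_prop] theorem pp_bad {e a : α → ℕ} {s : α → List Bool} (he : Primrec e) (ha : Primrec a)
    (hs : Primrec s) : PrimrecPred fun x => bad (e x) (a x) (s x) :=
  pp_bad0.comp (he.pair (ha.pair hs))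

@[fun_prop] theorem pp_okc {c : α → ℕ × ℕ × ℕ} {s : α → List Bool} (hc : Primrec c)
    (hs : Primrec s) : PrimrecPred fun x => okc (c x) (s x) := by
  unfold okc
  fun_prop

@[fun_prop] theorem pp_okL {L : α → List (ℕ × ℕ × ℕ)} {s : α → List Bool} (hc : Primrec L)
    (hs : Primrec s) : PrimrecPred fun x => okL (L x) (s x) := by
  unfold okL
  apply pp_allmem
  · fun_prop
  · fun_prop
end

theorem bad_mono (e a : ℕ) (X : ℕ → Bool) {s t : ℕ} (h : s ≤ t) (hb : bad e a (strPrefix X s)) :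
    bad e a (strPrefix X t) := by
  obtain ⟨i, hi, h2⟩ := hb
  simp only [strPrefix_length] at hi h2
  refine ⟨i, by simp; omega, ?_⟩
  rw [strPrefix_take _ _ _ (by omega)] at h2 ⊢
  simp only [strPrefix_length]
  obtain ⟨y, hy⟩ := Option.ne_none_iff_exists'.1 h2
  have := Nat.Partrec.Code.evaln_mono h hy
  rw [Option.mem_def] at this
  rw [this]; simp

theorem mem_GG_iff (e a : ℕ) (X : ℕ → Bool) :
    X ∈ GG e a ↔ ∃ s, WEnum e (Nat.pair (Encodable.encode (strPrefix X s)) a) := by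
  constructor
  · rintro ⟨s, i, hi, h⟩
    simp only [strPrefix_length] at hi
    rw [strPrefix_take _ _ _ (by omega)] at h
    obtain ⟨y, hy⟩ := Option.ne_none_iff_exists'.1 h
    exact ⟨i, Part.dom_iff_mem.2 ⟨y, Nat.Partrec.Code.evaln_sound hy⟩⟩
  · rintro ⟨s, h⟩
    obtain ⟨y, hy⟩ := Part.dom_iff_mem.1 h
    obtain ⟨k, hk⟩ := Nat.Partrec.Code.evaln_complete.1 hy
    refine ⟨max s k, s, by simp, ?_⟩
    rw [strPrefix_take _ _ _ (le_max_left _ _), strPrefix_length]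
    have := Nat.Partrec.Code.evaln_mono (le_max_right s k) hk
    rw [Option.mem_def] at this
    rw [this]; simp

theorem okc_anti (c : ℕ × ℕ × ℕ) (X : ℕ → Bool) {s t : ℕ} (h : s ≤ t)
    (hb : okc c (strPrefix X t)) : okc c (strPrefix X s) := by
  rcases hb with ⟨h0, hb⟩ | ⟨h0, hb⟩
  · exact Or.inl ⟨h0, fun h2 => hb (bad_mono _ _ X h h2)⟩
  · refine Or.inr ⟨h0, ?_⟩
    simp only [strPrefix_length] at hb ⊢
    by_cases hs : s < c.2.2
    · exact Or.inl hs
    · rcases hb with hb | hb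
      · omega
      · rw [strPrefix_take _ _ _ (by omega)] at hb ⊢
        exact Or.inr hb

theorem okL_anti (L : List (ℕ × ℕ × ℕ)) (X : ℕ → Bool) {s t : ℕ} (h : s ≤ t)
    (hb : okL L (strPrefix X t)) : okL L (strPrefix X s) :=
  fun c hc => okc_anti c X h (hb c hc)

theorem PL_nil : PL [] = Set.univ := by ext X; simp [PL, okL]

theorem PL_cons_zero (e a : ℕ) (L : List (ℕ × ℕ × ℕ)) : PL ((e, a, 0) :: L) = PL L \ GG e a := by
  ext X
  simp only [PL, okL, List.mem_cons, forall_eq_or_imp, Set.mem_ofPred_eq, Set.mem_sdiff, GG, okc,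
    forall_and, true_and, ne_eq, not_true, false_and, or_false, not_exists]
  tauto

theorem PL_cons_pos (e a k : ℕ) (hk : 0 < k) (L : List (ℕ × ℕ × ℕ)) :
    PL ((e, a, k) :: L) = PL L ∩ {X | bad e a (strPrefix X k)} := by
  ext X
  simp only [PL, okL, List.mem_cons, forall_eq_or_imp, Set.mem_ofPred_eq, Set.mem_inter_iff, okc,
    forall_and, hk.ne', false_and, ne_eq, not_false_iff, true_and, false_or, strPrefix_length]
  constructor
  · rintro ⟨h1, h2⟩
    refine ⟨h2, ?_⟩
    rcases h1 k with h | h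
    · omega
    · rwa [strPrefix_take _ _ _ le_rfl] at h
  · rintro ⟨h1, h2⟩
    refine ⟨fun t => ?_, h1⟩
    by_cases ht : t < k
    · exact Or.inl ht
    · right; rwa [strPrefix_take _ _ _ (by omega)]

theorem PL_cons_sub (c : ℕ × ℕ × ℕ) (L : List (ℕ × ℕ × ℕ)) : PL (c :: L) ⊆ PL L :=
  fun _ h t c' hc' => h t c' (List.mem_cons_of_mem _ hc')

theorem PL_eq_iInter (L : List (ℕ × ℕ × ℕ)) : PL L = ⋂ t, {X | okL L (strPrefix X t)} := by
  ext X; simp [PL]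

theorem measurableSet_PL (L : List (ℕ × ℕ × ℕ)) : MeasurableSet (PL L) := by
  rw [PL_eq_iInter]
  exact MeasurableSet.iInter fun t => measurableSet_pre _ t

theorem GG_eq_iUnion (e a : ℕ) : GG e a = ⋃ t, {X | bad e a (strPrefix X t)} := by
  ext X; simp [GG]

theorem measurableSet_GG (e a : ℕ) : MeasurableSet (GG e a) := by
  rw [GG_eq_iUnion]
  exact MeasurableSet.iUnion fun t => measurableSet_pre _ t

theorem tendsto_PL (L : List (ℕ × ℕ × ℕ)) :
    Filter.Tendsto (fun t => μCantor.real {X | okL L (strPrefix X t)}) Filter.atTop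
      (nhds (μCantor.real (PL L))) := by
  have h := tendsto_measure_iInter_atTop (μ := μCantor)
    (s := fun t => {X | okL L (strPrefix X t)})
    (fun t => (measurableSet_pre _ t).nullMeasurableSet)
    (fun s t hst X hX => okL_anti L X hst hX) ⟨0, measure_ne_top _ _⟩
  rw [← PL_eq_iInter] at h
  exact (ENNReal.tendsto_toReal (measure_ne_top _ _)).comp h

theorem tendsto_GG (Q : Set (ℕ → Bool)) (e a : ℕ) :
    Filter.Tendsto (fun t => μCantor.real (Q ∩ {X | bad e a (strPrefix X t)})) Filter.atTop
      (nhds (μCantor.real (Q ∩ GG e a))) := by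
  have h := tendsto_measure_iUnion_atTop (μ := μCantor)
    (s := fun t => Q ∩ {X | bad e a (strPrefix X t)})
    (fun s t hst X hX => ⟨hX.1, bad_mono e a X hst hX.2⟩)
  rw [← Set.inter_iUnion, ← GG_eq_iUnion] at h
  exact (ENNReal.tendsto_toReal (measure_ne_top _ _)).comp h

theorem not_meas_iff (L : List (ℕ × ℕ × ℕ)) (D : ℕ) :
    ¬ Meas L D ↔ ∃ t, cnt (okL L) t * 2 ^ D < 2 ^ t := by
  have key : ∀ t, (cnt (okL L) t * 2 ^ D < 2 ^ t) ↔
      μCantor.real {X | okL L (strPrefix X t)} < ((2 : ℝ) ^ D)⁻¹ := by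
    intro t
    rw [measure_pre (okL L), div_lt_iff₀ (by positivity), inv_mul_eq_div,
      lt_div_iff₀ (by positivity)]
    exact_mod_cast Iff.rfl
  simp only [key, Meas, not_le]
  constructor
  · intro h
    exact ((tendsto_PL L).eventually_lt_const h).exists
  · rintro ⟨t, ht⟩
    refine lt_of_le_of_lt (measureReal_mono ?_) ht
    intro X hX
    exact hX t

theorem del_meas : Del zeroJump fun q : List (ℕ × ℕ × ℕ) × ℕ => Meas q.1 q.2 := by
  have h : Sig emptyOracle fun q : List (ℕ × ℕ × ℕ) × ℕ => ¬ Meas q.1 q.2 := by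
    simp only [not_meas_iff]
    apply Sig.exN
    apply Sig.of_primrec
    have : Primrec fun q : (List (ℕ × ℕ × ℕ) × ℕ) × ℕ => cnt (okL q.1.1) q.2 := by
      apply pr_cnt (f := fun (q : (List (ℕ × ℕ × ℕ) × ℕ) × ℕ) σ => okL q.1.1 σ) <;> fun_prop
    fun_prop
  exact h.del_jump.not.of_eq fun q => by simp

/-! ### Extension steps -/

theorem step_enter (L : List (ℕ × ℕ × ℕ)) (D e a : ℕ)
    (h : ((2 : ℝ) ^ D)⁻¹ < μCantor.real (PL L ∩ GG e a)) : ∃ k, 0 < k ∧ Meas ((e, a, k) :: L) D := by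
  obtain ⟨k, hk, hk0⟩ := (((tendsto_GG (PL L) e a).eventually_const_lt h).and
    (Filter.eventually_gt_atTop 0)).exists
  refine ⟨k, hk0, ?_⟩
  rw [Meas, PL_cons_pos _ _ _ hk0]
  exact hk.le

theorem meas_split (L : List (ℕ × ℕ × ℕ)) (e a : ℕ) :
    μCantor.real (PL L ∩ GG e a) + μCantor.real (PL L \ GG e a) = μCantor.real (PL L) :=
  measureReal_inter_add_sdiff (measurableSet_GG e a)

theorem inv_pow_add (D j : ℕ) : ((2 : ℝ) ^ (D + j))⁻¹ = ((2 : ℝ) ^ D)⁻¹ / 2 ^ j := by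
  rw [pow_add, mul_inv, div_eq_mul_inv]

theorem step_decide (L : List (ℕ × ℕ × ℕ)) (D e a : ℕ) (h : Meas L D) :
    ∃ k, Meas ((e, a, k) :: L) (D + 2) := by
  by_cases h0 : Meas ((e, a, 0) :: L) (D + 2)
  · exact ⟨0, h0⟩
  · rw [Meas, PL_cons_zero, not_le, inv_pow_add] at h0
    have h1 := meas_split L e a
    rw [Meas] at h
    have hp : (0 : ℝ) < ((2 : ℝ) ^ D)⁻¹ := by positivity
    obtain ⟨k, _, hk⟩ := step_enter L (D + 2) e a (by rw [inv_pow_add]; linarith)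
    exact ⟨k, hk⟩

theorem step_avoid (L : List (ℕ × ℕ × ℕ)) (D e a : ℕ) (h : Meas L D)
    (hG : μCantor.real (GG e a) ≤ ((2 : ℝ) ^ (D + 2))⁻¹) : Meas ((e, a, 0) :: L) (D + 2) := by
  rw [Meas, PL_cons_zero]
  have h1 := meas_split L e a
  have h2 : μCantor.real (PL L ∩ GG e a) ≤ μCantor.real (GG e a) :=
    measureReal_mono Set.inter_subset_right
  rw [Meas] at h
  have hp : (0 : ℝ) < ((2 : ℝ) ^ D)⁻¹ := by positivity
  rw [inv_pow_add] at *
  linarith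

theorem step_cone (L : List (ℕ × ℕ × ℕ)) (D e : ℕ) (h : Meas L D) (A : ℕ → Bool)
    (hA : ¬ ComputableSet A) : ∃ m v k, (k = 0 ↔ v = natOfBool (A m)) ∧
      Meas ((e, Nat.pair m v, k) :: L) (D + 2) := by
  by_contra hcon
  push Not at hcon
  apply hA
  have hp : (0 : ℝ) < ((2 : ℝ) ^ D)⁻¹ := by positivity
  set δ := ((2 : ℝ) ^ D)⁻¹ with hδ
  rw [Meas, ← hδ] at h
  obtain ⟨s0, hs0⟩ := ((tendsto_PL L).eventually_lt_const
    (show μCantor.real (PL L) < μCantor.real (PL L) + δ / 4 by linarith)).exists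
  set P0 := {X | okL L (strPrefix X s0)} with hP0
  have hsub : PL L ⊆ P0 := fun X hX => hX s0
  have key : ∀ m v, v = natOfBool (A m) ↔
      ∃ t, s0 ≤ t ∧ 2 ^ t < cnt (fun σ => okL L (σ.take s0) ∧ bad e (Nat.pair m v) σ) t *
        2 ^ (D + 1) := by
    intro m v
    have k1 : ∀ t, s0 ≤ t → ((2 ^ t < cnt (fun σ => okL L (σ.take s0) ∧
        bad e (Nat.pair m v) σ) t * 2 ^ (D + 1)) ↔
        δ / 2 < μCantor.real (P0 ∩ {X | bad e (Nat.pair m v) (strPrefix X t)})) := by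
      intro t ht
      have e1 : P0 ∩ {X | bad e (Nat.pair m v) (strPrefix X t)} =
          {X | (fun σ => okL L (σ.take s0) ∧ bad e (Nat.pair m v) σ) (strPrefix X t)} := by
        ext X
        simp only [hP0, Set.mem_inter_iff, Set.mem_ofPred_eq]
        rw [strPrefix_take _ _ _ ht]
      rw [e1, measure_pre (fun σ => okL L (σ.take s0) ∧ bad e (Nat.pair m v) σ), lt_div_iff₀ (by positivity), hδ]
      rw [show ((2 : ℝ) ^ D)⁻¹ / 2 * 2 ^ t = 2 ^ t / 2 ^ (D + 1) by
        rw [pow_succ]; field_simp, div_lt_iff₀ (by positivity)]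
      exact_mod_cast Iff.rfl
    have hsplit := meas_split L e (Nat.pair m v)
    constructor
    · intro hv
      have h1 := hcon m v 0 (by simp [hv])
      rw [Meas, PL_cons_zero, not_le, inv_pow_add, ← hδ] at h1
      have h2 : δ / 2 < μCantor.real (P0 ∩ GG e (Nat.pair m v)) := by
        have : μCantor.real (PL L ∩ GG e (Nat.pair m v)) ≤
          μCantor.real (P0 ∩ GG e (Nat.pair m v)) :=
          measureReal_mono (Set.inter_subset_inter_left _ hsub)
        linarith
      obtain ⟨t, ht, ht0⟩ := (((tendsto_GG P0 e (Nat.pair m v)).eventually_const_lt h2).and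
        (Filter.eventually_ge_atTop s0)).exists
      exact ⟨t, ht0, (k1 t ht0).2 ht⟩
    · rintro ⟨t, ht0, ht⟩
      rw [k1 t ht0] at ht
      by_contra hv
      have h1 : μCantor.real (PL L ∩ GG e (Nat.pair m v)) ≤ δ / 4 := by
        by_contra hlt
        push Not at hlt
        obtain ⟨k, hk0, hk⟩ := step_enter L (D + 2) e (Nat.pair m v) (by
          rw [inv_pow_add, ← hδ]; linarith)
        exact hcon m v k (by simp [hk0.ne', hv]) hk
      have h2 : μCantor.real (P0 ∩ {X | bad e (Nat.pair m v) (strPrefix X t)}) ≤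
          μCantor.real (PL L ∩ GG e (Nat.pair m v)) + μCantor.real (P0 \ PL L) := by
        refine (measureReal_mono ?_).trans (measureReal_union_le _ _)
        intro X hX
        by_cases hXP : X ∈ PL L
        · exact Or.inl ⟨hXP, t, hX.2⟩
        · exact Or.inr ⟨hX.1, hXP⟩
      have h3 : μCantor.real (P0 \ PL L) = μCantor.real P0 - μCantor.real (PL L) :=
        measureReal_sdiff hsub (measurableSet_PL L)
      linarith
  have hsig : Sig emptyOracle fun q : ℕ × ℕ => q.2 = natOfBool (A q.1) := by
    simp only [key]
    apply Sig.exN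
    apply Sig.of_primrec
    have : Primrec fun q : (ℕ × ℕ) × ℕ => cnt (fun σ => okL L (σ.take s0) ∧
        bad e (Nat.pair q.1.1 q.1.2) σ) q.2 := by
      apply pr_cnt (f := fun (q : (ℕ × ℕ) × ℕ) σ => okL L (σ.take s0) ∧
        bad e (Nat.pair q.1.1 q.1.2) σ) <;> fun_prop
    fun_prop
  rw [ComputableSet, turingLE_iff]
  constructor
  · refine (hsig.comp (g := fun m : ℕ => (m, 1)) (by fun_prop)).of_eq fun m => ?_
    cases h : A m <;> simp [natOfBool, h]
  · refine (hsig.comp (g := fun m : ℕ => (m, 0)) (by fun_prop)).of_eq fun m => ?_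
    cases h : A m <;> simp [natOfBool, h]


open MeasureTheory ENNReal

/-! ### Kraft inequality and machine existence -/

theorem kraft (F : Finset (List Bool)) (h : ∀ σ ∈ F, ∀ τ ∈ F, σ <+: τ → σ = τ) :
    ∑ σ ∈ F, ((2 : ℝ) ^ σ.length)⁻¹ ≤ 1 := by
  have h1 : μCantor.real (⋃ σ ∈ F, _root_.cylinder σ) = ∑ σ ∈ F, ((2 : ℝ) ^ σ.length)⁻¹ := by
    rw [measureReal_biUnion_finset]
    · exact Finset.sum_congr rfl fun σ _ => measure_cylinder σ
    · intro σ hσ τ hτ hne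
      refine Set.disjoint_left.2 fun X h1 h2 => hne ?_
      rw [mem_cyl] at h1 h2
      rcases le_total σ.length τ.length with hl | hl
      · refine h σ hσ τ hτ ?_
        rw [List.prefix_iff_eq_take]
        conv_rhs => rw [← h2, strPrefix_take _ _ _ hl]
        exact h1.symm
      · refine (h τ hτ σ hσ ?_).symm
        rw [List.prefix_iff_eq_take]
        conv_rhs => rw [← h1, strPrefix_take _ _ _ hl]
        exact h2.symm
    · exact fun σ _ => measurableSet_cylinder σ
  rw [← h1]
  exact measureReal_le_one

theorem exists_machine (g : ℕ × ℕ → Prop) (out : ℕ × ℕ → ℕ) (hg : PrimrecPred g)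
    (hout : Primrec out) : ∃ e : ℕ, ∀ x y, y ∈ (Denumerable.ofNat Nat.Partrec.Code e).eval x ↔
      ∃ u, g (x, u) ∧ (∀ u' < u, ¬ g (x, u')) ∧ y = out (x, u) := by
  obtain ⟨hd, hg⟩ := hg
  have h1 : Partrec fun x : ℕ => Nat.rfind fun u => Part.some (decide (g (x, u))) :=
    Partrec.rfind (p := fun x u => Part.some (decide (g (x, u)))) hg.to_comp.partrec
  have h2 : Partrec fun x : ℕ =>
      (Nat.rfind fun u => Part.some (decide (g (x, u)))).map fun u => out (x, u) :=
    Partrec.map h1 hout.to_comp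
  obtain ⟨c, hc⟩ := Nat.Partrec.Code.exists_code.1 (Partrec.nat_iff.1 h2)
  refine ⟨Encodable.encode c, fun x y => ?_⟩
  rw [Denumerable.ofNat_encode, hc]
  refine (Part.mem_map_iff _).trans ?_
  refine exists_congr fun u => ?_
  refine (and_congr Nat.mem_rfind Iff.rfl).trans ?_
  rw [and_assoc, eq_comm (a := out (x, u))]
  refine and_congr (by simp) (and_congr ?_ Iff.rfl)
  refine forall_congr' fun u' => forall_congr' fun hu => ?_
  simp

theorem kcpx_le {x e : ℕ} {σ : List Bool} (h1 : PrefixFreeMachine e)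
    (h2 : x ∈ (Denumerable.ofNat Nat.Partrec.Code e).eval (Encodable.encode σ)) :
    Kcpx x ≤ σ.length + 2 * e + 2 := Nat.sInf_le ⟨e, σ, h1, h2, rfl⟩

theorem kcpx_attained (x : ℕ) : ∃ e, ∃ σ : List Bool, PrefixFreeMachine e ∧
    x ∈ (Denumerable.ofNat Nat.Partrec.Code e).eval (Encodable.encode σ) ∧
    Kcpx x = σ.length + 2 * e + 2 := by
  apply Nat.sInf_mem (s := {k | ∃ e, ∃ σ : List Bool, PrefixFreeMachine e ∧
    x ∈ (Denumerable.ofNat Nat.Partrec.Code e).eval (Encodable.encode σ) ∧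
    k = σ.length + 2 * e + 2})
  obtain ⟨e, he⟩ := exists_machine (fun q => q.1 = Encodable.encode ([] : List Bool))
    (fun _ => x) (by fun_prop) (by fun_prop)
  refine ⟨_, e, [], ?_, ?_, rfl⟩
  · have : ∀ σ ∈ machineDom e, σ = [] := by
      intro σ hσ
      obtain ⟨y, hy⟩ := Part.dom_iff_mem.1 hσ
      obtain ⟨u, hu, -⟩ := (he _ _).1 hy
      exact Encodable.encode_injective hu
    intro σ hσ τ hτ _
    rw [this σ hσ, this τ hτ]
  · exact (he _ _).2 ⟨0, rfl, by simp, rfl⟩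

theorem val_prefix {σ τ : List Bool} (h : σ <+: τ) :
    (val σ : ℝ) / 2 ^ σ.length ≤ val τ / 2 ^ τ.length ∧
      (val τ + 1 : ℝ) / 2 ^ τ.length ≤ (val σ + 1) / 2 ^ σ.length := by
  obtain ⟨ρ, rfl⟩ := h
  induction ρ using List.reverseRecOn with
  | nil => simp
  | append_singleton l a ih =>
    rw [← List.append_assoc, val_append]
    have h1 : (val (σ ++ l) : ℝ) / 2 ^ (σ ++ l).length ≤
        ((2 * val (σ ++ l) + natOfBool a : ℕ) : ℝ) / 2 ^ (σ ++ l ++ [a]).length := by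
      rw [List.length_append (bs := [a]), List.length_singleton, pow_succ,
        div_le_div_iff₀ (by positivity) (by positivity)]
      have : (0 : ℝ) ≤ natOfBool a := by positivity
      push_cast
      nlinarith [mul_nonneg this (show (0 : ℝ) ≤ 2 ^ (σ ++ l).length by positivity)]
    have h2 : (((2 * val (σ ++ l) + natOfBool a : ℕ) : ℝ) + 1) / 2 ^ (σ ++ l ++ [a]).length ≤
        (val (σ ++ l) + 1 : ℝ) / 2 ^ (σ ++ l).length := by
      rw [List.length_append (bs := [a]), List.length_singleton, pow_succ,
        div_le_div_iff₀ (by positivity) (by positivity)]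
      have : (natOfBool a : ℝ) ≤ 1 := by cases a <;> simp [natOfBool]
      push_cast
      nlinarith [mul_le_mul_of_nonneg_right this (show (0 : ℝ) ≤ 2 ^ (σ ++ l).length by positivity)]
    exact ⟨ih.1.trans h1, h2.trans ih.2⟩

theorem exists_val (n v : ℕ) (h : v < 2 ^ n) : ∃ σ : List Bool, σ.length = n ∧ val σ = v := by
  induction n generalizing v with
  | zero => exact ⟨[], rfl, by simp [val] at *; omega⟩
  | succ n ih =>
    obtain ⟨σ, h1, h2⟩ := ih (v / 2) (by rw [pow_succ] at h; omega)
    refine ⟨σ ++ [decide (v % 2 = 1)], by simp [h1], ?_⟩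
    rw [val_append, h2]
    rcases Nat.mod_two_eq_zero_or_one v with hv | hv <;> simp [natOfBool, hv] <;> omega

@[fun_prop] theorem pr_val {α : Type} [Primcodable α] {f : α → List Bool} (hf : Primrec f) :
    Primrec fun a => val (f a) := by
  have h : Primrec val := by
    refine Primrec.list_foldl (h := fun _ (q : ℕ × Bool) => 2 * q.1 + natOfBool q.2)
      Primrec.id (Primrec.const 0) ?_
    show Primrec fun q : List Bool × ℕ × Bool => 2 * q.2.1 + natOfBool q.2.2
    fun_prop
  exact h.comp hf

/-- The Kraft–Chaitin theorem. -/
theorem kraft_chaitin (W : ℕ × ℕ → Prop) (hW : PrimrecPred W) (out len : ℕ → ℕ)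
    (hout : Primrec out) (hlen : Primrec len) (q : ℕ)
    (hsum : ∀ F : Finset ℕ, (∀ i ∈ F, ∃ u, W (i, u)) →
      ∑ i ∈ F, ((2 : ℝ) ^ len i)⁻¹ ≤ 2 ^ q) :
    ∃ c, ∀ i, (∃ u, W (i, u)) → Kcpx (out i) ≤ len i + c := by
  classical
  set act : ℕ → Prop := fun j => W (j.unpair.1, j.unpair.2) ∧
    ∀ u < j.unpair.2, ¬ W (j.unpair.1, u) with hact
  have pact : PrimrecPred act := by
    refine pp_and (by fun_prop) ?_
    apply pp_ball <;> fun_prop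
  set ell : ℕ → ℕ := fun j => len j.unpair.1 + q + 1 with hell
  have pell : Primrec ell := by fun_prop
  let step : ℕ → ℕ × ℕ → ℕ × ℕ := fun j z =>
    if act j then (z.1 * 2 ^ ell j + 2 ^ z.2, z.2 + ell j) else z
  let st : ℕ → ℕ × ℕ := fun j => Nat.rec (motive := fun _ => ℕ × ℕ) (0, 0) step j
  have pst : Primrec st := by
    refine Primrec.nat_rec₁ (f := step) _ ?_
    show Primrec fun z : ℕ × ℕ × ℕ =>
      if act z.1 then (z.2.1 * 2 ^ ell z.1 + 2 ^ z.2.2, z.2.2 + ell z.1) else z.2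
    fun_prop
  let p : ℕ → ℝ := fun j => (st j).1 / 2 ^ (st j).2
  have p0 : p 0 = 0 := by simp [p, st]
  have psucc : ∀ j, p (j + 1) = p j + if act j then ((2 : ℝ) ^ ell j)⁻¹ else 0 := by
    intro j
    have e : st (j + 1) = step j (st j) := rfl
    simp only [p, e, step]
    split_ifs with h
    · generalize ell j = l
      push_cast
      rw [pow_add]
      field_simp
    · simp
  have pmono : Monotone p := by
    apply monotone_nat_of_le_succ
    intro j
    rw [psucc]
    split_ifs
    · have : (0 : ℝ) ≤ ((2 : ℝ) ^ ell j)⁻¹ := by positivity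
      linarith
    · simp
  have psum : ∀ j, p j = ∑ j' ∈ (Finset.range j).filter act, ((2 : ℝ) ^ ell j')⁻¹ := by
    intro j
    rw [Finset.sum_filter]
    induction j with
    | zero => simp [p0]
    | succ j ih => rw [psucc, ih, Finset.sum_range_succ]
  have phalf : ∀ j, p j ≤ 1 / 2 := by
    intro j
    rw [psum]
    have hinj : Set.InjOn (fun j : ℕ => j.unpair.1) ((Finset.range j).filter act) := by
      intro a ha b hb hab
      simp only [Finset.coe_filter, Set.mem_ofPred_eq, hact] at ha hb
      simp only at hab
      have : a.unpair.2 = b.unpair.2 := by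
        rcases lt_trichotomy a.unpair.2 b.unpair.2 with h | h | h
        · exact absurd (hab ▸ ha.2.1) (hb.2.2 _ h)
        · exact h
        · exact absurd (hab ▸ hb.2.1) (ha.2.2 _ h)
      rw [← Nat.pair_unpair a, ← Nat.pair_unpair b, hab, this]
    have h1 := hsum (((Finset.range j).filter act).image fun j : ℕ => j.unpair.1) (by
      intro i hi
      simp only [Finset.mem_image, Finset.mem_filter] at hi
      obtain ⟨a, ⟨-, ha⟩, rfl⟩ := hi
      exact ⟨_, ha.1⟩)
    rw [Finset.sum_image hinj] at h1
    have e : ∀ j', ((2 : ℝ) ^ ell j')⁻¹ = ((2 : ℝ) ^ len j'.unpair.1)⁻¹ * (2 ^ (q + 1))⁻¹ := by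
      intro j'
      simp only [hell]
      rw [add_assoc, pow_add, mul_inv]
    simp only [e]
    rw [← Finset.sum_mul]
    refine (mul_le_mul_of_nonneg_right h1 (by positivity)).trans ?_
    rw [pow_succ]
    apply le_of_eq
    field_simp
  let qq : ℕ → ℕ := fun j => (st j).1 * 2 ^ (ell j + 1) / 2 ^ (st j).2 + 1
  have pqq : Primrec qq := by fun_prop
  have hq1 : ∀ j, p j < qq j / 2 ^ (ell j + 1) := by
    intro j
    rw [lt_div_iff₀ (by positivity)]
    have := Nat.lt_div_mul_add (a := (st j).1 * 2 ^ (ell j + 1)) (b := 2 ^ (st j).2)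
      (by positivity)
    have h2 : (st j).1 * 2 ^ (ell j + 1) < qq j * 2 ^ (st j).2 := by
      simp only [qq, add_mul, one_mul]; exact this
    have h3 : ((st j).1 : ℝ) * 2 ^ (ell j + 1) < qq j * 2 ^ (st j).2 := by exact_mod_cast h2
    simp only [p]
    rw [div_mul_eq_mul_div, div_lt_iff₀ (by positivity)]
    exact h3
  have hq2 : ∀ j, act j → (qq j + 1 : ℝ) / 2 ^ (ell j + 1) ≤ p (j + 1) := by
    intro j hj
    rw [psucc, if_pos hj, div_le_iff₀ (by positivity)]
    have h2 := Nat.div_mul_le_self ((st j).1 * 2 ^ (ell j + 1)) (2 ^ (st j).2)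
    have h3 : (((st j).1 * 2 ^ (ell j + 1) / 2 ^ (st j).2 : ℕ) : ℝ) * 2 ^ (st j).2 ≤
        (st j).1 * 2 ^ (ell j + 1) := by exact_mod_cast h2
    rw [← le_div_iff₀ (by positivity)] at h3
    have h4 : p j * 2 ^ (ell j + 1) = (st j).1 * 2 ^ (ell j + 1) / 2 ^ (st j).2 := by
      simp only [p]; ring
    have h5 : ((2 : ℝ) ^ ell j)⁻¹ * 2 ^ (ell j + 1) = 2 := by
      generalize ell j = l
      rw [pow_succ]; field_simp
    rw [add_mul, h4, h5]
    have h6 : (qq j : ℝ) = (((st j).1 * 2 ^ (ell j + 1) / 2 ^ (st j).2 : ℕ) : ℝ) + 1 := by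
      simp only [qq]; push_cast; rfl
    rw [h6]
    linarith
  obtain ⟨e, he⟩ := exists_machine (fun z => act z.2 ∧
    (dec (List Bool) z.1).length = ell z.2 + 1 ∧ val (dec (List Bool) z.1) = qq z.2)
    (fun z => out z.2.unpair.1) (by fun_prop) (by fun_prop)
  have hdisj : ∀ σ τ : List Bool, σ <+: τ → ∀ j j', act j → act j' → σ.length = ell j + 1 →
      τ.length = ell j' + 1 → val σ = qq j → val τ = qq j' → j = j' := by
    intro σ τ hp j j' aj aj' l1 l2 v1 v2
    obtain ⟨g1, g2⟩ := val_prefix hp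
    rw [l1, l2, v1, v2] at g1 g2
    rcases lt_trichotomy j j' with h | h | h
    · have h1 := hq2 j aj
      have h2 := pmono (show j + 1 ≤ j' from h)
      have h3 := hq1 j'
      have h4 : (qq j' : ℝ) / 2 ^ (ell j' + 1) ≤ (qq j' + 1 : ℝ) / 2 ^ (ell j' + 1) := by
        gcongr; linarith
      linarith
    · exact h
    · have h1 := hq2 j' aj'
      have h2 := pmono (show j' + 1 ≤ j from h)
      have h3 := hq1 j
      have h4 : (qq j' : ℝ) / 2 ^ (ell j' + 1) ≤ (qq j' + 1 : ℝ) / 2 ^ (ell j' + 1) := by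
        gcongr; linarith
      linarith
  have hpf : PrefixFreeMachine e := by
    intro σ hσ τ hτ hp
    obtain ⟨y, hy⟩ := Part.dom_iff_mem.1 hσ
    obtain ⟨y', hy'⟩ := Part.dom_iff_mem.1 hτ
    obtain ⟨j, ⟨aj, l1, v1⟩, -⟩ := (he _ _).1 hy
    obtain ⟨j', ⟨aj', l2, v2⟩, -⟩ := (he _ _).1 hy'
    simp only [dec_encode] at l1 v1 l2 v2
    have := hdisj σ τ hp j j' aj aj' l1 l2 v1 v2
    subst this
    exact hp.eq_of_length (l1.trans l2.symm)
  refine ⟨q + 2 + 2 * e + 2, fun i hi => ?_⟩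
  obtain ⟨j, aj, hji⟩ : ∃ j, act j ∧ j.unpair.1 = i := by
    refine ⟨Nat.pair i (Nat.find hi), ⟨?_, ?_⟩, by simp⟩
    · simpa using Nat.find_spec hi
    · intro u hu
      simp only [Nat.unpair_pair] at hu ⊢
      exact Nat.find_min hi hu
  obtain ⟨σ, l1, v1⟩ := exists_val (ell j + 1) (qq j) (by
    have h0 := phalf (j + 1)
    have h1 := hq2 j aj
    have h1 := h1.trans h0
    rw [div_le_iff₀ (by positivity)] at h1
    have : (qq j : ℝ) < 2 ^ (ell j + 1) := by
      have : (0 : ℝ) < 2 ^ (ell j + 1) := by positivity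
      linarith
    exact_mod_cast this)
  have hmem : out i ∈ (Denumerable.ofNat Nat.Partrec.Code e).eval (Encodable.encode σ) := by
    rw [he]
    refine ⟨j, ⟨aj, by simpa using l1, by simpa using v1⟩, ?_, by rw [← hji]⟩
    rintro u hu ⟨au, lu, vu⟩
    simp only [dec_encode] at lu vu
    exact hu.ne (hdisj σ σ List.prefix_rfl u j au aj lu l1 vu v1)
  refine (kcpx_le hpf hmem).trans ?_
  rw [l1]
  simp only [hell, hji]
  omega


open MeasureTheory ENNReal

/-! ### An approximation to prefix-free complexity from above -/

def ee (s : ℕ) : ℕ := s.unpair.1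
def xcd (s : ℕ) : ℕ := s.unpair.2.unpair.1
def rr (s : ℕ) : ℕ := s.unpair.2.unpair.2

/-- The length of the string output by the computation coded by `s`. -/
def nn (s : ℕ) : ℕ := (dec (List Bool) ((Nat.Partrec.Code.evaln (rr s)
  (Denumerable.ofNat Nat.Partrec.Code (ee s)) (xcd s)).getD 0)).length

def kk (s : ℕ) : ℕ := (dec (List Bool) (xcd s)).length + (2 * ee s + 2)

/-- `x` has converged at stage `r`. -/
def conv (r e x : ℕ) : Prop :=
  ¬ Nat.Partrec.Code.evaln r (Denumerable.ofNat Nat.Partrec.Code e) x = none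

def Accp (s : ℕ) : Prop :=
  (Encodable.encode (dec (List Bool) (xcd s)) = xcd s ∧ conv (rr s) (ee s) (xcd s)) ∧
  (∀ r < rr s, ¬ conv r (ee s) (xcd s)) ∧
  ∀ x < rr s, ∀ y < rr s, ¬ ((Encodable.encode (dec (List Bool) x) = x ∧
    Encodable.encode (dec (List Bool) y) = y ∧ conv (rr s) (ee s) x ∧ conv (rr s) (ee s) y ∧
    dec (List Bool) x = (dec (List Bool) y).take (dec (List Bool) x).length) ∧
    ¬ dec (List Bool) x = dec (List Bool) y)

section
variable {α : Type} [Primcodable α]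
@[fun_prop] theorem pr_ee {f : α → ℕ} (hf : Primrec f) : Primrec fun a => ee (f a) := by
  unfold ee; fun_prop
@[fun_prop] theorem pr_xcd {f : α → ℕ} (hf : Primrec f) : Primrec fun a => xcd (f a) := by
  unfold xcd; fun_prop
@[fun_prop] theorem pr_rr {f : α → ℕ} (hf : Primrec f) : Primrec fun a => rr (f a) := by
  unfold rr; fun_prop
@[fun_prop] theorem pr_ogetD {f : α → Option ℕ} (hf : Primrec f) :
    Primrec fun a => (f a).getD 0 :=
  Primrec.option_getD.comp hf (Primrec.const 0)
@[fun_prop] theorem pr_nn {f : α → ℕ} (hf : Primrec f) : Primrec fun a => nn (f a) := by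
  unfold nn; fun_prop
@[fun_prop] theorem pr_kk {f : α → ℕ} (hf : Primrec f) : Primrec fun a => kk (f a) := by
  unfold kk; fun_prop
@[fun_prop] theorem pp_conv {f g h : α → ℕ} (hf : Primrec f) (hg : Primrec g) (hh : Primrec h) :
    PrimrecPred fun a => conv (f a) (g a) (h a) := by
  unfold conv; fun_prop
theorem pp_Acc0 : PrimrecPred Accp := by
  unfold Accp
  refine pp_and (by fun_prop) (pp_and ?_ ?_)
  · apply pp_ball <;> fun_prop
  · refine pp_ball (p := fun s x => ∀ y < rr s, ¬ ((Encodable.encode (dec (List Bool) x) = x ∧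
      Encodable.encode (dec (List Bool) y) = y ∧ conv (rr s) (ee s) x ∧ conv (rr s) (ee s) y ∧
      dec (List Bool) x = (dec (List Bool) y).take (dec (List Bool) x).length) ∧
      ¬ dec (List Bool) x = dec (List Bool) y)) ?_ (by fun_prop)
    apply pp_ball <;> fun_prop
@[fun_prop] theorem pp_Accp {f : α → ℕ} (hf : Primrec f) : PrimrecPred fun a => Accp (f a) :=
  pp_Acc0.comp hf
end

theorem conv_mono {r r' e x : ℕ} (h : r ≤ r') (hc : conv r e x) : conv r' e x := by
  obtain ⟨y, hy⟩ := Option.ne_none_iff_exists'.1 hc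
  have := Nat.Partrec.Code.evaln_mono h hy
  rw [Option.mem_def] at this
  rw [conv, this]; simp

theorem conv_bound {r e x : ℕ} (hc : conv r e x) : x < r := by
  obtain ⟨y, hy⟩ := Option.ne_none_iff_exists'.1 hc
  exact Nat.Partrec.Code.evaln_bound hy

theorem acc_aux {s s' : ℕ} (h : Accp s) (h' : Accp s') (he : ee s = ee s') (hr : rr s ≤ rr s') :
    (dec (List Bool) (xcd s) <+: dec (List Bool) (xcd s') ∨
      dec (List Bool) (xcd s') <+: dec (List Bool) (xcd s)) → s = s' := by
  intro hp
  have c1 : conv (rr s') (ee s') (xcd s) := he ▸ conv_mono hr h.1.2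
  have c2 := h'.1.2
  have hx : dec (List Bool) (xcd s) = dec (List Bool) (xcd s') := by
    rcases hp with hp | hp
    · have := h'.2.2 _ (conv_bound c1) _ (conv_bound c2)
      by_contra hne
      exact this ⟨⟨h.1.1, h'.1.1, c1, c2, List.prefix_iff_eq_take.1 hp⟩, hne⟩
    · have := h'.2.2 _ (conv_bound c2) _ (conv_bound c1)
      by_contra hne
      exact this ⟨⟨h'.1.1, h.1.1, c2, c1, List.prefix_iff_eq_take.1 hp⟩, fun h => hne h.symm⟩
  have hx' : xcd s = xcd s' := by rw [← h.1.1, ← h'.1.1, hx]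
  have hr' : rr s = rr s' := by
    refine le_antisymm hr ?_
    by_contra hlt
    push Not at hlt
    refine h'.2.1 _ hlt ?_
    rw [← he, ← hx']
    exact h.1.2
  simp only [ee, xcd, rr] at he hx' hr'
  rw [← Nat.pair_unpair s, ← Nat.pair_unpair s', he, ← Nat.pair_unpair s.unpair.2,
    ← Nat.pair_unpair s'.unpair.2, hx', hr']

theorem acc_prefix {s s' : ℕ} (h : Accp s) (h' : Accp s') (he : ee s = ee s')
    (hp : dec (List Bool) (xcd s) <+: dec (List Bool) (xcd s')) : s = s' := by
  rcases le_total (rr s) (rr s') with hr | hr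
  · exact acc_aux h h' he hr (Or.inl hp)
  · exact (acc_aux h' h he.symm hr (Or.inr hp)).symm

theorem sum_quarter (N : ℕ) : ∑ e ∈ Finset.range N, ((2 : ℝ) ^ (2 * e + 2))⁻¹ ≤ 1 := by
  have : ∑ e ∈ Finset.range N, ((2 : ℝ) ^ (2 * e + 2))⁻¹ ≤ 1 - ((2 : ℝ) ^ (2 * N))⁻¹ := by
    induction N with
    | zero => simp
    | succ N ih =>
      rw [Finset.sum_range_succ]
      have e1 : ((2 : ℝ) ^ (2 * N + 2))⁻¹ = ((2 : ℝ) ^ (2 * N))⁻¹ / 4 := by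
        rw [inv_pow_add]; norm_num
      rw [show 2 * (N + 1) = 2 * N + 2 by ring, e1]
      have : (0 : ℝ) < ((2 : ℝ) ^ (2 * N))⁻¹ := by positivity
      linarith
  have h2 : (0 : ℝ) < ((2 : ℝ) ^ (2 * N))⁻¹ := by positivity
  linarith

theorem acc_sum (F : Finset ℕ) (hF : ∀ s ∈ F, Accp s) : ∑ s ∈ F, ((2 : ℝ) ^ kk s)⁻¹ ≤ 1 := by
  classical
  obtain ⟨N, hN⟩ : ∃ N, ∀ s ∈ F, ee s < N := by
    refine ⟨F.sup ee + 1, fun s hs => Nat.lt_succ_of_le (Finset.le_sup (f := ee) hs)⟩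
  rw [← Finset.sum_fiberwise_of_maps_to (t := Finset.range N) (g := ee)
    (fun s hs => Finset.mem_range.2 (hN s hs))]
  refine (Finset.sum_le_sum fun e _ => ?_).trans (sum_quarter N)
  have h1 : ∀ s ∈ F.filter (fun s => ee s = e), ((2 : ℝ) ^ kk s)⁻¹ =
      ((2 : ℝ) ^ (dec (List Bool) (xcd s)).length)⁻¹ * ((2 : ℝ) ^ (2 * e + 2))⁻¹ := by
    intro s hs
    rw [Finset.mem_filter] at hs
    rw [kk, hs.2, pow_add, mul_inv]
  rw [Finset.sum_congr rfl h1, ← Finset.sum_mul]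
  have hinj : Set.InjOn (fun s => dec (List Bool) (xcd s)) (F.filter (fun s => ee s = e)) := by
    intro s hs s' hs' h
    simp only [Finset.coe_filter, Set.mem_ofPred_eq] at hs hs'
    exact acc_prefix (hF s hs.1) (hF s' hs'.1) (hs.2.trans hs'.2.symm) (by
      simp only at h; rw [h])
  have h2 := kraft ((F.filter (fun s => ee s = e)).image fun s => dec (List Bool) (xcd s)) (by
    intro σ hσ τ hτ hp
    simp only [Finset.mem_image, Finset.mem_filter] at hσ hτ
    obtain ⟨s, hs, rfl⟩ := hσ
    obtain ⟨s', hs', rfl⟩ := hτ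
    rw [acc_prefix (hF s hs.1) (hF s' hs'.1) (hs.2.trans hs'.2.symm) hp])
  rw [Finset.sum_image hinj] at h2
  exact mul_le_of_le_one_left (by positivity) h2

theorem acc_exists (n : ℕ) : ∃ s, Accp s ∧ nn s = n ∧ kk s = KofNat n := by
  classical
  obtain ⟨e, σ, hpf, hmem, hK⟩ := kcpx_attained (Encodable.encode (List.replicate n true))
  have hex : ∃ r, conv r e (Encodable.encode σ) := by
    obtain ⟨r, hr⟩ := Nat.Partrec.Code.evaln_complete.1 hmem
    rw [Option.mem_def] at hr
    exact ⟨r, by rw [conv, hr]; simp⟩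
  set r := Nat.find hex with hr
  have hc : conv r e (Encodable.encode σ) := Nat.find_spec hex
  refine ⟨Nat.pair e (Nat.pair (Encodable.encode σ) r), ⟨⟨?_, ?_⟩, ?_, ?_⟩, ?_, ?_⟩
  · simp [xcd]
  · simpa [rr, ee, xcd] using hc
  · intro r' h'
    simp only [rr, ee, xcd, Nat.unpair_pair] at h' ⊢
    exact Nat.find_min hex h'
  · rintro x - y - ⟨⟨hx, hy, cx, cy, hp⟩, hne⟩
    simp only [rr, ee, Nat.unpair_pair] at cx cy
    have hd : ∀ x, Encodable.encode (dec (List Bool) x) = x → conv r e x →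
        dec (List Bool) x ∈ machineDom e := by
      intro x hx cx
      obtain ⟨z, hz⟩ := Option.ne_none_iff_exists'.1 cx
      refine Part.dom_iff_mem.2 ⟨z, ?_⟩
      rw [hx]
      exact Nat.Partrec.Code.evaln_sound hz
    exact hne (hpf _ (hd x hx cx) _ (hd y hy cy) (List.prefix_iff_eq_take.2 hp))
  · obtain ⟨z, hz⟩ := Option.ne_none_iff_exists'.1 hc
    have : z = Encodable.encode (List.replicate n true) :=
      Part.mem_unique (Nat.Partrec.Code.evaln_sound hz) hmem
    simp [nn, rr, ee, xcd, hz, this]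
  · rw [KofNat, hK]
    simp [kk, xcd, ee]; ring


open MeasureTheory ENNReal

/-! ### The coding step -/

/-- The coding location number `i` in column `n`. -/
def CP (n b i : ℕ) : Finset ℕ :=
  (Finset.range (kk i.unpair.2 + b)).image fun j => Nat.pair n (Nat.pair i j)

theorem mem_TT_CP (n b i : ℕ) (X : ℕ → Bool) : X ∈ TT (CP n b i) ↔
    ∀ j < kk i.unpair.2 + b, X (Nat.pair n (Nat.pair i j)) = true := by
  simp [TT, CP]

theorem card_CP (n b i : ℕ) : (CP n b i).card = kk i.unpair.2 + b := by
  rw [CP, Finset.card_image_of_injective, Finset.card_range]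
  intro j j' h
  simpa using h

theorem disj_CP (n b : ℕ) {i i' : ℕ} (h : i ≠ i') : Disjoint (CP n b i) (CP n b i') := by
  rw [Finset.disjoint_left]
  intro p hp hp'
  simp only [CP, Finset.mem_image] at hp hp'
  obtain ⟨j, -, rfl⟩ := hp
  obtain ⟨j', -, hj'⟩ := hp'
  simp only [Nat.pair_eq_pair] at hj'
  exact h hj'.2.1.symm

theorem col_CP {n b i p : ℕ} (h : p ∈ CP n b i) : p.unpair.1 = n := by
  simp only [CP, Finset.mem_image] at h
  obtain ⟨j, -, rfl⟩ := h
  simp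

theorem disj_B0 {B0 : Finset ℕ} {n : ℕ} (h : ∀ p ∈ B0, p.unpair.1 < n) (b i : ℕ) :
    Disjoint B0 (CP n b i) := by
  rw [Finset.disjoint_left]
  intro p hp hp'
  have := h p hp
  rw [col_CP hp'] at this
  omega

/-- Approximation to `PL L ∩ TT (CP n b i)`. -/
def okT (L : List (ℕ × ℕ × ℕ)) (n b i : ℕ) (σ : List Bool) : Prop :=
  okL L σ ∧ ∀ j < kk i.unpair.2 + b, ¬ σ[Nat.pair n (Nat.pair i j)]? = some false

theorem okT_anti (L : List (ℕ × ℕ × ℕ)) (n b i : ℕ) (X : ℕ → Bool) {s t : ℕ} (h : s ≤ t)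
    (hb : okT L n b i (strPrefix X t)) : okT L n b i (strPrefix X s) := by
  refine ⟨okL_anti L X h hb.1, fun j hj hc => hb.2 j hj ?_⟩
  rw [strPrefix_get?] at hc ⊢
  split_ifs at hc with h1
  rw [if_pos (by omega)]
  exact hc

theorem okT_inter (L : List (ℕ × ℕ × ℕ)) (n b i : ℕ) :
    PL L ∩ TT (CP n b i) = ⋂ t, {X | okT L n b i (strPrefix X t)} := by
  ext X
  simp only [Set.mem_inter_iff, mem_TT_CP, Set.mem_iInter, Set.mem_ofPred_eq, okT, forall_and, PL]
  refine and_congr Iff.rfl ?_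
  constructor
  · intro h t j hj hc
    rw [strPrefix_get?] at hc
    split_ifs at hc
    rw [h j hj] at hc
    simp at hc
  · intro h j hj
    have := h (Nat.pair n (Nat.pair i j) + 1) j hj
    rw [strPrefix_get?, if_pos (by omega)] at this
    simpa using this

theorem okT_iff (L : List (ℕ × ℕ × ℕ)) (n b i E : ℕ) :
    (∃ u, cnt (okT L n b i) u * 2 ^ E < 2 ^ u) ↔
      μCantor.real (PL L ∩ TT (CP n b i)) < ((2 : ℝ) ^ E)⁻¹ := by
  have key : ∀ t, (cnt (okT L n b i) t * 2 ^ E < 2 ^ t) ↔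
      μCantor.real {X | okT L n b i (strPrefix X t)} < ((2 : ℝ) ^ E)⁻¹ := by
    intro t
    rw [measure_pre (okT L n b i), div_lt_iff₀ (by positivity), inv_mul_eq_div,
      lt_div_iff₀ (by positivity)]
    exact_mod_cast Iff.rfl
  simp only [key]
  constructor
  · rintro ⟨t, ht⟩
    refine lt_of_le_of_lt (measureReal_mono ?_) ht
    rw [okT_inter]
    exact Set.iInter_subset _ t
  · intro h
    have h1 := tendsto_measure_iInter_atTop (μ := μCantor)
      (s := fun t => {X | okT L n b i (strPrefix X t)})
      (fun t => (measurableSet_pre _ t).nullMeasurableSet)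
      (fun s t hst X hX => okT_anti L n b i X hst hX) ⟨0, measure_ne_top _ _⟩
    rw [← okT_inter] at h1
    have h2 := (ENNReal.tendsto_toReal (measure_ne_top μCantor _)).comp h1
    exact (h2.eventually_lt_const h).exists

theorem pp_okT (L : List (ℕ × ℕ × ℕ)) (n b : ℕ) :
    PrimrecPred fun q : (ℕ × ℕ) × List Bool => okT L n b q.1.1 q.2 := by
  unfold okT
  refine pp_and (by fun_prop) ?_
  apply pp_ball <;> fun_prop

def cid (A : ℕ → Bool) (s : ℕ) : ℕ := Nat.pair (Encodable.encode (strPrefix A (nn s))) s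

theorem cid_snd (A : ℕ → Bool) (s : ℕ) : (cid A s).unpair.2 = s := by simp [cid]

theorem coding_exists (A : ℕ → Bool) (hA : ¬ KTrivial A) (L : List (ℕ × ℕ × ℕ)) (B0 : Finset ℕ)
    (n b d1 t : ℕ) (hPL : PL L ⊆ TT B0) (hcol : ∀ p ∈ B0, p.unpair.1 < n)
    (hM : Meas L (d1 + B0.card)) :
    ∃ s, t ≤ s ∧ Accp s ∧ ((2 : ℝ) ^ (d1 + B0.card + 1 + b + kk s))⁻¹ ≤
      μCantor.real (PL L ∩ TT (CP n b (cid A s))) := by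
  by_contra hcon
  push Not at hcon
  apply hA
  have hW : PrimrecPred fun q : ℕ × ℕ => cnt (okT L n b q.1) q.2 *
      2 ^ (d1 + B0.card + 1 + b + kk q.1.unpair.2) < 2 ^ q.2 := by
    have := pr_cnt (f := fun (q : ℕ × ℕ) σ => okT L n b q.1 σ) (pp_okT L n b)
      (g := fun q => q.2) (by fun_prop)
    fun_prop
  obtain ⟨c, hc⟩ := kraft_chaitin _ hW (fun i => i.unpair.1) (fun i => kk i.unpair.2)
    (by fun_prop) (by fun_prop) (d1 + b + 2) (by
      intro F hF
      have hF' : ∀ i ∈ F, μCantor.real (PL L ∩ TT (CP n b i)) <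
          ((2 : ℝ) ^ (d1 + B0.card + 1 + b + kk i.unpair.2))⁻¹ :=
        fun i hi => (okT_iff L n b i _).1 (hF i hi)
      have h := second_moment B0 (CP n b) F (fun i _ => disj_B0 hcol b i)
        (fun i _ j _ hij => disj_CP n b hij) (PL L) (measurableSet_PL L) hPL (by
          intro i hi
          refine (hF' i hi).le.trans ?_
          rw [measure_TT, card_CP]
          rw [Meas] at hM
          calc ((2 : ℝ) ^ (d1 + B0.card + 1 + b + kk i.unpair.2))⁻¹
              = ((2 : ℝ) ^ (d1 + B0.card))⁻¹ / 2 * (2 ^ (kk i.unpair.2 + b))⁻¹ := by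
                rw [show d1 + B0.card + 1 + b + kk i.unpair.2 =
                  (d1 + B0.card) + (1 + (kk i.unpair.2 + b)) by ring, pow_add, pow_add 2 1]
                field_simp
            _ ≤ _ := by gcongr)
      simp only [measure_TT, card_CP] at h
      rw [Meas] at hM
      have h1 : ∀ i, ((2 : ℝ) ^ (kk i + b))⁻¹ = ((2 : ℝ) ^ kk i)⁻¹ * (2 ^ b)⁻¹ := by
        intro i; rw [pow_add, mul_inv]
      simp only [h1] at h
      rw [← Finset.sum_mul] at h
      set S := ∑ i ∈ F, ((2 : ℝ) ^ kk i.unpair.2)⁻¹ with hS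
      have hS0 : 0 ≤ S := Finset.sum_nonneg fun i _ => by positivity
      have h2 : S * (2 ^ b)⁻¹ * ((2 : ℝ) ^ (d1 + B0.card))⁻¹ ≤ 4 * (2 ^ B0.card)⁻¹ :=
        (mul_le_mul_of_nonneg_left hM (by positivity)).trans h
      have h3 : S = (S * (2 ^ b)⁻¹ * ((2 : ℝ) ^ (d1 + B0.card))⁻¹) *
          (2 ^ b * 2 ^ (d1 + B0.card)) := by field_simp
      rw [h3]
      refine (mul_le_mul_of_nonneg_right h2 (by positivity)).trans (le_of_eq ?_)
      rw [pow_add, pow_add, pow_add]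
      field_simp
      norm_num)
  simp only [okT_iff] at hc
  refine ⟨c + (Finset.range t).sup fun s => Kcpx (Encodable.encode (strPrefix A (nn s))),
    fun m => ?_⟩
  obtain ⟨s, hs, hn, hk⟩ := acc_exists m
  by_cases hst : t ≤ s
  · have h0 := hcon s hst hs
    have h1 := hc (cid A s)
    rw [cid_snd] at h1
    replace h1 := h1 h0
    simp only [cid, Nat.unpair_pair] at h1
    rw [hn, hk] at h1
    omega
  · have := Finset.le_sup (f := fun s => Kcpx (Encodable.encode (strPrefix A (nn s))))
      (Finset.mem_range.2 (show s < t by omega))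
    simp only [hn] at this
    omega

/-- The set of oracles which code `s` in column `n`. -/
def Gset (A : ℕ → Bool) (n b s : ℕ) : Set (ℕ → Bool) :=
  {X | X ∈ TT (CP n b (cid A s)) ∧ ∀ s' < s, Accp s' → X ∉ TT (CP n b (cid A s'))}

theorem coding_measure (A : ℕ → Bool) (hA : ¬ KTrivial A) (L : List (ℕ × ℕ × ℕ)) (B0 : Finset ℕ)
    (n b d1 t : ℕ) (hPL : PL L ⊆ TT B0) (hcol : ∀ p ∈ B0, p.unpair.1 < n)
    (hM : Meas L (d1 + B0.card)) (hb : d1 + 3 ≤ b) :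
    ∃ s, t ≤ s ∧ Accp s ∧ ((2 : ℝ) ^ (d1 + 2 + (B0.card + (kk s + b))))⁻¹ <
      μCantor.real (PL L ∩ Gset A n b s) := by
  classical
  obtain ⟨s, hts, hs, hm⟩ := coding_exists A hA L B0 n b d1 t hPL hcol hM
  refine ⟨s, hts, hs, ?_⟩
  set F := (Finset.range s).filter Accp with hF
  have h1 : μCantor.real (PL L ∩ TT (CP n b (cid A s))) ≤ μCantor.real (PL L ∩ Gset A n b s) +
      ∑ s' ∈ F, μCantor.real (TT (B0 ∪ (CP n b (cid A s) ∪ CP n b (cid A s')))) := by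
    refine (measureReal_mono (s₂ := (PL L ∩ Gset A n b s) ∪
      ⋃ s' ∈ F, TT (B0 ∪ (CP n b (cid A s) ∪ CP n b (cid A s')))) ?_).trans
      ((measureReal_union_le _ _).trans (add_le_add le_rfl (measureReal_biUnion_finset_le _ _)))
    rintro X ⟨hX1, hX2⟩
    by_cases hX : X ∈ Gset A n b s
    · exact Or.inl ⟨hX1, hX⟩
    · right
      simp only [Gset, Set.mem_ofPred_eq, not_and, not_forall, not_not] at hX
      obtain ⟨s', hs', ha, hX'⟩ := hX hX2
      simp only [Set.mem_iUnion]
      refine ⟨s', by simp [hF, hs', ha], ?_⟩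
      rw [TT_union, TT_union]
      exact ⟨hPL hX1, hX2, hX'⟩
  have h2 : ∑ s' ∈ F, μCantor.real (TT (B0 ∪ (CP n b (cid A s) ∪ CP n b (cid A s')))) ≤
      ((2 : ℝ) ^ B0.card)⁻¹ * ((2 ^ (kk s + b))⁻¹ * (2 ^ b)⁻¹) := by
    have e : ∀ s' ∈ F, μCantor.real (TT (B0 ∪ (CP n b (cid A s) ∪ CP n b (cid A s')))) =
        ((2 : ℝ) ^ kk s')⁻¹ * (((2 : ℝ) ^ B0.card)⁻¹ * ((2 ^ (kk s + b))⁻¹ * (2 ^ b)⁻¹)) := by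
      intro s' hs'
      have hne : cid A s ≠ cid A s' := by
        intro h
        have := congrArg (fun x => x.unpair.2) h
        simp only [cid_snd] at this
        simp only [hF, Finset.mem_filter, Finset.mem_range] at hs'
        omega
      rw [measure_TT_union, measure_TT_union (disj_CP n b hne), measure_TT, measure_TT, measure_TT,
        card_CP, card_CP, cid_snd, cid_snd, pow_add 2 (kk s') b, mul_inv]
      · ring
      · rw [Finset.disjoint_union_right]
        exact ⟨disj_B0 hcol b _, disj_B0 hcol b _⟩
    rw [Finset.sum_congr rfl e, ← Finset.sum_mul]
    refine mul_le_of_le_one_left (by positivity) (acc_sum F fun s' hs' => ?_)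
    simp only [hF, Finset.mem_filter] at hs'
    exact hs'.2
  set x := ((2 : ℝ) ^ (d1 + 3 + (B0.card + (kk s + b))))⁻¹ with hx
  have hx0 : 0 < x := by positivity
  have h3 : ((2 : ℝ) ^ B0.card)⁻¹ * ((2 ^ (kk s + b))⁻¹ * (2 ^ b)⁻¹) ≤ x := by
    rw [hx, pow_add 2 (d1 + 3), pow_add 2 B0.card, mul_inv, mul_inv, ← mul_assoc, mul_comm]
    gcongr
    norm_num
  have h4 : ((2 : ℝ) ^ (d1 + 2 + (B0.card + (kk s + b))))⁻¹ = 2 * x := by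
    rw [hx, show d1 + 3 + (B0.card + (kk s + b)) = d1 + 2 + (B0.card + (kk s + b)) + 1 by ring,
      inv_pow_add]
    ring
  have h5 : ((2 : ℝ) ^ (d1 + B0.card + 1 + b + kk s))⁻¹ = 4 * x := by
    rw [hx, show d1 + 3 + (B0.card + (kk s + b)) = d1 + B0.card + 1 + b + kk s + 2 by ring,
      inv_pow_add]
    ring
  rw [h5] at hm
  rw [h4]
  linarith

theorem exists_wc : ∃ wc : ℕ, ∀ (A : ℕ → Bool) (n b l s : ℕ), (∀ s' ≤ s, nn s' ≤ l) →
    GG wc (Encodable.encode (n, b, strPrefix A l, s)) = Gset A n b s := by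
  let ps : (ℕ × ℕ × List Bool × ℕ) → ℕ → ℕ → ℕ := fun q s' j =>
    Nat.pair q.1 (Nat.pair (Nat.pair (Encodable.encode (q.2.2.1.take (nn s'))) s') j)
  let p0 : List Bool × (ℕ × ℕ × List Bool × ℕ) → Prop := fun z =>
    (∀ j < kk z.2.2.2.2 + z.2.2.1, z.1[ps z.2 z.2.2.2.2 j]? = some true) ∧
    ∀ s' < z.2.2.2.2, ¬ Accp s' ∨ ∃ j < kk s' + z.2.2.1, z.1[ps z.2 s' j]? = some false
  have hp0 : PrimrecPred p0 := by
    refine pp_and ?_ ?_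
    · apply pp_ball <;> fun_prop
    · refine pp_ball (p := fun (z : List Bool × (ℕ × ℕ × List Bool × ℕ)) s' =>
        ¬ Accp s' ∨ ∃ j < kk s' + z.2.2.1, z.1[ps z.2 s' j]? = some false) ?_ (by fun_prop)
      refine pp_or (by fun_prop) ?_
      apply pp_bex <;> fun_prop
  have hs : Sig emptyOracle fun z : List Bool × ℕ => p0 (z.1, dec (ℕ × ℕ × List Bool × ℕ) z.2) :=
    Sig.of_primrec (hp0.comp (f := fun z : List Bool × ℕ => (z.1, dec (ℕ × ℕ × List Bool × ℕ) z.2)) (by fun_prop))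
  obtain ⟨wc, hwc⟩ := hs.code2
  refine ⟨wc, fun A n b l s hl => ?_⟩
  ext X
  rw [mem_GG_iff]
  simp only [hwc, dec_encode]
  have hps : ∀ s' ≤ s, ∀ j, ps (n, b, strPrefix A l, s) s' j =
      Nat.pair n (Nat.pair (cid A s') j) := by
    intro s' hs' j
    simp only [ps, cid]
    rw [strPrefix_take _ _ _ (hl s' hs')]
  constructor
  · rintro ⟨t, h1, h2⟩
    simp only at h1 h2
    refine ⟨?_, fun s' hs' ha => ?_⟩
    · rw [mem_TT_CP, cid_snd]
      intro j hj
      have := h1 j hj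
      rw [hps s le_rfl, strPrefix_get?] at this
      split_ifs at this
      simpa using this
    · rw [mem_TT_CP, cid_snd]
      intro hX
      rcases h2 s' hs' with h | ⟨j, hj, h⟩
      · exact h ha
      · rw [hps s' hs'.le, strPrefix_get?] at h
        split_ifs at h
        rw [hX j hj] at h
        simp at h
  · rintro ⟨h1, h2⟩
    have hev : ∀ᶠ t in Filter.atTop, ∀ s' ∈ Finset.range (s + 1), ∀ j ∈ Finset.range (kk s' + b),
        Nat.pair n (Nat.pair (cid A s') j) < t := by
      simp only [Filter.eventually_all_finset]
      intro s' _ j _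
      exact Filter.eventually_gt_atTop _
    obtain ⟨t, ht⟩ := hev.exists
    refine ⟨t, ?_, ?_⟩
    · intro j hj
      simp only at hj ⊢
      rw [hps s le_rfl, strPrefix_get?, if_pos (ht s (by simp) j (by simpa using hj))]
      rw [mem_TT_CP, cid_snd] at h1
      rw [h1 j hj]
    · intro s' hs'
      simp only at hs' ⊢
      by_cases ha : Accp s'
      · right
        have := h2 s' hs' ha
        rw [mem_TT_CP, cid_snd] at this
        push Not at this
        obtain ⟨j, hj, hX⟩ := this
        refine ⟨j, hj, ?_⟩
        rw [hps s' hs'.le, strPrefix_get?, if_pos (ht s' (by simp; omega) j (by simpa using hj))]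
        simpa using hX
      · exact Or.inl ha

theorem step_code (wc : ℕ) (hwc : ∀ (A : ℕ → Bool) (n b l s : ℕ), (∀ s' ≤ s, nn s' ≤ l) →
    GG wc (Encodable.encode (n, b, strPrefix A l, s)) = Gset A n b s)
    (A : ℕ → Bool) (hA : ¬ KTrivial A) (L : List (ℕ × ℕ × ℕ)) (B0 : Finset ℕ)
    (n b d1 t : ℕ) (hPL : PL L ⊆ TT B0) (hcol : ∀ p ∈ B0, p.unpair.1 < n)
    (hM : Meas L (d1 + B0.card)) (hb : d1 + 3 ≤ b) :
    ∃ s l k, t ≤ s ∧ Accp s ∧ 0 < k ∧ (∀ s' ≤ s, nn s' ≤ l) ∧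
      Meas ((wc, Encodable.encode (n, b, strPrefix A l, s), k) :: L)
        (d1 + 2 + (B0.card + (kk s + b))) := by
  obtain ⟨s, hts, hs, hm⟩ := coding_measure A hA L B0 n b d1 t hPL hcol hM hb
  obtain ⟨l, hl⟩ : ∃ l, ∀ s' ≤ s, nn s' ≤ l :=
    ⟨(Finset.range (s + 1)).sup nn, fun s' hs' => Finset.le_sup (f := nn) (by simp; omega)⟩
  rw [← hwc A n b l s hl] at hm
  obtain ⟨k, hk, hMk⟩ := step_enter L _ _ _ hm
  exact ⟨s, l, k, hts, hs, hk, hl, hMk⟩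

theorem code_sub (A : ℕ → Bool) (L L' : List (ℕ × ℕ × ℕ)) (B0 : Finset ℕ)
    (n b s : ℕ) (hPL : PL L ⊆ TT B0) (hcol : ∀ p ∈ B0, p.unpair.1 < n)
    (h' : PL L' ⊆ PL L) (hG : PL L' ⊆ Gset A n b s) :
    PL L' ⊆ TT (B0 ∪ CP n b (cid A s)) ∧ (B0 ∪ CP n b (cid A s)).card = B0.card + (kk s + b) ∧
      ∀ p ∈ B0 ∪ CP n b (cid A s), p.unpair.1 < n + 1 := by
  refine ⟨?_, ?_, ?_⟩
  · rw [TT_union]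
    exact fun X hX => ⟨hPL (h' hX), (hG hX).1⟩
  · rw [Finset.card_union_of_disjoint (disj_B0 hcol b _), card_CP, cid_snd]
  · intro p hp
    rcases Finset.mem_union.1 hp with h | h
    · have := hcol p h; omega
    · rw [col_CP h]; omega


open MeasureTheory ENNReal

/-! ### The construction -/

abbrev St := List (ℕ × ℕ × ℕ) × ℕ × ℕ × ℕ
abbrev Wt := ℕ × ℕ × ℕ × ℕ × ℕ × ℕ × List Bool

/-- One stage of the construction. -/
def Stg (u vv wc : ℕ) (A D : ℕ → Bool) (h : ℕ × ℕ → Prop) (n : ℕ)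
    (L : List (ℕ × ℕ × ℕ)) (d κ b : ℕ) (L' : List (ℕ × ℕ × ℕ)) (d' κ' s : ℕ)
    (k1 k2 k3 k4 m v : ℕ) (α : List Bool) : Prop :=
  Meas ((u, n, k1) :: L) (d + κ + 2) ∧
  Meas ((vv, Nat.pair n (d + κ + 4), k2) :: (u, n, k1) :: L) (d + κ + 4) ∧
  (k2 = 0 ∨ ¬ Meas ((vv, Nat.pair n (d + κ + 4), 0) :: (u, n, k1) :: L) (d + κ + 4)) ∧
  Meas ((n, Nat.pair m v, k3) :: (vv, Nat.pair n (d + κ + 4), k2) :: (u, n, k1) :: L)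
    (d + κ + 6) ∧
  (k3 = 0 ↔ v = natOfBool (D m)) ∧
  Meas L' (d' + κ') ∧
  strPrefix A α.length = α ∧
  (zeroJump n = true → ∃ x < s, h (n, x)) ∧
  (∀ s' < s + 1, nn s' ≤ α.length) ∧
  (0 < k4 ∧ Accp s ∧ d + 17 ≤ s ∧ d' = d + 8 ∧ κ' = κ + (kk s + b) ∧
   L' = (wc, Encodable.encode (n, b, α, s), k4) :: (n, Nat.pair m v, k3) ::
    (vv, Nat.pair n (d + κ + 4), k2) :: (u, n, k1) :: L)

theorem del_natOfBool {X D : ℕ → Bool} (hD : Del X fun n => D n = true) :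
    Del X fun q : ℕ × ℕ => q.2 = natOfBool (D q.1) := by
  have h1 := hD.comp (g := fun q : ℕ × ℕ => q.1) (by fun_prop)
  have h2 : Del X fun q : ℕ × ℕ => q.2 = 1 := Del.of_primrec (by fun_prop)
  have h3 : Del X fun q : ℕ × ℕ => q.2 = 0 := Del.of_primrec (by fun_prop)
  refine ((h1.and h2).or (h1.not.and h3)).of_eq fun q => ?_
  cases D q.1 <;> simp [natOfBool]

theorem del_prefix {X A : ℕ → Bool} (hA : Del X fun n => A n = true) :
    Del X fun α : List Bool => strPrefix A α.length = α := by
  have h1 := hA.comp (g := fun q : List Bool × ℕ => q.2) (by fun_prop)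
  have h2 : Del X fun q : List Bool × ℕ => q.1[q.2]? = some true := Del.of_primrec (by fun_prop)
  have := Del.ball (p := fun (α : List Bool) i => (A i = true ↔ α[i]? = some true))
    (g := fun α => α.length) (h1.iff h2) (by fun_prop)
  exact this.of_eq fun α => (strPrefix_eq_iff A α).symm

theorem del_stg (u vv wc : ℕ) (A D : ℕ → Bool) (h : ℕ × ℕ → Prop)
    (hA : Del zeroJump fun n => A n = true) (hD : Del zeroJump fun n => D n = true)
    (hh : PrimrecPred h) :
    Del zeroJump fun z : ℕ × St × St × Wt => Stg u vv wc A D h z.1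
      z.2.1.1 z.2.1.2.1 z.2.1.2.2.1 z.2.1.2.2.2
      z.2.2.1.1 z.2.2.1.2.1 z.2.2.1.2.2.1 z.2.2.1.2.2.2
      z.2.2.2.1 z.2.2.2.2.1 z.2.2.2.2.2.1 z.2.2.2.2.2.2.1 z.2.2.2.2.2.2.2.1
      z.2.2.2.2.2.2.2.2.1 z.2.2.2.2.2.2.2.2.2 := by
  unfold Stg
  refine Del.and ?_ <| Del.and ?_ <| Del.and (Del.or ?_ (Del.not ?_)) <| Del.and ?_ <|
    Del.and (Del.iff ?_ ?_) <| Del.and ?_ <| Del.and ?_ <| Del.and (Del.imp ?_ ?_) <|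
    Del.and ?_ ?_
  · exact del_meas.comp (g := fun z : ℕ × St × St × Wt => (_, _)) (by fun_prop)
  · exact del_meas.comp (g := fun z : ℕ × St × St × Wt => (_, _)) (by fun_prop)
  · exact Del.of_primrec (by fun_prop)
  · exact del_meas.comp (g := fun z : ℕ × St × St × Wt => (_, _)) (by fun_prop)
  · exact del_meas.comp (g := fun z : ℕ × St × St × Wt => (_, _)) (by fun_prop)
  · exact Del.of_primrec (by fun_prop)
  · exact (del_natOfBool hD).comp (g := fun z : ℕ × St × St × Wt => (_, _)) (by fun_prop)
  · exact del_meas.comp (g := fun z : ℕ × St × St × Wt => (_, _)) (by fun_prop)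
  · exact (del_prefix hA).comp (g := fun z : ℕ × St × St × Wt => z.2.2.2.2.2.2.2.2.2) (by fun_prop)
  · exact Del.oracle.comp (g := fun z : ℕ × St × St × Wt => z.1) (by fun_prop)
  · apply Del.of_primrec
    apply pp_bex <;> fun_prop
  · apply Del.of_primrec
    apply pp_ball <;> fun_prop
  · exact Del.of_primrec (by fun_prop)

/-- The invariant of the construction. -/
def Invt (n : ℕ) (L : List (ℕ × ℕ × ℕ)) (d κ b : ℕ) : Prop :=
  ∃ B : Finset ℕ, PL L ⊆ TT B ∧ B.card = κ ∧ (∀ p ∈ B, p.unpair.1 < n) ∧ Meas L (d + κ) ∧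
    d + 9 ≤ b

theorem invt_zero : Invt 0 [] 0 0 9 := by
  refine ⟨∅, ?_, by simp, by simp, ?_, by simp⟩
  · intro X _; simp [TT]
  · simp [Meas, PL_nil]

section
variable {u vv wc : ℕ} {A D : ℕ → Bool} {h : ℕ × ℕ → Prop}

theorem PL_sub4 (c1 c2 c3 c4 : ℕ × ℕ × ℕ) (L : List (ℕ × ℕ × ℕ)) :
    PL (c4 :: c3 :: c2 :: c1 :: L) ⊆ PL L :=
  (PL_cons_sub _ _).trans <| (PL_cons_sub _ _).trans <| (PL_cons_sub _ _).trans (PL_cons_sub _ _)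

theorem PL_pos_sub {e a k : ℕ} (hk : 0 < k) (L : List (ℕ × ℕ × ℕ)) :
    PL ((e, a, k) :: L) ⊆ GG e a := by
  rw [PL_cons_pos _ _ _ hk]
  exact fun X hX => ⟨k, hX.2⟩

theorem step_total (hwc : ∀ (A : ℕ → Bool) (n b l s : ℕ), (∀ s' ≤ s, nn s' ≤ l) →
    GG wc (Encodable.encode (n, b, strPrefix A l, s)) = Gset A n b s)
    (hA : ¬ KTrivial A) (hD : ¬ ComputableSet D)
    (hh : ∀ n, zeroJump n = true ↔ ∃ x, h (n, x)) {n : ℕ}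
    {L : List (ℕ × ℕ × ℕ)} {d κ b : ℕ} (hI : Invt n L d κ b) :
    ∃ L' d' κ' s k1 k2 k3 k4 m v α, Stg u vv wc A D h n L d κ b L' d' κ' s k1 k2 k3 k4 m v α := by
  obtain ⟨B, hPL, hB, hcol, hM, hb⟩ := hI
  obtain ⟨k1, h1⟩ := step_decide L (d + κ) u n hM
  obtain ⟨k2, h2, h2'⟩ : ∃ k2,
      Meas ((vv, Nat.pair n (d + κ + 4), k2) :: (u, n, k1) :: L) (d + κ + 4) ∧
      (k2 = 0 ∨ ¬ Meas ((vv, Nat.pair n (d + κ + 4), 0) :: (u, n, k1) :: L) (d + κ + 4)) := by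
    by_cases h0 : Meas ((vv, Nat.pair n (d + κ + 4), 0) :: (u, n, k1) :: L) (d + κ + 4)
    · exact ⟨0, h0, Or.inl rfl⟩
    · obtain ⟨k, hk⟩ := step_decide _ _ vv (Nat.pair n (d + κ + 4)) h1
      exact ⟨k, hk, Or.inr h0⟩
  obtain ⟨m, v, k3, h3', h3⟩ := step_cone _ _ n h2 D hD
  obtain ⟨t0, ht0⟩ : ∃ t0, zeroJump n = true → ∃ x < t0, h (n, x) := by
    by_cases hz : zeroJump n = true
    · obtain ⟨x, hx⟩ := (hh n).1 hz
      exact ⟨x + 1, fun _ => ⟨x, by omega, hx⟩⟩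
    · exact ⟨0, fun h => absurd h hz⟩
  have h3c : Meas ((n, Nat.pair m v, k3) :: (vv, Nat.pair n (d + κ + 4), k2) :: (u, n, k1) :: L)
      (d + 6 + B.card) := by
    rw [hB]; convert h3 using 1; ring
  obtain ⟨s, l, k4, hts, hs, hk4, hl, h4⟩ := step_code wc hwc A hA _ B n b (d + 6)
    (max (d + 17) t0) (((PL_cons_sub _ _).trans <| (PL_cons_sub _ _).trans
      (PL_cons_sub _ _)).trans hPL) hcol h3c (by omega)
  refine ⟨_, _, _, s, k1, k2, k3, k4, m, v, strPrefix A l, h1, h2, h2', h3, h3', ?_, ?_, ?_, ?_,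
    hk4, hs, (le_max_left _ _).trans hts, rfl, rfl, rfl⟩
  · rw [hB] at h4
    exact h4
  · simp
  · intro hz
    obtain ⟨x, hx, hx'⟩ := ht0 hz
    exact ⟨x, hx.trans_le ((le_max_right _ _).trans hts), hx'⟩
  · intro s' hs'
    rw [strPrefix_length]
    exact hl s' (by omega)

theorem stg_gset (hwc : ∀ (A : ℕ → Bool) (n b l s : ℕ), (∀ s' ≤ s, nn s' ≤ l) →
    GG wc (Encodable.encode (n, b, strPrefix A l, s)) = Gset A n b s) {n : ℕ}
    {L L' : List (ℕ × ℕ × ℕ)} {d κ b d' κ' s k1 k2 k3 k4 m v : ℕ} {α : List Bool}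
    (hS : Stg u vv wc A D h n L d κ b L' d' κ' s k1 k2 k3 k4 m v α) :
    PL L' ⊆ Gset A n b s := by
  obtain ⟨-, -, -, -, -, -, hα, -, hl, hk4, hs, hds, rfl, rfl, rfl⟩ := hS
  rw [← hwc A n b α.length s (fun s' hs' => hl s' (by omega)), hα]
  exact PL_pos_sub hk4 _

theorem step_inv (hwc : ∀ (A : ℕ → Bool) (n b l s : ℕ), (∀ s' ≤ s, nn s' ≤ l) →
    GG wc (Encodable.encode (n, b, strPrefix A l, s)) = Gset A n b s) {n : ℕ}
    {L L' : List (ℕ × ℕ × ℕ)} {d κ b d' κ' s k1 k2 k3 k4 m v : ℕ} {α : List Bool}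
    (hI : Invt n L d κ b)
    (hS : Stg u vv wc A D h n L d κ b L' d' κ' s k1 k2 k3 k4 m v α) :
    Invt (n + 1) L' d' κ' s := by
  have hG := stg_gset hwc hS
  obtain ⟨B, hPL, rfl, hcol, hM, hb⟩ := hI
  obtain ⟨-, -, -, -, -, hM', -, -, hl, hk4, hs, hds, rfl, rfl, rfl⟩ := hS
  obtain ⟨g1, g2, g3⟩ := code_sub A L _ B n b s hPL hcol (PL_sub4 _ _ _ _ L) hG
  exact ⟨_, g1, g2, g3, hM', by omega⟩
end

theorem isClosed_PL (L : List (ℕ × ℕ × ℕ)) : IsClosed (PL L) := by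
  classical
  rw [PL_eq_iInter]
  refine isClosed_iInter fun t => ?_
  rw [set_eq_biUnion]
  refine Set.Finite.isClosed_biUnion (Finset.finite_toSet _) fun σ _ => ?_
  have : _root_.cylinder σ = ⋂ i : Fin σ.length, {X : ℕ → Bool | X i = σ.get i} := by
    ext X; simp [_root_.cylinder, IsPrefixOf]
  rw [this]
  exact isClosed_iInter fun i => isClosed_eq (continuous_apply _) continuous_const

/-- Existence of the sequence of states. -/
theorem exists_seq {u vv wc : ℕ} {A D : ℕ → Bool} {h : ℕ × ℕ → Prop}
    (hA1 : Del zeroJump fun n => A n = true) (hD1 : Del zeroJump fun n => D n = true)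
    (hp : PrimrecPred h)
    (hwc : ∀ (A : ℕ → Bool) (n b l s : ℕ), (∀ s' ≤ s, nn s' ≤ l) →
      GG wc (Encodable.encode (n, b, strPrefix A l, s)) = Gset A n b s)
    (hA : ¬ KTrivial A) (hD : ¬ ComputableSet D)
    (hh : ∀ n, zeroJump n = true ↔ ∃ x, h (n, x)) :
    ∃ c : ℕ → ℕ, (Sig zeroJump fun q : ℕ × ℕ => c q.1 = q.2) ∧
      ∀ n, (∀ S S' : St × Wt, S = dec (St × Wt) (c n) → S' = dec (St × Wt) (c (n + 1)) →
        Invt n S.1.1 S.1.2.1 S.1.2.2.1 S.1.2.2.2 ∧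
        Stg u vv wc A D h n S.1.1 S.1.2.1 S.1.2.2.1 S.1.2.2.2
          S'.1.1 S'.1.2.1 S'.1.2.2.1 S'.1.2.2.2
          S'.2.1 S'.2.2.1 S'.2.2.2.1 S'.2.2.2.2.1 S'.2.2.2.2.2.1 S'.2.2.2.2.2.2.1
          S'.2.2.2.2.2.2.2) := by
  classical
  let Q : ℕ × ℕ × ℕ → Prop := fun q => ∀ S S' : St × Wt, S = dec (St × Wt) q.2.1 →
    S' = dec (St × Wt) q.2.2 → Stg u vv wc A D h q.1 S.1.1 S.1.2.1 S.1.2.2.1 S.1.2.2.2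
          S'.1.1 S'.1.2.1 S'.1.2.2.1 S'.1.2.2.2
          S'.2.1 S'.2.2.1 S'.2.2.2.1 S'.2.2.2.2.1 S'.2.2.2.2.2.1 S'.2.2.2.2.2.2.1
          S'.2.2.2.2.2.2.2
  have hQ : Del zeroJump Q := by
    refine ((del_stg u vv wc A D h hA1 hD1 hp).comp (g := fun q : ℕ × ℕ × ℕ =>
      (q.1, (dec (St × Wt) q.2.1).1, dec (St × Wt) q.2.2)) (by fun_prop)).of_eq fun q => ?_
    constructor
    · rintro hs S S' rfl rfl; exact hs
    · intro hs; exact hs _ _ rfl rfl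
  let c : ℕ → ℕ := fun n => Nat.rec (motive := fun _ => ℕ)
    (Encodable.encode (((([], 0, 0, 9) : St), ((0, 0, 0, 0, 0, 0, []) : Wt)) : St × Wt))
    (fun n x => sInf {y | Q (n, x, y)}) n
  have hex : ∀ n (S : St × Wt), S = dec (St × Wt) (c n) →
      Invt n S.1.1 S.1.2.1 S.1.2.2.1 S.1.2.2.2 → ∃ y, Q (n, c n, y) := by
    intro n S hS hI
    obtain ⟨L', d', κ', s, k1, k2, k3, k4, m, v, α, hstg⟩ :=
      step_total (u := u) (vv := vv) hwc hA hD hh hI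
    refine ⟨Encodable.encode ((((L', d', κ', s) : St), ((k1, k2, k3, k4, m, v, α) : Wt)) :
      St × Wt), ?_⟩
    intro S1 S2 hS1 hS2
    simp only [dec_encode] at hS2
    simp only at hS1
    rw [← hS] at hS1
    subst hS1 hS2
    exact hstg
  have hinv : ∀ n (S : St × Wt), S = dec (St × Wt) (c n) →
      Invt n S.1.1 S.1.2.1 S.1.2.2.1 S.1.2.2.2 := by
    intro n
    induction n with
    | zero =>
      intro S hS
      have : c 0 = Encodable.encode (((([], 0, 0, 9) : St), ((0, 0, 0, 0, 0, 0, []) : Wt)) :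
        St × Wt) := rfl
      rw [this, dec_encode] at hS
      subst hS
      exact invt_zero
    | succ n ih =>
      intro S hS
      have hq : Q (n, c n, c (n + 1)) := Nat.sInf_mem (hex n _ rfl (ih _ rfl))
      exact step_inv hwc (ih _ rfl) (hq _ S rfl hS)
  have hq : ∀ n, Q (n, c n, c (n + 1)) := fun n => Nat.sInf_mem (hex n _ rfl (hinv n _ rfl))
  refine ⟨c, sig_rec hQ c hq fun n y hy => Nat.notMem_of_lt_sInf hy, fun n S S' hS hS' => ?_⟩
  exact ⟨hinv n S hS, hq n S S' hS hS'⟩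


open MeasureTheory ENNReal

/-! ### Verification -/

theorem Del.substPrefix {X A : ℕ → Bool} {α : Type} [Primcodable α]
    (hA : Del X fun n => A n = true) {p : α → List Bool → Prop}
    (hp : Del X fun q : α × List Bool => p q.1 q.2) {g : α → ℕ} (hg : Primrec g) :
    Del X fun a => p a (strPrefix A (g a)) := by
  have key : ∀ p : α → List Bool → Prop, (Sig X fun q : α × List Bool => p q.1 q.2) →
      Sig X fun a => p a (strPrefix A (g a)) := by
    intro p hp
    have h1 := (del_prefix hA).1.comp (g := fun q : α × List Bool => q.2) (by fun_prop)
    have h2 : Sig X fun q : α × List Bool => q.2.length = g q.1 :=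
      Sig.of_primrec (by fun_prop)
    refine (Sig.ex (p := fun a (σ : List Bool) => (strPrefix A σ.length = σ ∧ σ.length = g a) ∧ p a σ)
      ((h1.and h2).and hp)).of_eq fun a => ?_
    constructor
    · rintro ⟨σ, ⟨h1, h2⟩, h3⟩
      rw [← h2, h1]; exact h3
    · intro h
      exact ⟨_, ⟨by simp, by simp⟩, h⟩
  exact ⟨key p hp.1, key (fun a σ => ¬ p a σ) hp.2⟩

theorem del_join_left (A R : ℕ → Bool) : Del (joinSet A R) fun n => A n = true := by
  refine (Del.oracle.comp (g := fun n : ℕ => 2 * n) (by fun_prop)).of_eq fun n => ?_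
  simp [joinSet]

theorem del_join_right (A R : ℕ → Bool) : Del (joinSet A R) fun n => R n = true := by
  refine (Del.oracle.comp (g := fun n : ℕ => 2 * n + 1) (by fun_prop)).of_eq fun n => ?_
  have h1 : (2 * n + 1) / 2 = n := by omega
  simp [joinSet, h1]

theorem del_join {X A R : ℕ → Bool} (hA : Del X fun n => A n = true)
    (hR : Del X fun n => R n = true) : Del X fun n => joinSet A R n = true := by
  have h1 := hA.comp (g := fun n : ℕ => n / 2) (by fun_prop)
  have h2 := hR.comp (g := fun n : ℕ => n / 2) (by fun_prop)
  have h3 : Del X fun n : ℕ => n - 2 * (n / 2) = 0 := Del.of_primrec (by fun_prop)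
  refine ((h3.and h1).or (h3.not.and h2)).of_eq fun n => ?_
  have : n - 2 * (n / 2) = n % 2 := by omega
  rw [this, joinSet]
  split_ifs with h <;> simp [h]

theorem exists_u : ∃ u, ∀ X e, X ∈ GG u e ↔ jump X e = true := by
  have h : Sig emptyOracle fun z : List Bool × ℕ =>
      ∃ m, WEnum z.2 (Nat.pair (Encodable.encode z.1) (Nat.pair z.2 m)) := by
    apply Sig.exN
    exact sig_wenum.comp (g := fun q : (List Bool × ℕ) × ℕ =>
      (q.1.2, Nat.pair (Encodable.encode q.1.1) (Nat.pair q.1.2 q.2))) (by fun_prop)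
  obtain ⟨u, hu⟩ := h.code2
  refine ⟨u, fun X e => ?_⟩
  rw [mem_GG_iff, jump_iff]
  simp only [hu]
  exact exists_comm

theorem exists_vv : ∃ vv, ∀ e N, GG vv (Nat.pair e N) = testLevel e emptyOracle N := by
  have h : Sig emptyOracle fun z : List Bool × ℕ =>
      ∃ m, OracleComputes z.2.unpair.1 emptyOracle
        (Nat.pair z.2.unpair.2 (Encodable.encode z.1)) m := by
    apply Sig.exN
    exact sig_oc.comp (g := fun q : (List Bool × ℕ) × ℕ =>
      (q.1.2.unpair.1, Nat.pair q.1.2.unpair.2 (Encodable.encode q.1.1), q.2)) (by fun_prop)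
  obtain ⟨vv, hvv⟩ := h.code2
  refine ⟨vv, fun e N => ?_⟩
  ext X
  rw [mem_GG_iff]
  simp only [hvv, Nat.unpair_pair, testLevel, openOf, Set.mem_iUnion, Set.mem_ofPred_eq,
    exists_prop]
  constructor
  · rintro ⟨s, hs⟩
    exact ⟨strPrefix X s, hs, by rw [mem_cyl]; simp⟩
  · rintro ⟨σ, hs, hX⟩
    rw [mem_cyl] at hX
    exact ⟨σ.length, by rw [hX]; exact hs⟩

theorem mem_cons_iff {e a k : ℕ} {L : List (ℕ × ℕ × ℕ)} {X : ℕ → Bool}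
    (h : X ∈ PL ((e, a, k) :: L)) : X ∈ GG e a ↔ k ≠ 0 := by
  constructor
  · rintro hX rfl
    rw [PL_cons_zero] at h
    exact h.2 hX
  · intro hk
    exact PL_pos_sub (Nat.pos_of_ne_zero hk) L h

/-- Theorem 7 of Day–Miller: cupping with a low random while
avoiding the cone above `D`. -/
theorem stmt12 (A : ℕ → Bool) (hA1 : TuringLE A zeroJump)
    (hA2 : ¬ TuringLE zeroJump A) (hA3 : ¬ KTrivial A)
    (D : ℕ → Bool) (hD1 : TuringLE D zeroJump) (hD2 : ¬ ComputableSet D) :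
    ∃ R : ℕ → Bool, MLRandom R ∧ ¬ TuringLE D R ∧
      TuringLE (jump R) zeroJump ∧ TuringEquiv (joinSet A R) zeroJump := by
  rw [turingLE_iff] at hA1 hD1
  obtain ⟨u, hu⟩ := exists_u
  obtain ⟨vv, hvv⟩ := exists_vv
  obtain ⟨wc, hwc⟩ := exists_wc
  obtain ⟨h, hp, hh⟩ := (sig_jump_self (X := emptyOracle)).empty
  obtain ⟨c, hc, hst⟩ := exists_seq (u := u) (vv := vv) hA1 hD1 hp hwc hA3 hD2 hh
  set S : ℕ → St × Wt := fun n => dec (St × Wt) (c n) with hS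
  have hst' := fun n => hst n (S n) (S (n + 1)) rfl rfl
  -- the sequence is decreasing
  have hdec : ∀ n, PL (S (n + 1)).1.1 ⊆ PL (S n).1.1 := by
    intro n
    obtain ⟨-, -, -, -, -, -, -, -, -, -, -, -, -, -, -, hL⟩ := hst' n
    rw [hL]
    exact PL_sub4 _ _ _ _ _
  have hne : ∀ n, (PL (S n).1.1).Nonempty := by
    intro n
    obtain ⟨⟨B, -, -, -, hM, -⟩, -⟩ := hst' n
    by_contra hemp
    rw [Set.not_nonempty_iff_eq_empty] at hemp
    rw [Meas, hemp, measureReal_empty] at hM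
    have : (0 : ℝ) < ((2 : ℝ) ^ ((S n).1.2.1 + (S n).1.2.2.1))⁻¹ := by positivity
    linarith
  obtain ⟨R, hR⟩ := IsCompact.nonempty_iInter_of_sequence_nonempty_isCompact_isClosed
    (fun n => PL (S n).1.1) hdec hne (isClosed_PL _).isCompact (fun n => isClosed_PL _)
  rw [Set.mem_iInter] at hR
  have hR4 : ∀ n, _ := fun n => by
    have h1 := hR (n + 1)
    obtain ⟨-, -, -, -, -, -, -, -, -, -, -, -, -, -, -, hL⟩ := hst' n
    simp only [hL] at h1
    exact h1
  have hR3 := fun n => PL_cons_sub _ _ (hR4 n)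
  have hR2 := fun n => PL_cons_sub _ _ (hR3 n)
  have hR1 := fun n => PL_cons_sub _ _ (hR2 n)
  -- lowness
  have hlow : Del zeroJump fun n => jump R n = true := by
    have g1 : Del zeroJump fun q : ℕ × ℕ => (dec (St × Wt) q.2).2.1 ≠ 0 :=
      Del.of_primrec (by fun_prop)
    have g2 := Del.graph hc (p := fun _ y => (dec (St × Wt) y).2.1 ≠ 0) g1
    refine (g2.comp (g := fun n : ℕ => n + 1) (by fun_prop)).of_eq fun n => ?_
    rw [← hu]
    exact (mem_cons_iff (hR1 n)).symm
  have hRz : Del zeroJump fun n => R n = true :=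
    (Sig.del_jump (Del.oracle (X := R)).1).trans hlow
  refine ⟨R, ?_, ?_, (turingLE_iff _ _).2 hlow, (turingLE_iff _ _).2 (del_join hA1 hRz), ?_⟩
  · -- randomness
    rintro G ⟨⟨e, he⟩, hG⟩
    refine ⟨(S e).1.2.1 + (S e).1.2.2.1 + 4, ?_⟩
    rw [he, ← hvv]
    intro hmem
    have hk := (mem_cons_iff (hR2 e)).1 hmem
    obtain ⟨-, h1, -, h2, -⟩ := hst' e
    rcases h2 with h2 | h2
    · exact hk h2
    · refine h2 (step_avoid _ _ vv _ h1 ?_)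
      rw [hvv, ← he, Measure.real]
      refine ENNReal.toReal_le_of_le_ofReal (by positivity) ((hG _).trans (le_of_eq ?_))
      rw [ENNReal.ofReal_inv_of_pos (by positivity), ENNReal.ofReal_pow (by norm_num),
        ENNReal.inv_pow]
      norm_num
  · -- cone avoidance
    rintro ⟨e, he⟩
    have h1 := mem_cons_iff (hR3 e)
    rw [mem_GG_iff, ← oc_iff, he] at h1
    obtain ⟨-, -, -, -, -, h3, -⟩ := hst' e
    rw [← h3] at h1
    tauto
  · -- coding
    rw [turingLE_iff]
    set J := joinSet A R with hJ
    let Q : ℕ × ℕ × ℕ → Prop := fun q => Accp q.2.2 ∧ R ∈ TT (CP q.1 q.2.1 (cid A q.2.2))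
    have hQ : Del J Q := by
      refine Del.and (Del.of_primrec (by fun_prop)) ?_
      have g0 : Del J fun z : (ℕ × ℕ × ℕ) × List Bool => ∀ j < kk z.1.2.2 + z.1.2.1,
          R (Nat.pair z.1.1 (Nat.pair (Nat.pair (Encodable.encode z.2) z.1.2.2) j)) = true := by
        refine Del.ball (p := fun (z : (ℕ × ℕ × ℕ) × List Bool) j =>
          R (Nat.pair z.1.1 (Nat.pair (Nat.pair (Encodable.encode z.2) z.1.2.2) j)) = true)
          ?_ (by fun_prop)
        exact (del_join_right A R).comp (g := fun w : ((ℕ × ℕ × ℕ) × List Bool) × ℕ =>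
          Nat.pair w.1.1.1 (Nat.pair (Nat.pair (Encodable.encode w.1.2) w.1.1.2.2) w.2))
          (by fun_prop)
      refine (Del.substPrefix (del_join_left A R) (p := fun (q : ℕ × ℕ × ℕ) σ =>
        ∀ j < kk q.2.2 + q.2.1,
          R (Nat.pair q.1 (Nat.pair (Nat.pair (Encodable.encode σ) q.2.2) j)) = true) g0
        (g := fun q => nn q.2.2) (by fun_prop)).of_eq fun q => ?_
      rw [mem_TT_CP, cid_snd]
      rfl
    have hGs : ∀ n, R ∈ Gset A n (S n).1.2.2.2 (S (n + 1)).1.2.2.2 :=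
      fun n => stg_gset hwc (hst' n).2 (hR (n + 1))
    have hb := sig_rec hQ (fun n => (S n).1.2.2.2) (fun n => by
      obtain ⟨-, -, -, -, -, -, -, -, -, -, -, hacc, -⟩ := hst' n
      exact ⟨hacc, (hGs n).1⟩) (fun n y hy hq => (hGs n).2 y hy hq.1 hq.2)
    have g1 : Del J fun q : ℕ × ℕ => ∃ x < q.2, h (q.1 - 1, x) := by
      apply Del.of_primrec
      apply pp_bex <;> fun_prop
    have g2 := Del.graph (c := fun n => (S n).1.2.2.2) hb (p := fun n y => ∃ x < y, h (n - 1, x)) g1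
    refine (g2.comp (g := fun n : ℕ => n + 1) (by fun_prop)).of_eq fun n => ?_
    simp only [Nat.add_sub_cancel]
    obtain ⟨-, -, -, -, -, -, -, -, hz, -⟩ := hst' n
    constructor
    · rintro ⟨x, -, hx⟩
      exact (hh n).2 ⟨x, hx⟩
    · exact hz
end
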